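/- Let R be a noetherian regular ring of prime characteristic p and f1, f2 a regular sequence in R. Then for every ideal I ⊆ R and every integer j, the support Supp(H^j_I(R/(f1,f2))) of the j-th local cohomology of R/(f1,f2) is a Zariski-closed subset of Spec R (equivalently has finitely many minimal primes). -/

import Mathlib

open IsLocalRing

/-- A noetherian local ring is regular if its Krull dimension equals the dimension of its
cotangent space over the residue field. -/
def IsRegularLocalRingStmt (A : Type u) [CommRing A] [IsLocalRing A] : Prop :=
  ringKrullDim A = (Module.finrank (ResidueField A) (CotangentSpace A) : WithBot (WithTop ℕ))

/-- A commutative ring is regular if it is noetherian and all of its localizations at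
primes are regular local rings. -/
def IsRegularRingStmt (R : Type u) [CommRing R] : Prop :=
  IsNoetherianRing R ∧
    ∀ (P : Ideal R) [P.IsPrime], IsRegularLocalRingStmt (Localization.AtPrime P)

namespace FMod

section basics
variable {R : Type} [CommRing R] {p : ℕ} [Fact p.Prime] [CharP R p]
variable {M : Type} [AddCommGroup M] [Module R M]

theorem iter_add (φ : M →ₛₗ[frobenius R p] M) (e : ℕ) (x y : M) :
    φ^[e] (x + y) = φ^[e] x + φ^[e] y := by
  induction e with
  | zero => rfl
  | succ e ih => simp only [Function.iterate_succ_apply', ih, map_add]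

theorem iter_zero (φ : M →ₛₗ[frobenius R p] M) (e : ℕ) : φ^[e] 0 = 0 := by
  induction e with
  | zero => rfl
  | succ e ih => simp only [Function.iterate_succ_apply', ih, map_zero]

theorem iter_smul (φ : M →ₛₗ[frobenius R p] M) (e : ℕ) (r : R) (x : M) :
    φ^[e] (r • x) = r ^ p ^ e • φ^[e] x := by
  induction e with
  | zero => simp
  | succ e ih =>
    simp only [Function.iterate_succ_apply', ih, map_smulₛₗ, frobenius_def, ← pow_mul, pow_succ]

theorem iter_sum (φ : M →ₛₗ[frobenius R p] M) (e : ℕ) {ι : Type} (s : Finset ι) (x : ι → M) :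
    φ^[e] (∑ i ∈ s, x i) = ∑ i ∈ s, φ^[e] (x i) := by
  classical
  induction s using Finset.induction_on with
  | empty => simp
  | insert a s ha ih => rw [Finset.sum_insert ha, Finset.sum_insert ha, iter_add, ih]

/-- the relations among a finite family -/
def relS (R : Type) [CommRing R] {M : Type} [AddCommGroup M] [Module R M] {ι : Type} [Fintype ι] (x : ι → M) : Submodule R (ι → R) :=
  LinearMap.ker (Fintype.linearCombination R x)

theorem mem_relS {ι : Type} [Fintype ι] (x : ι → M) (r : ι → R) :
    r ∈ relS R x ↔ ∑ i, r i • x i = 0 := by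
  simp [relS, Fintype.linearCombination_apply]

/-- q-th power bracket of a submodule of a free module -/
def brk {ι : Type} (q : ℕ) (V : Set (ι → R)) : Submodule R (ι → R) :=
  Submodule.span R ((fun r i => r i ^ q) '' V)

theorem brk_mono {ι : Type} (q : ℕ) {V W : Set (ι → R)} (h : V ⊆ W) : brk q V ≤ brk q W :=
  Submodule.span_mono (Set.image_mono h)

theorem pow_mem_brk {ι : Type} (q : ℕ) {V : Set (ι → R)} {r : ι → R} (h : r ∈ V) :
    (fun i => r i ^ q) ∈ brk q V := Submodule.subset_span ⟨r, h, rfl⟩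

variable (p) in
theorem pow_mem_span {ι : Type} (e : ℕ) {S : Set (ι → R)} {r : ι → R}
    (h : r ∈ Submodule.span R S) : (fun i => r i ^ p ^ e) ∈ brk (p ^ e) S := by
  induction h using Submodule.span_induction with
  | mem x h => exact pow_mem_brk _ h
  | zero =>
    have : (fun i : ι => (0 : ι → R) i ^ p ^ e) = 0 := by
      funext i; simp [(Fact.out : p.Prime).ne_zero]
    rw [this]; exact zero_mem _
  | add x y _ _ hx hy =>
    have : (fun i : ι => (x + y) i ^ p ^ e) = (fun i => x i ^ p ^ e) + fun i => y i ^ p ^ e := by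
      funext i; simp [add_pow_char_pow]
    rw [this]; exact add_mem hx hy
  | smul a x _ hx =>
    have : (fun i : ι => (a • x) i ^ p ^ e) = a ^ p ^ e • (fun i => x i ^ p ^ e) := by
      funext i; simp [mul_pow]
    rw [this]; exact Submodule.smul_mem _ _ hx

variable (p) in
theorem brk_span {ι : Type} (e : ℕ) (S : Set (ι → R)) :
    brk (p ^ e) (Submodule.span R S : Set (ι → R)) = brk (p ^ e) S := by
  apply le_antisymm
  · refine Submodule.span_le.2 ?_
    rintro _ ⟨r, hr, rfl⟩
    exact pow_mem_span p e hr
  · exact brk_mono _ Submodule.subset_span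

theorem brk_brk {ι : Type} (e : ℕ) (S : Set (ι → R)) :
    brk p (brk (p ^ e) S : Set (ι → R)) ≤ brk (p ^ (e + 1)) S := by
  have h := brk_span p 1 ((fun r i => r i ^ p ^ e) '' S)
  rw [pow_one] at h
  unfold brk at h ⊢
  rw [h]
  refine Submodule.span_mono ?_
  rintro _ ⟨_, ⟨r, hr, rfl⟩, rfl⟩
  exact ⟨r, hr, by funext i; simp [pow_mul, pow_succ]⟩

/-- F-finite-type modules -/
structure FM (φ : M →ₛₗ[frobenius R p] M) : Prop where
  rel : ∀ {ι : Type} [Fintype ι] (a : ι → R) (x : ι → M),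
    ∑ i, a i • φ (x i) = 0 → a ∈ brk p (relS R x : Set (ι → R))
  root : ∃ N : Submodule R M, N.FG ∧ N ≤ Submodule.span R (φ '' N) ∧
    ∀ m, ∃ e : ℕ, m ∈ Submodule.span R (φ^[e] '' N)

theorem rel_iter (φ : M →ₛₗ[frobenius R p] M)
    (hrel : ∀ {ι : Type} [Fintype ι] (a : ι → R) (x : ι → M),
    ∑ i, a i • φ (x i) = 0 → a ∈ brk p (relS R x : Set (ι → R)))
    (e : ℕ) {ι : Type} [Fintype ι] (a : ι → R) (x : ι → M)
    (h : ∑ i, a i • φ^[e] (x i) = 0) : a ∈ brk (p ^ e) (relS R x : Set (ι → R)) := by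
  induction e generalizing a with
  | zero =>
    have : (fun i => a i ^ p ^ 0) ∈ brk (p ^ 0) (relS R x : Set (ι → R)) :=
      pow_mem_brk _ (by simpa [mem_relS] using h)
    simpa using this
  | succ e ih =>
    simp only [Function.iterate_succ_apply'] at h
    have h1 := hrel a _ h
    refine brk_brk e _ (brk_mono p ?_ h1)
    intro r hr
    exact ih r ((mem_relS _ _).1 hr)

theorem span_iter_mono (φ : M →ₛₗ[frobenius R p] M) {N : Submodule R M} {N' : Submodule R M}
    (e : ℕ) (h : N ≤ N') :
    Submodule.span R (φ^[e] '' N) ≤ Submodule.span R (φ^[e] '' N') :=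
  Submodule.span_mono (Set.image_mono h)

/-- `φ^e` maps span to span of images. -/
theorem iter_mem_span (φ : M →ₛₗ[frobenius R p] M) (e : ℕ) {S : Set M} {x : M}
    (h : x ∈ Submodule.span R S) : φ^[e] x ∈ Submodule.span R (φ^[e] '' S) := by
  induction h using Submodule.span_induction with
  | mem x h => exact Submodule.subset_span ⟨x, h, rfl⟩
  | zero => rw [iter_zero]; exact zero_mem _
  | add x y _ _ hx hy => rw [iter_add]; exact add_mem hx hy
  | smul a x _ hx => rw [iter_smul]; exact Submodule.smul_mem _ _ hx

theorem span_iter_span (φ : M →ₛₗ[frobenius R p] M) (e : ℕ) (S : Set M) :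
    Submodule.span R (φ^[e] '' (Submodule.span R S : Set M)) = Submodule.span R (φ^[e] '' S) := by
  apply le_antisymm
  · refine Submodule.span_le.2 ?_
    rintro _ ⟨r, hr, rfl⟩
    exact iter_mem_span φ e hr
  · exact Submodule.span_mono (Set.image_mono Submodule.subset_span)

theorem root_step (φ : M →ₛₗ[frobenius R p] M) {N : Submodule R M}
    (hN : N ≤ Submodule.span R (φ '' N)) (e : ℕ) :
    Submodule.span R (φ^[e] '' N) ≤ Submodule.span R (φ^[e + 1] '' N) := by
  refine (span_iter_mono φ e hN).trans ?_
  rw [span_iter_span, Set.image_image]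
  exact le_of_eq rfl

theorem root_le (φ : M →ₛₗ[frobenius R p] M) {N : Submodule R M}
    (hN : N ≤ Submodule.span R (φ '' N)) {e e' : ℕ} (h : e ≤ e') :
    Submodule.span R (φ^[e] '' N) ≤ Submodule.span R (φ^[e'] '' N) := by
  induction h with
  | refl => exact le_rfl
  | step _ ih => exact ih.trans (root_step φ hN _)

/-- an explicit form of the root -/
theorem FM.exists_gens {φ : M →ₛₗ[frobenius R p] M} (h : FM φ) :
    ∃ (n : ℕ) (x : Fin n → M),
      (∀ m, ∃ (e : ℕ), ∀ e', e ≤ e' → ∃ c : Fin n → R, m = ∑ i, c i • φ^[e'] (x i)) := by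
  obtain ⟨N, hfg, hN, hall⟩ := h.root
  obtain ⟨n, x, hx⟩ := Submodule.fg_iff_exists_fin_generating_family.1 hfg
  refine ⟨n, x, fun m => ?_⟩
  obtain ⟨e, he⟩ := hall m
  refine ⟨e, fun e' hee => ?_⟩
  have := root_le φ hN hee he
  rw [← hx, span_iter_span, ← Set.range_comp] at this
  obtain ⟨c, hc⟩ := (Submodule.mem_span_range_iff_exists_fun R).1 this
  exact ⟨c, hc.symm⟩

end basics

section constructions
variable {R : Type} [CommRing R] {p : ℕ} [Fact p.Prime] [CharP R p]
variable {M : Type} [AddCommGroup M] [Module R M]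
variable {M' : Type} [AddCommGroup M'] [Module R M']

/-- restriction to a kernel -/
def kerφ (φ : M →ₛₗ[frobenius R p] M) (φ' : M' →ₛₗ[frobenius R p] M') (d : M →ₗ[R] M')
    (h : ∀ x, d (φ x) = φ' (d x)) : LinearMap.ker d →ₛₗ[frobenius R p] LinearMap.ker d where
  toFun x := ⟨φ x.1, by rw [LinearMap.mem_ker, h, LinearMap.mem_ker.1 x.2, map_zero]⟩
  map_add' x y := by ext; simp
  map_smul' r x := by ext; simp

theorem kerφ_iter (φ : M →ₛₗ[frobenius R p] M) (φ' : M' →ₛₗ[frobenius R p] M') (d : M →ₗ[R] M')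
    (h : ∀ x, d (φ x) = φ' (d x)) (e : ℕ) (x : LinearMap.ker d) :
    (((kerφ φ φ' d h)^[e] x : LinearMap.ker d) : M) = φ^[e] x.1 := by
  induction e with
  | zero => rfl
  | succ e ih => simp only [Function.iterate_succ_apply', ← ih]; rfl

theorem iter_comm (φ : M →ₛₗ[frobenius R p] M) (φ' : M' →ₛₗ[frobenius R p] M') (d : M →ₗ[R] M')
    (h : ∀ x, d (φ x) = φ' (d x)) (e : ℕ) (x : M) : d (φ^[e] x) = φ'^[e] (d x) := by
  induction e with
  | zero => rfl
  | succ e ih => simp only [Function.iterate_succ_apply', h, ih]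

/-- key: an element of span φ^e(N) killed by d is in span φ^e(N ∩ ker d) -/
theorem span_iter_inf_ker (φ : M →ₛₗ[frobenius R p] M) {φ' : M' →ₛₗ[frobenius R p] M'}
    (hF' : FM φ') (d : M →ₗ[R] M') (h : ∀ x, d (φ x) = φ' (d x)) (e : ℕ) (N : Submodule R M)
    {m : M} (hm : m ∈ Submodule.span R (φ^[e] '' N)) (hd : d m = 0) :
    m ∈ Submodule.span R (φ^[e] '' (N ⊓ LinearMap.ker d : Submodule R M)) := by
  obtain ⟨n, c, g, rfl⟩ := Submodule.mem_span_set'.1 hm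
  choose x hxN hx using fun i => (g i).2
  simp only [← hx] at hd ⊢
  have h1 : ∑ i, c i • φ'^[e] (d (x i)) = 0 := by
    rw [← hd, map_sum]
    exact Finset.sum_congr rfl fun i _ => by rw [map_smul, iter_comm φ φ' d h]
  have h2 := rel_iter φ' hF'.rel e c _ h1
  clear h1 hd hm hx g
  refine Submodule.span_induction (p := fun c _ => ∑ i, c i • φ^[e] (x i) ∈
    Submodule.span R (φ^[e] '' (N ⊓ LinearMap.ker d : Submodule R M))) ?_ ?_ ?_ ?_ h2
  · rintro _ ⟨r, hr, rfl⟩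
    refine Submodule.subset_span ⟨∑ i, r i • x i, ⟨?_, ?_⟩, ?_⟩
    · exact Submodule.sum_mem _ fun i _ => Submodule.smul_mem _ _ (hxN i)
    · rw [SetLike.mem_coe, LinearMap.mem_ker, map_sum, ← (mem_relS _ r).1 hr]
      simp
    · rw [iter_sum]
      simp [iter_smul]
  · simp
  · intro a b _ _ ha hb
    simpa [add_smul, Finset.sum_add_distrib] using add_mem ha hb
  · intro t a _ ha
    simpa [mul_smul, Finset.smul_sum] using Submodule.smul_mem _ t ha

theorem FM.ker [IsNoetherianRing R] {φ : M →ₛₗ[frobenius R p] M}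
    {φ' : M' →ₛₗ[frobenius R p] M'} (hF : FM φ)
    (hF' : FM φ') (d : M →ₗ[R] M') (h : ∀ x, d (φ x) = φ' (d x)) : FM (kerφ φ φ' d h) where
  rel := by
    intro ι _ a x hx
    have h1 : ∑ i, a i • φ (x i).1 = 0 := by
      have := congrArg Subtype.val hx
      simpa [kerφ] using this
    refine brk_mono p ?_ (hF.rel a _ h1)
    intro r hr
    have hr := (mem_relS _ _).1 hr
    refine (mem_relS _ _).2 ?_
    ext
    simpa using hr
  root := by
    obtain ⟨N, hfg, hN, hall⟩ := hF.root
    have key : ∀ e (m : LinearMap.ker d), m.1 ∈ Submodule.span R (φ^[e] '' N) →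
        m ∈ Submodule.span R ((kerφ φ φ' d h)^[e] '' (N.comap (LinearMap.ker d).subtype)) := by
      intro e m hm
      have h1 := span_iter_inf_ker φ hF' d h e N hm m.2
      have h2 : Submodule.span R (φ^[e] '' (N ⊓ LinearMap.ker d : Submodule R M)) =
        (Submodule.span R ((kerφ φ φ' d h)^[e] ''
          (N.comap (LinearMap.ker d).subtype))).map (LinearMap.ker d).subtype := by
        rw [Submodule.map_span]
        congr 1
        ext y
        constructor
        · rintro ⟨x, ⟨hxN, hxd⟩, rfl⟩
          exact ⟨_, ⟨⟨x, hxd⟩, hxN, rfl⟩, kerφ_iter φ φ' d h e _⟩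
        · rintro ⟨_, ⟨x, hx, rfl⟩, rfl⟩
          exact ⟨x.1, ⟨hx, x.2⟩, (kerφ_iter φ φ' d h e _).symm⟩
      rw [h2] at h1
      obtain ⟨y, hy, hym⟩ := h1
      have : y = m := Subtype.ext hym
      exact this ▸ hy
    refine ⟨N.comap (LinearMap.ker d).subtype, ?_, ?_, ?_⟩
    · have : IsNoetherian R N := isNoetherian_of_fg_of_noetherian N hfg
      have : IsNoetherian R (N.comap (LinearMap.ker d).subtype) := by
        refine isNoetherian_of_injective
          (((LinearMap.ker d).subtype.domRestrict _).codRestrict N fun x => x.2) ?_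
        intro x y hxy
        have := congrArg Subtype.val hxy
        exact Subtype.ext (Subtype.ext this)
      exact (Submodule.fg_top _).1 (this.noetherian ⊤)
    · intro m hm
      have := key 1 m (by simpa using hN hm)
      simpa using this
    · intro m
      obtain ⟨e, he⟩ := hall m.1
      exact ⟨e, key e m he⟩

/-- the induced map on the quotient by a range -/
def cokφ (φ : M →ₛₗ[frobenius R p] M) (φ' : M' →ₛₗ[frobenius R p] M') (d : M →ₗ[R] M')
    (h : ∀ x, d (φ x) = φ' (d x)) :
    (M' ⧸ LinearMap.range d) →ₛₗ[frobenius R p] (M' ⧸ LinearMap.range d) :=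
  Submodule.mapQ _ _ φ' (by
    rintro _ ⟨x, rfl⟩
    exact ⟨φ x, h x⟩)

theorem cokφ_mk (φ : M →ₛₗ[frobenius R p] M) (φ' : M' →ₛₗ[frobenius R p] M') (d : M →ₗ[R] M')
    (h : ∀ x, d (φ x) = φ' (d x)) (y : M') :
    cokφ φ φ' d h (Submodule.Quotient.mk y) = Submodule.Quotient.mk (φ' y) := rfl

theorem cokφ_iter (φ : M →ₛₗ[frobenius R p] M) (φ' : M' →ₛₗ[frobenius R p] M') (d : M →ₗ[R] M')
    (h : ∀ x, d (φ x) = φ' (d x)) (e : ℕ) (y : M') :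
    (cokφ φ φ' d h)^[e] (Submodule.Quotient.mk y) = Submodule.Quotient.mk (φ'^[e] y) := by
  induction e with
  | zero => rfl
  | succ e ih => simp only [Function.iterate_succ_apply', ih, cokφ_mk]

theorem FM.coker {φ : M →ₛₗ[frobenius R p] M} {φ' : M' →ₛₗ[frobenius R p] M'} (hF : FM φ)
    (hF' : FM φ') (d : M →ₗ[R] M') (h : ∀ x, d (φ x) = φ' (d x)) : FM (cokφ φ φ' d h) where
  rel := by
    intro ι _ a x hx
    choose y hy using fun i => Submodule.Quotient.mk_surjective _ (x i)
    obtain rfl : x = fun i => Submodule.Quotient.mk (y i) := (funext hy).symm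
    have h1 : ∑ i, a i • φ' (y i) ∈ LinearMap.range d := by
      rw [← Submodule.Quotient.mk_eq_zero, ← hx]
      simp [cokφ_mk]
      rw [← Submodule.mkQ_apply, map_sum]; rfl
    obtain ⟨t, ht⟩ := h1
    obtain ⟨N, hfg, hN, hall⟩ := hF.root
    obtain ⟨n, t', ht'⟩ := hF.exists_gens
    obtain ⟨e, he⟩ := ht' t
    obtain ⟨c, hc⟩ := he (e + 1) (Nat.le_succ e)
    have h2 : ∑ s : ι ⊕ Fin n, (Sum.elim a (fun i => -c i)) s •
        φ' (Sum.elim y (fun i => d (φ^[e] (t' i))) s) = 0 := by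
      rw [Fintype.sum_sum_type]
      simp only [Sum.elim_inl, Sum.elim_inr, neg_smul, Finset.sum_neg_distrib]
      rw [← ht, hc, map_sum, add_neg_eq_zero]
      refine Finset.sum_congr rfl fun i _ => ?_
      rw [map_smul, ← h, Function.iterate_succ_apply']
    have h3 := hF'.rel _ _ h2
    have : ∀ v ∈ brk p (relS R (Sum.elim y (fun i => d (φ^[e] (t' i)))) : Set (ι ⊕ Fin n → R)),
      (fun i => v (Sum.inl i)) ∈ brk p (relS R (fun i => (Submodule.Quotient.mk (y i) :
        M' ⧸ LinearMap.range d)) : Set (ι → R)) := by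
      intro v hv
      induction hv using Submodule.span_induction with
      | mem x hx =>
        obtain ⟨r, hr, rfl⟩ := hx
        refine pow_mem_brk p ?_
        refine (mem_relS _ _).2 ?_
        have hr := (mem_relS _ _).1 hr
        rw [Fintype.sum_sum_type] at hr
        simp only [Sum.elim_inl, Sum.elim_inr] at hr
        have : (Submodule.Quotient.mk (∑ i, r (Sum.inl i) • y i) : M' ⧸ LinearMap.range d) = 0 := by
          rw [Submodule.Quotient.mk_eq_zero, eq_neg_of_add_eq_zero_left hr, Submodule.neg_mem_iff]
          exact Submodule.sum_mem _ fun i _ => Submodule.smul_mem _ _ ⟨_, rfl⟩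
        rw [← Submodule.mkQ_apply, map_sum] at this
        simpa using this
      | zero => exact zero_mem _
      | add x y _ _ hx hy => exact add_mem hx hy
      | smul a x _ hx => exact Submodule.smul_mem _ a hx
    exact this _ h3
  root := by
    obtain ⟨N, hfg, hN, hall⟩ := hF'.root
    have key : ∀ (e : ℕ) y, y ∈ Submodule.span R (φ'^[e] '' N) →
        (Submodule.Quotient.mk y : M' ⧸ LinearMap.range d) ∈
          Submodule.span R ((cokφ φ φ' d h)^[e] '' (N.map (LinearMap.range d).mkQ)) := by
      intro e y hy
      have := Submodule.mem_map_of_mem (f := (LinearMap.range d).mkQ) hy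
      rw [Submodule.map_span] at this
      refine Submodule.span_mono ?_ this
      rintro _ ⟨_, ⟨z, hz, rfl⟩, rfl⟩
      exact ⟨_, ⟨z, hz, rfl⟩, cokφ_iter φ φ' d h e z⟩
    refine ⟨N.map (LinearMap.range d).mkQ, hfg.map _, ?_, ?_⟩
    · rintro _ ⟨y, hy, rfl⟩
      have := key 1 y (by simpa using hN hy)
      simpa using this
    · intro m
      obtain ⟨y, rfl⟩ := Submodule.Quotient.mk_surjective _ m
      obtain ⟨e, he⟩ := hall y
      exact ⟨e, key e y he⟩

end constructions

end FMod

namespace FMod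

section opens
variable {R : Type} [CommRing R] {p : ℕ} [Fact p.Prime] [CharP R p]
variable {M : Type} [AddCommGroup M] [Module R M]

theorem isOpen_of_basic {S : Set (PrimeSpectrum R)}
    (h : ∀ P ∈ S, ∃ g, g ∉ P.asIdeal ∧ ∀ Q : PrimeSpectrum R, g ∉ Q.asIdeal → Q ∈ S) :
    IsOpen S := by
  rw [isOpen_iff_forall_mem_open]
  intro P hP
  obtain ⟨g, hg, hQ⟩ := h P hP
  exact ⟨PrimeSpectrum.basicOpen g, fun Q hQ' => hQ Q hQ',
    (PrimeSpectrum.basicOpen g).isOpen, hg⟩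

theorem prod_notMem (P : PrimeSpectrum R) {ι : Type} [Fintype ι] (s : ι → R)
    (h : ∀ i, s i ∉ P.asIdeal) : ∏ i, s i ∉ P.asIdeal := by
  have := P.isPrime
  intro hm
  obtain ⟨i, _, hi⟩ := (Ideal.IsPrime.prod_mem_iff).1 hm
  exact h i hi

theorem pow_notMem (P : PrimeSpectrum R) {s : R} (h : s ∉ P.asIdeal) (n : ℕ) :
    s ^ n ∉ P.asIdeal := fun hm => h (P.isPrime.mem_of_pow_mem n hm)

theorem mul_notMem (P : PrimeSpectrum R) {s t : R} (h : s ∉ P.asIdeal) (ht : t ∉ P.asIdeal) :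
    s * t ∉ P.asIdeal := fun hm => (P.isPrime.mem_or_mem hm).elim h ht

theorem iter_mem {φ : M →ₛₗ[frobenius R p] M} (B : Submodule R M) (hB : ∀ b ∈ B, φ b ∈ B)
    (e : ℕ) {b : M} (hb : b ∈ B) : φ^[e] b ∈ B := by
  induction e with
  | zero => exact hb
  | succ e ih => rw [Function.iterate_succ_apply']; exact hB _ ih

theorem FM.open1 {φ : M →ₛₗ[frobenius R p] M} (hF : FM φ) (B : Submodule R M)
    (hB : ∀ b ∈ B, φ b ∈ B) :
    IsOpen {P : PrimeSpectrum R | ∀ z : M, ∃ s, s ∉ P.asIdeal ∧ s • z ∈ B} := by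
  refine isOpen_of_basic fun P hP => ?_
  obtain ⟨n, x, hx⟩ := hF.exists_gens
  choose s hs hsx using fun i => hP (x i)
  have hg : ∀ i, (∏ i, s i) • x i ∈ B := by
    intro i
    rw [← Finset.prod_erase_mul _ _ (Finset.mem_univ i), mul_smul]
    exact B.smul_mem _ (hsx i)
  refine ⟨∏ i, s i, prod_notMem P s hs, fun Q hQ z => ?_⟩
  obtain ⟨e, he⟩ := hx z
  obtain ⟨c, hc⟩ := he e le_rfl
  refine ⟨(∏ i, s i) ^ p ^ e, pow_notMem Q hQ _, ?_⟩
  rw [hc, Finset.smul_sum]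
  refine Submodule.sum_mem _ fun i _ => ?_
  rw [smul_comm, ← iter_smul]
  exact B.smul_mem _ (iter_mem B hB e (hg i))

theorem FM.open2 [IsNoetherianRing R] {φ : M →ₛₗ[frobenius R p] M} (hF : FM φ) (f1 f2 : R)
    (htor : ∀ m : M, ∃ k : ℕ, f2 ^ k • m = 0) :
    IsOpen {P : PrimeSpectrum R | ∀ u v : M, f1 • u + f2 • v = 0 →
      ∃ s, s ∉ P.asIdeal ∧ ∃ t : M, s • u = f2 • t ∧ s • v = -(f1 • t)} := by
  refine isOpen_of_basic fun P hP => ?_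
  have ha : ∀ (k : ℕ) (m : M), (∃ t, f2 ^ k • m = f1 • t) →
      ∃ s, s ∉ P.asIdeal ∧ ∃ t : M, s • m = f1 • t := by
    intro k
    induction k with
    | zero =>
      rintro m ⟨t, ht⟩
      exact ⟨1, fun h => P.isPrime.ne_top ((Ideal.eq_top_iff_one _).2 h), t, by simpa using ht⟩
    | succ k ih =>
      rintro m ⟨t, ht⟩
      obtain ⟨s, hs, t', h1, h2⟩ := hP (-t) (f2 ^ k • m) (by
        rw [smul_neg, ← ht, smul_smul, ← pow_succ']; simp)
      obtain ⟨s', hs', t'', h3⟩ := ih (s • m) ⟨-t', by rw [smul_comm, h2, smul_neg]⟩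
      exact ⟨s' * s, mul_notMem P hs' hs, t'', by rw [mul_smul, h3]⟩
  obtain ⟨n, x, hx⟩ := hF.exists_gens
  have ha' : ∀ m : M, ∃ s, s ∉ P.asIdeal ∧ ∃ t : M, s • m = f1 • t := by
    intro m
    obtain ⟨k, hk⟩ := htor m
    exact ha k m ⟨0, by simpa using hk⟩
  choose s hs y0 hy0 using fun i => ha' (x i)
  obtain ⟨g, hgP, hg⟩ : ∃ g, g ∉ P.asIdeal ∧ ∀ i, ∃ y, g • x i = f1 • y := by
    refine ⟨∏ i, s i, prod_notMem P s hs, fun i => ?_⟩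
    refine ⟨(∏ j ∈ Finset.univ.erase i, s j) • y0 i, ?_⟩
    rw [← Finset.prod_erase_mul _ _ (Finset.mem_univ i), mul_smul, hy0, smul_comm]
  choose y hy using hg
  obtain ⟨K, ρ, hρ⟩ := Submodule.fg_iff_exists_fin_generating_family.1
    (IsNoetherian.noetherian (relS R x))
  have hρ0 : ∀ k, ∑ i, ρ k i • x i = 0 := fun k => by
    rw [← mem_relS, ← hρ]; exact Submodule.subset_span ⟨k, rfl⟩
  set X : Fin K → M := fun k => ∑ i, ρ k i • y i with hX
  have hX0 : ∀ k, f1 • X k = 0 := by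
    intro k
    rw [hX]
    simp only [Finset.smul_sum]
    have : ∀ i, f1 • ρ k i • y i = g • ρ k i • x i := fun i => by
      rw [smul_comm, ← hy, smul_comm]
    simp only [this]
    rw [← Finset.smul_sum, hρ0, smul_zero]
  have hXs : ∀ k, ∃ s, s ∉ P.asIdeal ∧ ∃ t : M, s • X k = f2 • t ∧ f1 • t = 0 := by
    intro k
    obtain ⟨s, hs, t, h1, h2⟩ := hP (X k) 0 (by simp [hX0])
    exact ⟨s, hs, t, h1, by simpa using h2.symm⟩
  choose s' hs' t0 ht0 ht0' using hXs
  obtain ⟨h, hhP, hh⟩ : ∃ h, h ∉ P.asIdeal ∧ ∀ k, ∃ t : M, h • X k = f2 • t ∧ f1 • t = 0 := by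
    refine ⟨∏ i, s' i, prod_notMem P s' hs', fun i => ?_⟩
    refine ⟨(∏ j ∈ Finset.univ.erase i, s' j) • t0 i, ?_, ?_⟩
    · rw [← Finset.prod_erase_mul _ _ (Finset.mem_univ i), mul_smul, ht0, smul_comm]
    · rw [smul_comm, ht0', smul_zero]
  choose t ht htf using hh
  refine ⟨g * h, mul_notMem P hgP hhP, fun Q hQ u v huv => ?_⟩
  have hgQ : g ∉ Q.asIdeal := fun hm => hQ (Ideal.mul_mem_right _ _ hm)
  have hpos : ∀ e : ℕ, ∃ m, p ^ e = m + 1 := fun e =>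
    ⟨p ^ e - 1, by have := pow_pos (Fact.out : p.Prime).pos e; omega⟩
  obtain ⟨e, he⟩ := hx v
  obtain ⟨c, hc⟩ := he e le_rfl
  obtain ⟨a, hae⟩ := hpos e
  set T0 : M := f1 ^ a • ∑ i, c i • φ^[e] (y i) with hT0
  have hgv : g ^ p ^ e • v = f1 • T0 := by
    rw [hc, hT0, smul_smul, ← pow_succ', ← hae, Finset.smul_sum, Finset.smul_sum]
    refine Finset.sum_congr rfl fun i _ => ?_
    rw [smul_comm, ← iter_smul, hy, iter_smul, smul_comm]
  set u' : M := g ^ p ^ e • u + f2 • T0 with hu'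
  have hfu' : f1 • u' = 0 := by
    rw [hu', smul_add, smul_comm f1 f2, ← hgv, smul_comm f1, smul_comm f2, ← smul_add, huv,
      smul_zero]
  obtain ⟨e', he'⟩ := hx u'
  obtain ⟨c', hc'⟩ := he' e' le_rfl
  obtain ⟨a', hae'⟩ := hpos e'
  have hrel : (fun i => f1 * c' i) ∈ brk (p ^ e') (relS R x : Set (Fin n → R)) := by
    refine rel_iter φ hF.rel e' _ _ ?_
    simp only [mul_smul]
    rw [← Finset.smul_sum, ← hc', hfu']
  rw [← hρ, brk_span, brk, ← Set.range_comp] at hrel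
  obtain ⟨b, hb⟩ := (Submodule.mem_span_range_iff_exists_fun R).1 hrel
  have hb' : ∀ i, f1 * c' i = ∑ k, b k * ρ k i ^ p ^ e' := by
    intro i
    have := congrFun hb i
    simpa [Finset.sum_apply] using this.symm
  have hgu' : g ^ p ^ e' • u' = f1 ^ a' • ∑ k, b k • φ^[e'] (X k) := by
    have h1 : g ^ p ^ e' • u' = f1 ^ a' • ∑ i, (f1 * c' i) • φ^[e'] (y i) := by
      rw [hc', Finset.smul_sum, Finset.smul_sum]
      refine Finset.sum_congr rfl fun i _ => ?_
      rw [smul_comm, ← iter_smul, hy, iter_smul, hae', smul_smul, smul_smul]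
      congr 1; ring
    rw [h1]
    congr 1
    simp only [hb', Finset.sum_smul]
    rw [Finset.sum_comm]
    refine Finset.sum_congr rfl fun k _ => ?_
    rw [hX]
    simp only [iter_sum, Finset.smul_sum, iter_smul, mul_smul]
  set W : M := ∑ k, b k • φ^[e'] (t k) with hW
  have hfW : f1 ^ p ^ e' • W = 0 := by
    rw [hW, Finset.smul_sum]
    refine Finset.sum_eq_zero fun k _ => ?_
    rw [smul_comm, ← iter_smul, htf, iter_zero, smul_zero]
  set T1 : M := (f1 ^ a' * f2 ^ a') • W with hT1
  have hfT1 : f1 • T1 = 0 := by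
    have : f1 • T1 = f2 ^ a' • f1 ^ p ^ e' • W := by
      rw [hT1, smul_smul, smul_smul, hae']; congr 1; ring
    rw [this, hfW, smul_zero]
  have hghu' : (g * h) ^ p ^ e' • u' = f2 • T1 := by
    have h1 : (g * h) ^ p ^ e' • u' = f1 ^ a' • ∑ k, b k • h ^ p ^ e' • φ^[e'] (X k) := by
      rw [mul_pow, mul_comm, mul_smul, hgu', smul_comm, Finset.smul_sum]
      congr 1
      exact Finset.sum_congr rfl fun k _ => by rw [smul_comm]
    rw [h1]
    have h2 : ∀ k, h ^ p ^ e' • φ^[e'] (X k) = f2 ^ p ^ e' • φ^[e'] (t k) := fun k => by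
      rw [← iter_smul, ht, iter_smul]
    simp only [h2]
    have h3 : ∑ k, b k • f2 ^ p ^ e' • φ^[e'] (t k) = f2 ^ p ^ e' • W := by
      rw [hW, Finset.smul_sum]
      exact Finset.sum_congr rfl fun k _ => by rw [smul_comm]
    rw [h3, hT1, smul_smul, smul_smul, hae']
    congr 1; ring
  refine ⟨(g * h) ^ p ^ e' * g ^ p ^ e, mul_notMem Q (pow_notMem Q hQ _) (pow_notMem Q hgQ _),
    T1 - (g * h) ^ p ^ e' • T0, ?_, ?_⟩
  · have : g ^ p ^ e • u = u' - f2 • T0 := by rw [hu']; abel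
    rw [mul_smul, this, smul_sub, hghu', smul_sub, smul_comm _ f2]
  · rw [mul_smul, hgv, smul_sub, hfT1, smul_comm]
    simp

/-- elements outside a prime are nonzerodivisors modulo its bracket power -/
theorem cancel_brk (hrel : ∀ {ι : Type} [Fintype ι] (a x : ι → R),
      ∑ i, a i • frobenius R p (x i) = 0 → a ∈ brk p (relS R x : Set (ι → R)))
    (P : Ideal R) [P.IsPrime] (e : ℕ) {a c : R} (ha : a ∉ P)
    (hac : a * c ∈ Ideal.span ((fun r => r ^ p ^ e) '' (P : Set R))) :
    c ∈ Ideal.span ((fun r => r ^ p ^ e) '' (P : Set R)) := by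
  obtain ⟨m, hm⟩ : ∃ m, p ^ e = m + 1 :=
    ⟨p ^ e - 1, by have := pow_pos (Fact.out : p.Prime).pos e; omega⟩
  have h1 : a ^ p ^ e * c ∈ Ideal.span ((fun r => r ^ p ^ e) '' (P : Set R)) := by
    have := Ideal.mul_mem_left _ (a ^ m) hac
    rwa [← mul_assoc, ← pow_succ, ← hm] at this
  obtain ⟨n, b, g, hbg⟩ := Submodule.mem_span_set'.1 h1
  choose x hxP hx using fun i => (g i).2
  let φ : R →ₛₗ[frobenius R p] R :=
    { toFun := frobenius R p, map_add' := map_add _, map_smul' := fun r x => by simp }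
  have hφ : ∀ r : R, φ^[e] r = r ^ p ^ e := fun r => by
    have := iter_smul φ e r 1
    have h1 : φ^[e] (1 : R) = 1 := by
      clear * -
      induction e with
      | zero => rfl
      | succ e ih => rw [Function.iterate_succ_apply', ih]; exact map_one (frobenius R p)
    simpa [h1] using this
  have h2 : ∑ s : Option (Fin n), (s.elim c (fun i => - b i)) • φ^[e] (s.elim a x) = 0 := by
    rw [Fintype.sum_option]
    simp only [Option.elim, hφ, smul_eq_mul]
    rw [mul_comm c, ← hbg]
    simp [← hx]
  have h3 := rel_iter φ (fun a x h => hrel a x h) e _ _ h2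
  have : ∀ v ∈ brk (p ^ e) (relS R (fun s : Option (Fin n) => s.elim a x) :
      Set (Option (Fin n) → R)), v none ∈ Ideal.span ((fun r => r ^ p ^ e) '' (P : Set R)) := by
    intro v hv
    induction hv using Submodule.span_induction with
    | mem v hv =>
      obtain ⟨r, hr, rfl⟩ := hv
      have hr := (mem_relS _ _).1 hr
      rw [Fintype.sum_option] at hr
      simp only [Option.elim] at hr
      refine Submodule.subset_span ⟨_, ?_, rfl⟩
      have : r none * a ∈ P := by
        have h4 := eq_neg_of_add_eq_zero_left hr
        rw [smul_eq_mul] at h4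
        rw [h4, Ideal.neg_mem_iff]
        exact Ideal.sum_mem _ fun i _ => Ideal.mul_mem_left _ _ (hxP i)
      exact (Ideal.IsPrime.mem_or_mem ‹_› this).resolve_right ha
    | zero => exact zero_mem _
    | add x y _ _ hx hy => exact add_mem hx hy
    | smul a x _ hx => exact Ideal.mul_mem_left _ a hx
  exact this _ h3

theorem mem_ass {N : Submodule R M} {Q : Ideal R} :
    (∃ y ∈ N, Q.IsPrime ∧ ∀ r, r ∈ Q ↔ r • y = 0) ↔
    (∃ y : M, y ∈ N ∧ Q.IsPrime ∧ ∀ r, r ∈ Q ↔ r • y = 0) := Iff.rfl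

theorem FM.finite_ass [IsNoetherianRing R]
    (hrel : ∀ {ι : Type} [Fintype ι] (a x : ι → R),
      ∑ i, a i • frobenius R p (x i) = 0 → a ∈ brk p (relS R x : Set (ι → R)))
    {φ : M →ₛₗ[frobenius R p] M} (hF : FM φ) :
    {Q : Ideal R | Q.IsPrime ∧ ∃ y : M, ∀ r, r ∈ Q ↔ r • y = 0}.Finite := by
  obtain ⟨N, hfg, hN, hall⟩ := hF.root
  have hNn : IsNoetherian R N := isNoetherian_of_fg_of_noetherian N hfg
  let good : Submodule R N → Prop := fun N' => {Q : Ideal R | Q.IsPrime ∧ ∃ e, ∃ y : M,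
    y ∈ Submodule.span R (φ^[e] '' (N'.map N.subtype)) ∧ ∀ r, r ∈ Q ↔ r • y = 0}.Finite
  have hbot : good ⊥ := by
    refine Set.Finite.subset Set.finite_empty ?_
    rintro Q ⟨hQ, e, y, hy, hr⟩
    have hy0 : y = 0 := by
      simpa [iter_zero] using hy
    exact hQ.ne_top ((Ideal.eq_top_iff_one _).2 ((hr 1).2 (by simp [hy0])))
  obtain ⟨N', hN'g, hmax⟩ := set_has_maximal_iff_noetherian.2 hNn {N' | good N'} ⟨⊥, hbot⟩
  have htop : N' = ⊤ := by
    by_contra hne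
    have : Nontrivial (N ⧸ N') := Submodule.Quotient.nontrivial_iff.2 hne
    obtain ⟨P, hP⟩ := associatedPrimes.nonempty R (N ⧸ N')
    obtain ⟨hPp, z, hz⟩ := isAssociatedPrime_iff.1 hP
    obtain ⟨x, rfl⟩ := Submodule.Quotient.mk_surjective _ z
    have hPx : ∀ r, r ∈ P ↔ r • x ∈ N' := by
      intro r
      rw [hz, Submodule.mem_colon_singleton, Submodule.mem_bot, ← Submodule.Quotient.mk_smul,
        Submodule.Quotient.mk_eq_zero]
    have hxN' : x ∉ N' := fun h => hPp.ne_top ((Ideal.eq_top_iff_one _).2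
      ((hPx 1).2 (by simpa using h)))
    refine hmax (N' ⊔ Submodule.span R {x}) ?_ ?_
    · refine (hN'g.union (Set.finite_singleton P)).subset ?_
      rintro Q ⟨hQ, e, y, hy, hr⟩
      set F := Submodule.span R (φ^[e] '' (N'.map N.subtype)) with hFdef
      by_cases hcase : ∃ r : R, r • y ∈ F ∧ r • y ≠ 0
      · left
        obtain ⟨r, h1, h2⟩ := hcase
        refine ⟨hQ, e, r • y, h1, fun a => ?_⟩
        rw [smul_smul, ← hr]
        refine ⟨fun h => Ideal.mul_mem_right _ _ h, fun h => (hQ.mem_or_mem h).resolve_right ?_⟩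
        rwa [hr]
      · right
        push Not at hcase
        have hyd : ∃ w ∈ F, ∃ c : R, y = w + c • φ^[e] (x : M) := by
          have : Submodule.span R (φ^[e] '' ((N' ⊔ Submodule.span R {x}).map N.subtype)) ≤
              F ⊔ Submodule.span R {φ^[e] (x : M)} := by
            refine Submodule.span_le.2 ?_
            rintro _ ⟨_, ⟨z, hz, rfl⟩, rfl⟩
            obtain ⟨z1, hz1, z2, hz2, rfl⟩ := Submodule.mem_sup.1 hz
            obtain ⟨c, rfl⟩ := Submodule.mem_span_singleton.1 hz2
            refine Submodule.mem_sup.2 ⟨φ^[e] (z1 : M), Submodule.subset_span ⟨_, ⟨z1, hz1, rfl⟩, rfl⟩,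
              c ^ p ^ e • φ^[e] (x : M), Submodule.smul_mem _ _ (Submodule.mem_span_singleton_self _), ?_⟩
            simp [iter_add, iter_smul]
          obtain ⟨w, hw, w', hw', rfl⟩ := Submodule.mem_sup.1 (this hy)
          obtain ⟨c, rfl⟩ := Submodule.mem_span_singleton.1 hw'
          exact ⟨w, hw, c, rfl⟩
        obtain ⟨w, hw, c, hyc⟩ := hyd
        have hyF : y ∉ F := fun h => hQ.ne_top ((Ideal.eq_top_iff_one _).2
          ((hr 1).2 (hcase 1 (by simpa using h))))
        have hback : ∀ b, b ∈ Ideal.span ((fun r => r ^ p ^ e) '' (P : Set R)) →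
            b • φ^[e] (x : M) ∈ F := by
          intro b hb
          induction hb using Submodule.span_induction with
          | mem b hb =>
            obtain ⟨r, hr, rfl⟩ := hb
            refine Submodule.subset_span ⟨r • (x : M), ⟨r • x, (hPx r).1 hr, rfl⟩, ?_⟩
            rw [iter_smul]
          | zero => simp
          | add a b _ _ ha hb => rw [add_smul]; exact add_mem ha hb
          | smul a b _ hb => rw [smul_eq_mul, mul_smul]; exact Submodule.smul_mem _ _ hb
        have hfwd : ∀ b, b • φ^[e] (x : M) ∈ F →
            b ∈ Ideal.span ((fun r => r ^ p ^ e) '' (P : Set R)) := by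
          intro b hb
          obtain ⟨n, c, g, hcg⟩ := Submodule.mem_span_set'.1 hb
          choose z hzN hz using fun i => (g i).2
          have h2 : ∑ s : Option (Fin n), (s.elim b (fun i => - c i)) •
              φ^[e] (s.elim (x : M) z) = 0 := by
            rw [Fintype.sum_option]
            simp only [Option.elim]
            rw [← hcg]
            simp [← hz]
          have h3 := rel_iter φ hF.rel e _ _ h2
          have : ∀ v ∈ brk (p ^ e) (relS R (fun s : Option (Fin n) => s.elim (x : M) z) :
              Set (Option (Fin n) → R)),
              v none ∈ Ideal.span ((fun r => r ^ p ^ e) '' (P : Set R)) := by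
            intro v hv
            induction hv using Submodule.span_induction with
            | mem v hv =>
              obtain ⟨r, hr, rfl⟩ := hv
              have hr := (mem_relS _ _).1 hr
              rw [Fintype.sum_option] at hr
              simp only [Option.elim] at hr
              refine Submodule.subset_span ⟨_, ?_, rfl⟩
              have h5 : r none • (x : M) ∈ N'.map N.subtype := by
                rw [eq_neg_of_add_eq_zero_left hr, Submodule.neg_mem_iff]
                exact Submodule.sum_mem _ fun i _ => Submodule.smul_mem _ _ (hzN i)
              obtain ⟨x', hx', hxx⟩ := h5
              have : x' = r none • x := Subtype.ext hxx
              exact (hPx _).2 (this ▸ hx')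
            | zero => exact zero_mem _
            | add x y _ _ hx hy => exact add_mem hx hy
            | smul a x _ hx => exact Ideal.mul_mem_left _ a hx
          exact this _ h3
        rw [Set.mem_singleton_iff]
        apply le_antisymm
        · intro a haQ
          by_contra haP
          apply hyF
          rw [hyc]
          refine add_mem hw (hback c ?_)
          refine cancel_brk (p := p) hrel P e haP (hfwd _ ?_)
          have h0 := (hr a).1 haQ
          rw [hyc, smul_add, smul_smul] at h0
          rw [eq_neg_of_add_eq_zero_right h0, Submodule.neg_mem_iff]
          exact Submodule.smul_mem _ _ hw
        · intro a haP
          refine hQ.mem_of_pow_mem (p ^ e) ((hr _).2 (hcase _ ?_))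
          rw [hyc, smul_add]
          refine add_mem (Submodule.smul_mem _ _ hw) ?_
          rw [smul_comm]
          exact Submodule.smul_mem _ _ (hback _ (Submodule.subset_span ⟨a, haP, rfl⟩))
    · refine lt_of_le_of_ne le_sup_left fun h => hxN' ?_
      rw [h]
      exact Submodule.mem_sup_right (Submodule.mem_span_singleton_self x)
  have hg : good ⊤ := htop ▸ hN'g
  refine hg.subset ?_
  rintro Q ⟨hQ, y, hy⟩
  obtain ⟨e, he⟩ := hall y
  refine ⟨hQ, e, y, ?_, hy⟩
  simpa using he

theorem FM.open3 [IsNoetherianRing R]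
    (hrel : ∀ {ι : Type} [Fintype ι] (a x : ι → R),
      ∑ i, a i • frobenius R p (x i) = 0 → a ∈ brk p (relS R x : Set (ι → R)))
    {φ : M →ₛₗ[frobenius R p] M} (hF : FM φ) (V : Submodule R M) :
    IsOpen {P : PrimeSpectrum R | ∀ w ∈ V, ∃ s, s ∉ P.asIdeal ∧ s • w = 0} := by
  have hfin := hF.finite_ass hrel
  rw [← isClosed_compl_iff]
  have : {P : PrimeSpectrum R | ∀ w ∈ V, ∃ s, s ∉ P.asIdeal ∧ s • w = 0}ᶜ =
      ⋃ Q ∈ {Q : Ideal R | Q.IsPrime ∧ ∃ y : M, y ∈ V ∧ ∀ r, r ∈ Q ↔ r • y = 0},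
        PrimeSpectrum.zeroLocus (Q : Set R) := by
    ext P
    simp only [Set.mem_compl_iff, Set.mem_ofPred_eq, not_forall, Set.mem_iUnion, exists_prop,
      not_exists, not_and]
    constructor
    · rintro ⟨w, hw, hs⟩
      have hP : (⊥ : Submodule R M).colon {w} ≤ P.asIdeal := by
        intro r hr
        by_contra hrP
        exact hs r hrP (by simpa [Submodule.mem_colon_singleton] using hr)
      obtain ⟨Q, hQ, hQP⟩ := Ideal.exists_minimalPrimes_le hP
      have hann : (Submodule.span R {w}).annihilator = (⊥ : Submodule R M).colon {w} := by
        ext r; simp [Submodule.mem_colon_singleton]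
      have hQ' : Q ∈ associatedPrimes R (Submodule.span R {w}) := by
        apply Module.associatedPrimes.minimalPrimes_annihilator_subset_associatedPrimes
        have : Module.annihilator R (Submodule.span R {w}) = (⊥ : Submodule R M).colon {w} := hann
        rw [this]; exact hQ
      obtain ⟨hQp, z, hz⟩ := isAssociatedPrime_iff.1 hQ'
      refine ⟨Q, ⟨hQp, z.1, ?_, fun r => ?_⟩, hQP⟩
      · exact (Submodule.span_le.2 (by simpa using hw)) z.2
      · rw [hz, Submodule.mem_colon_singleton, Submodule.mem_bot]
        constructor
        · intro h; exact congrArg Subtype.val h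
        · intro h; exact Subtype.ext h
    · rintro ⟨Q, ⟨hQp, y, hy, hr⟩, hQP⟩
      exact ⟨y, hy, fun s hs h0 => hs (hQP ((hr s).2 h0))⟩
  rw [this]
  refine Set.Finite.isClosed_biUnion ?_ fun Q _ => PrimeSpectrum.isClosed_zeroLocus _
  exact hfin.subset fun Q hQ => ⟨hQ.1, hQ.2.choose, hQ.2.choose_spec.2⟩

end opens
end FMod

namespace FMod

section assembly
variable {R : Type} [CommRing R] {p : ℕ} [Fact p.Prime] [CharP R p]
variable {G0 G1 G2 G3 : Type} [AddCommGroup G0] [Module R G0] [AddCommGroup G1] [Module R G1]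
  [AddCommGroup G2] [Module R G2] [AddCommGroup G3] [Module R G3]

/-- the submodule of obstruction classes -/
def obs (f1 f2 : R) (d1 : G1 →ₗ[R] G2) (d2 : G2 →ₗ[R] G3) : Submodule R G3 where
  carrier := {w | ∃ z u v, d1 z = f1 • u + f2 • v ∧ d2 u = f2 • w ∧ d2 v = -(f1 • w)}
  zero_mem' := ⟨0, 0, 0, by simp, by simp, by simp⟩
  add_mem' := by
    rintro w w' ⟨z, u, v, h1, h2, h3⟩ ⟨z', u', v', h1', h2', h3'⟩
    refine ⟨z + z', u + u', v + v', ?_, ?_, ?_⟩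
    · rw [map_add, h1, h1', smul_add, smul_add]; abel
    · rw [map_add, h2, h2', smul_add]
    · rw [map_add, h3, h3', smul_add]; abel
  smul_mem' := by
    rintro r w ⟨z, u, v, h1, h2, h3⟩
    refine ⟨r • z, r • u, r • v, ?_, ?_, ?_⟩
    · rw [map_smul, h1, smul_add, smul_comm r, smul_comm r]
    · rw [map_smul, h2, smul_comm]
    · rw [map_smul, h3, smul_neg, smul_comm]

/-- the submodule d0 G0 + J G1 -/
def bdy (f1 f2 : R) (d0 : G0 →ₗ[R] G1) : Submodule R G1 where
  carrier := {w | ∃ y u v, w = d0 y + f1 • u + f2 • v}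
  zero_mem' := ⟨0, 0, 0, by simp⟩
  add_mem' := by
    rintro w w' ⟨z, u, v, rfl⟩ ⟨z', u', v', rfl⟩
    refine ⟨z + z', u + u', v + v', ?_⟩
    rw [map_add, smul_add, smul_add]; abel
  smul_mem' := by
    rintro r w ⟨z, u, v, rfl⟩
    refine ⟨r • z, r • u, r • v, ?_⟩
    rw [map_smul, smul_add, smul_add, smul_comm r, smul_comm r]

theorem FM.main [IsNoetherianRing R]
    (hrel : ∀ {ι : Type} [Fintype ι] (a x : ι → R),
      ∑ i, a i • frobenius R p (x i) = 0 → a ∈ brk p (relS R x : Set (ι → R)))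
    {φ0 : G0 →ₛₗ[frobenius R p] G0} {φ1 : G1 →ₛₗ[frobenius R p] G1}
    {φ2 : G2 →ₛₗ[frobenius R p] G2} {φ3 : G3 →ₛₗ[frobenius R p] G3}
    (hF1 : FM φ1) (hF2 : FM φ2) (hF3 : FM φ3)
    (d0 : G0 →ₗ[R] G1) (d1 : G1 →ₗ[R] G2) (d2 : G2 →ₗ[R] G3)
    (hc0 : ∀ x, d0 (φ0 x) = φ1 (d0 x)) (hc1 : ∀ x, d1 (φ1 x) = φ2 (d1 x))
    (hc2 : ∀ x, d2 (φ2 x) = φ3 (d2 x))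
    (h10 : ∀ x, d1 (d0 x) = 0) (h21 : ∀ x, d2 (d1 x) = 0) (f1 f2 : R)
    (hinj : ∀ x : G3, f1 • x = 0 → x = 0)
    (hex2 : ∀ a b : G2, f1 • a + f2 • b = 0 → ∃ c, b = f1 • c ∧ a = -(f2 • c))
    (hex3 : ∀ a b : G3, f1 • a + f2 • b = 0 → ∃ c, b = f1 • c ∧ a = -(f2 • c))
    (htor : ∀ z : G2, d2 z = 0 → ∃ k : ℕ, ∃ t, f2 ^ k • z = d1 t) :
    IsOpen {P : PrimeSpectrum R | ∀ z : G1, (∃ u v, d1 z = f1 • u + f2 • v) →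
      ∃ s, s ∉ P.asIdeal ∧ ∃ y u v, s • z = d0 y + f1 • u + f2 • v} := by
  let d1' : G1 →ₗ[R] LinearMap.ker d2 := d1.codRestrict _ h21
  have hc1' : ∀ x, d1' (φ1 x) = kerφ φ2 φ3 d2 hc2 (d1' x) := fun x => Subtype.ext (hc1 x)
  have hFH : FM (cokφ φ1 (kerφ φ2 φ3 d2 hc2) d1' hc1') :=
    FM.coker hF1 (hF2.ker hF3 d2 hc2) d1' hc1'
  have hFC : FM (cokφ φ2 φ3 d2 hc2) := FM.coker hF2 hF3 d2 hc2
  have hFZ : FM (kerφ φ1 φ2 d1 hc1) := hF1.ker hF2 d1 hc1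
  have hO1 := hFZ.open1 ((bdy f1 f2 d0).comap (LinearMap.ker d1).subtype) (by
    rintro ⟨b, hb0⟩ ⟨y, u, v, hb⟩
    obtain ⟨m, hm⟩ : ∃ m, p = m + 1 := ⟨p - 1, by have := (Fact.out : p.Prime).pos; omega⟩
    refine ⟨φ0 y, f1 ^ m • φ1 u, f2 ^ m • φ1 v, ?_⟩
    change φ1 b = _
    change b = _ at hb
    rw [hb, map_add, map_add, map_smulₛₗ, map_smulₛₗ, hc0, smul_smul, smul_smul,
      ← pow_succ', ← pow_succ', ← hm]
    rfl)
  have hO2 := hFH.open2 f1 f2 (by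
    intro m
    obtain ⟨z, rfl⟩ := Submodule.Quotient.mk_surjective _ m
    obtain ⟨k, t, ht⟩ := htor z.1 z.2
    refine ⟨k, ?_⟩
    rw [← Submodule.Quotient.mk_smul, Submodule.Quotient.mk_eq_zero]
    exact ⟨t, Subtype.ext ht.symm⟩)
  have hO3 := hFC.open3 hrel ((obs f1 f2 d1 d2).map (LinearMap.range d2).mkQ)
  convert hO1.inter (hO2.inter hO3) using 1
  ext P
  simp only [Set.mem_ofPred_eq, Set.mem_inter_iff]
  constructor
  · intro hP
    have aux : ∀ z u v, d1 z = f1 • u + f2 • v → ∃ s, s ∉ P.asIdeal ∧ ∃ u' v' t,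
        s • u = f2 • t + d1 u' ∧ s • v = -(f1 • t) + d1 v' := by
      intro z u v h
      obtain ⟨s, hs, y, u', v', hz⟩ := hP z ⟨u, v, h⟩
      have h1 : f1 • (s • u - d1 u') + f2 • (s • v - d1 v') = 0 := by
        have h2 := congrArg d1 hz
        rw [map_smul, map_add, map_add, h10, zero_add, map_smul, map_smul, h] at h2
        rw [smul_sub, smul_sub, smul_comm f1 s, smul_comm f2 s]
        rw [smul_add] at h2
        rw [sub_add_sub_comm, h2, sub_self]
      obtain ⟨c, hc1, hc2⟩ := hex2 _ _ h1
      refine ⟨s, hs, u', v', -c, ?_, ?_⟩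
      · rw [sub_eq_iff_eq_add] at hc2
        rw [hc2, smul_neg]
      · rw [sub_eq_iff_eq_add] at hc1
        rw [hc1, smul_neg, neg_neg]
    refine ⟨?_, ?_, ?_⟩
    · intro z
      obtain ⟨s, hs, h⟩ := hP z.1 ⟨0, 0, by simp [LinearMap.mem_ker.1 z.2]⟩
      exact ⟨s, hs, h⟩
    · intro u v huv
      obtain ⟨u, rfl⟩ := Submodule.Quotient.mk_surjective _ u
      obtain ⟨v, rfl⟩ := Submodule.Quotient.mk_surjective _ v
      rw [← Submodule.Quotient.mk_smul, ← Submodule.Quotient.mk_smul, ← Submodule.Quotient.mk_add,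
        Submodule.Quotient.mk_eq_zero] at huv
      obtain ⟨z, hz⟩ := huv
      have hz' : d1 z = f1 • u.1 + f2 • v.1 := congrArg Subtype.val hz
      obtain ⟨s, hs, u', v', t, hu, hv⟩ := aux _ _ _ hz'
      have ht : d2 t = 0 := by
        apply hinj
        have := congrArg d2 hv
        rw [map_smul, LinearMap.mem_ker.1 v.2, smul_zero, map_add, h21, add_zero, map_neg,
          map_smul] at this
        exact neg_eq_zero.1 this.symm
      refine ⟨s, hs, Submodule.Quotient.mk ⟨t, ht⟩, ?_, ?_⟩
      · rw [← Submodule.Quotient.mk_smul, ← Submodule.Quotient.mk_smul, Submodule.Quotient.eq]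
        refine ⟨u', Subtype.ext ?_⟩
        change d1 u' = s • u.1 - f2 • t
        rw [hu]; abel
      · rw [← Submodule.Quotient.mk_smul, ← Submodule.Quotient.mk_smul, ← Submodule.Quotient.mk_neg,
          Submodule.Quotient.eq]
        refine ⟨v', Subtype.ext ?_⟩
        change d1 v' = s • v.1 - -(f1 • t)
        rw [hv]; abel
    · rintro _ ⟨w, ⟨z, u, v, hz, hu, hv⟩, rfl⟩
      obtain ⟨s, hs, u', v', t, hu', hv'⟩ := aux _ _ _ hz
      refine ⟨s, hs, ?_⟩
      rw [← map_smul, Submodule.mkQ_apply, Submodule.Quotient.mk_eq_zero]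
      refine ⟨t, ?_⟩
      have := congrArg d2 hv'
      rw [map_smul, hv, map_add, h21, add_zero, map_neg, map_smul, smul_neg, neg_inj,
        smul_comm] at this
      rw [← sub_eq_zero]
      apply hinj
      rw [smul_sub, ← this, sub_self]
  · rintro ⟨hP1, hP2, hP3⟩ z ⟨u, v, hz⟩
    have h0 : f1 • d2 u + f2 • d2 v = 0 := by
      rw [← map_smul, ← map_smul, ← map_add, ← hz, h21]
    obtain ⟨c, hcv, hcu⟩ := hex3 _ _ h0
    obtain ⟨s, hs, hsw⟩ := hP3 _ ⟨-c, ⟨z, u, v, hz, by rw [hcu, smul_neg],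
      by rw [hcv, smul_neg, neg_neg]⟩, rfl⟩
    rw [← map_smul, Submodule.mkQ_apply, Submodule.Quotient.mk_eq_zero] at hsw
    obtain ⟨w', hw'⟩ := hsw
    let U : LinearMap.ker d2 := ⟨s • u - f2 • w', by
      rw [LinearMap.mem_ker, map_sub, map_smul, map_smul, hw', hcu, smul_comm f2 s]
      simp⟩
    let V : LinearMap.ker d2 := ⟨s • v + f1 • w', by
      rw [LinearMap.mem_ker, map_add, map_smul, map_smul, hw', hcv, smul_comm f1 s]
      simp⟩
    have hUV : f1 • (s • u - f2 • w') + f2 • (s • v + f1 • w') = d1 (s • z) := by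
      rw [map_smul, hz, smul_sub, smul_add, smul_add, smul_comm f1 f2, smul_comm f1 s,
        smul_comm f2 s]
      abel
    obtain ⟨s', hs', t, h1, h2⟩ := hP2 (Submodule.Quotient.mk U) (Submodule.Quotient.mk V) (by
      rw [← Submodule.Quotient.mk_smul, ← Submodule.Quotient.mk_smul, ← Submodule.Quotient.mk_add,
        Submodule.Quotient.mk_eq_zero]
      exact ⟨s • z, Subtype.ext hUV.symm⟩)
    obtain ⟨t, rfl⟩ := Submodule.Quotient.mk_surjective _ t
    rw [← Submodule.Quotient.mk_smul, ← Submodule.Quotient.mk_smul, Submodule.Quotient.eq] at h1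
    rw [← Submodule.Quotient.mk_smul, ← Submodule.Quotient.mk_smul, ← Submodule.Quotient.mk_neg,
          Submodule.Quotient.eq] at h2
    obtain ⟨u', hu'⟩ := h1
    obtain ⟨v', hv'⟩ := h2
    have hu'' : d1 u' = s' • (s • u - f2 • w') - f2 • t.1 := congrArg Subtype.val hu'
    have hv'' : d1 v' = s' • (s • v + f1 • w') - -(f1 • t.1) := congrArg Subtype.val hv'
    let Z : LinearMap.ker d1 := ⟨s' • s • z - f1 • u' - f2 • v', by
      rw [LinearMap.mem_ker, map_sub, map_sub, map_smul, ← hUV, map_smul, map_smul, hu'', hv'']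
      simp only [smul_sub, smul_add, smul_neg, smul_comm s' f1, smul_comm s' f2, smul_comm f1 f2]
      abel⟩
    obtain ⟨s'', hs'', y, u3, v3, hZ⟩ := hP1 Z
    have hZ' : s'' • (s' • s • z - f1 • u' - f2 • v') = d0 y + f1 • u3 + f2 • v3 := hZ
    refine ⟨s'' * (s' * s), mul_notMem P hs'' (mul_notMem P hs' hs), y, u3 + s'' • u',
      v3 + s'' • v', ?_⟩
    have : (s'' * (s' * s)) • z = s'' • (s' • s • z - f1 • u' - f2 • v') + s'' • f1 • u' +
        s'' • f2 • v' := by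
      simp only [smul_sub, mul_smul]; abel
    rw [this, hZ', smul_add, smul_add, smul_comm s'' f1, smul_comm s'' f2]
    abel

end assembly
end FMod

set_option linter.unusedSectionVars false
namespace FMod

section rows
variable {R : Type} [CommRing R] {p : ℕ} [Fact p.Prime] [CharP R p]

theorem rel_rows (hrel : ∀ {ι : Type} [Fintype ι] (a x : ι → R),
      ∑ i, a i • frobenius R p (x i) = 0 → a ∈ brk p (relS R x : Set (ι → R)))
    {ι κ : Type} [Fintype ι] [Fintype κ] (a : ι → R) (x : ι → κ → R)
    (h : ∀ k, ∑ i, a i * x i k ^ p = 0) : a ∈ brk p (relS R x : Set (ι → R)) := by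
  classical
  have main : ∀ s : Finset κ, a ∈ brk p {r : ι → R | ∀ k ∈ s, ∑ i, r i * x i k = 0} := by
    intro s
    induction s using Finset.induction_on with
    | empty =>
      have h1 : a = ∑ i, a i • (fun j => (Pi.single i (1 : R) : ι → R) j ^ p) := by
        funext j
        have hp : p ≠ 0 := (Fact.out : p.Prime).ne_zero
        simp [Finset.sum_apply, Pi.single_apply, hp]
      rw [h1]
      exact Submodule.sum_mem _ fun i _ => Submodule.smul_mem _ _ (pow_mem_brk _ (by simp))
    | insert k s hk ih =>
      obtain ⟨n, b, g, hbg⟩ := Submodule.mem_span_set'.1 ih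
      choose r hr hrg using fun m => (g m).2
      simp only [← hrg] at hbg
      have ha : ∀ i, a i = ∑ m, b m * r m i ^ p := fun i => by
        rw [← hbg]; simp [Finset.sum_apply]
      have h1 : ∑ m, b m • frobenius R p (∑ i, r m i * x i k) = 0 := by
        rw [← h k]
        simp only [map_sum, ha, Finset.sum_mul, smul_eq_mul, Finset.mul_sum, frobenius_def]
        rw [Finset.sum_comm]
        refine Finset.sum_congr rfl fun i _ => Finset.sum_congr rfl fun m _ => ?_
        ring
      have h2 := hrel b _ h1
      have h3 : ∀ b ∈ brk p (relS R (fun m => ∑ i, r m i * x i k) : Set (Fin n → R)),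
          ∑ m, b m • (fun i => r m i ^ p) ∈
            brk p {r : ι → R | ∀ k' ∈ insert k s, ∑ i, r i * x i k' = 0} := by
        intro b hb
        induction hb using Submodule.span_induction with
        | mem b hb =>
          obtain ⟨ρ, hρ, rfl⟩ := hb
          have hρ := (mem_relS _ _).1 hρ
          have : ∑ m, (ρ m ^ p) • (fun i => r m i ^ p) = fun i => (∑ m, ρ m * r m i) ^ p := by
            funext i
            rw [← frobenius_def, map_sum]
            simp [Finset.sum_apply, mul_pow, frobenius_def]
          rw [this]
          refine pow_mem_brk p ?_
          intro k' hk'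
          have : ∑ i, (∑ m, ρ m * r m i) * x i k' = ∑ m, ρ m * ∑ i, r m i * x i k' := by
            simp only [Finset.sum_mul, Finset.mul_sum]
            rw [Finset.sum_comm]
            refine Finset.sum_congr rfl fun i _ => Finset.sum_congr rfl fun m _ => ?_
            ring
          rw [this]
          rcases Finset.mem_insert.1 hk' with rfl | hk'
          · simpa using hρ
          · exact Finset.sum_eq_zero fun m _ => by rw [hr m k' hk', mul_zero]
        | zero => simp
        | add x y _ _ hx hy => simpa [add_smul, Finset.sum_add_distrib] using add_mem hx hy
        | smul a x _ hx =>
          simpa [mul_smul, Finset.smul_sum] using Submodule.smul_mem _ a hx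
      rw [← hbg]
      exact h3 b h2
  refine brk_mono p ?_ (main Finset.univ)
  intro r hr
  refine (mem_relS _ _).2 ?_
  funext k
  simpa [Finset.sum_apply] using hr k (Finset.mem_univ k)

end rows

section limit
variable {R : Type} [CommRing R] (p : ℕ) [Fact p.Prime] [CharP R p]
variable {ι : Type} [Fintype ι] [DecidableEq ι] (T : Matrix ι ι R)
variable {κ : Type} [Fintype κ] [DecidableEq κ] (S : Matrix κ κ R)

/-- entrywise `p^e`-th power of a matrix -/
def fr {ι κ : Type} (e : ℕ) (A : Matrix ι κ R) : Matrix ι κ R := A.map (iterateFrobenius R p e)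

theorem fr_mul {α : Type} (e : ℕ) (A : Matrix κ ι R) (B : Matrix ι α R) :
    fr p e (A * B) = fr p e A * fr p e B := by
  simp [fr, Matrix.map_mul]

/-- transition matrices from level e to level e + k -/
def U (e : ℕ) : ℕ → Matrix ι ι R
  | 0 => 1
  | k + 1 => fr p (e + k) T * U e k

theorem U_add (e k l : ℕ) : U p T e (k + l) = U p T (e + k) l * U p T e k := by
  induction l with
  | zero => simp [U]
  | succ l ih =>
    rw [← add_assoc, U, ih, U, Matrix.mul_assoc, ← add_assoc]

/-- vector powers -/
def vp (x : ι → R) : ι → R := fun i => x i ^ p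

theorem fr_vp (e : ℕ) (A : Matrix κ ι R) (x : ι → R) :
    (fr p (e + 1) A).mulVec (vp p x) = vp p ((fr p e A).mulVec x) := by
  funext i
  simp only [vp, Matrix.mulVec, dotProduct, fr, Matrix.map_apply]
  rw [← frobenius_def, map_sum]
  simp [frobenius_def, iterateFrobenius_def, mul_pow, ← pow_mul, pow_succ]

theorem U_vp (e k : ℕ) (x : ι → R) :
    (U p T (e + 1) k).mulVec (vp p x) = vp p ((U p T e k).mulVec x) := by
  induction k with
  | zero => simp [U]
  | succ k ih =>
    rw [U, U, ← Matrix.mulVec_mulVec, ih, ← Matrix.mulVec_mulVec, ← fr_vp]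
    congr 2
    omega

theorem U_comm (D : Matrix κ ι R) (h : fr p 1 D * T = S * D) (e k : ℕ) :
    fr p (e + k) D * U p T e k = U p S e k * fr p e D := by
  have hh : ∀ e, fr p (e + 1) D * fr p e T = fr p e S * fr p e D := by
    intro e
    rw [← fr_mul, ← h, fr_mul]
    congr 1
    ext i j
    simp [fr, iterateFrobenius_def, frobenius_def, ← pow_mul, ← pow_succ']
  induction k with
  | zero => simp [U]
  | succ k ih =>
    rw [U, U, Matrix.mul_assoc, ← ih, ← Matrix.mul_assoc, ← Matrix.mul_assoc, ← hh]
    rfl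

/-- transition maps -/
def trans (i j : ℕ) (_ : i ≤ j) : (ι → R) →ₗ[R] (ι → R) := (U p T i (j - i)).mulVecLin

instance : DirectedSystem (fun _ : ℕ => ι → R) (trans p T · · ·) where
  map_self i x := by simp [trans, U]
  map_map k j i hij hjk x := by
    obtain ⟨a, rfl⟩ := Nat.exists_eq_add_of_le hij
    obtain ⟨b, rfl⟩ := Nat.exists_eq_add_of_le hjk
    have h1 : i + a + b - i = a + b := by omega
    simp [trans, h1, U_add]

/-- the direct limit -/
abbrev G : Type := Module.DirectLimit (fun _ : ℕ => ι → R) (trans p T)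

/-- structure map -/
noncomputable abbrev of (e : ℕ) : (ι → R) →ₗ[R] G p T := Module.DirectLimit.of R ℕ _ (trans p T) e

theorem of_U (e k : ℕ) (x : ι → R) : of p T (e + k) ((U p T e k).mulVec x) = of p T e x := by
  have := Module.DirectLimit.of_f (R := R) (f := trans p T) (i := e) (j := e + k)
    (hij := Nat.le_add_right _ _) (x := x)
  rw [← this]
  simp [trans]

theorem of_eq_zero {e : ℕ} {x : ι → R} (h : of p T e x = 0) :
    ∃ k0, ∀ k, k0 ≤ k → (U p T e k).mulVec x = 0 := by
  obtain ⟨j, hj, hx⟩ := Module.DirectLimit.of.zero_exact h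
  refine ⟨j - e, fun k hk => ?_⟩
  obtain ⟨b, rfl⟩ := Nat.exists_eq_add_of_le hk
  rw [U_add, ← Matrix.mulVec_mulVec]
  have : (U p T e (j - e)).mulVec x = 0 := hx
  rw [this, Matrix.mulVec_zero]

theorem of_eq_of {e : ℕ} {x y : ι → R} (h : of p T e x = of p T e y) :
    ∃ k0, ∀ k, k0 ≤ k → (U p T e k).mulVec x = (U p T e k).mulVec y := by
  obtain ⟨k0, hk⟩ := of_eq_zero p T (e := e) (x := x - y) (by rw [map_sub, h, sub_self])
  refine ⟨k0, fun k hkk => ?_⟩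
  have := hk k hkk
  rwa [Matrix.mulVec_sub, sub_eq_zero] at this

theorem exists_rep (z : G p T) : ∃ e0, ∀ e, e0 ≤ e → ∃ x, of p T e x = z := by
  obtain ⟨e0, x, hx⟩ := Module.DirectLimit.exists_of z
  refine ⟨e0, fun e he => ?_⟩
  obtain ⟨k, rfl⟩ := Nat.exists_eq_add_of_le he
  exact ⟨(U p T e0 k).mulVec x, by rw [of_U]; exact hx⟩

theorem phi_wd {e e' : ℕ} {x x' : ι → R} (h : of p T e x = of p T e' x') :
    of p T (e + 1) (vp p x) = of p T (e' + 1) (vp p x') := by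
  wlog hle : e ≤ e' generalizing e e' x x'
  · exact (this h.symm (by omega)).symm
  obtain ⟨k, rfl⟩ := Nat.exists_eq_add_of_le hle
  rw [← of_U p T e k] at h
  obtain ⟨k0, hk⟩ := of_eq_of p T h
  have := hk k0 le_rfl
  rw [← of_U p T (e + 1) k, U_vp, ← of_U p T (e + k + 1) k0 (vp p x'), U_vp, ← this, ← U_vp,
    ← of_U p T (e + 1 + k) k0]
  have he : e + 1 + k = e + k + 1 := by omega
  rw [he, U_vp, U_vp]

/-- Frobenius on the limit, as a function -/
noncomputable def phiFun (z : G p T) : G p T :=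
  of p T ((Module.DirectLimit.exists_of z).choose + 1)
    (vp p (Module.DirectLimit.exists_of z).choose_spec.choose)

theorem phiFun_of (e : ℕ) (x : ι → R) : phiFun p T (of p T e x) = of p T (e + 1) (vp p x) :=
  phi_wd p T (Module.DirectLimit.exists_of (of p T e x)).choose_spec.choose_spec

/-- Frobenius on the limit -/
noncomputable def phi : G p T →ₛₗ[frobenius R p] G p T where
  toFun := phiFun p T
  map_add' z w := by
    obtain ⟨e1, h1⟩ := exists_rep p T z
    obtain ⟨e2, h2⟩ := exists_rep p T w
    obtain ⟨x, rfl⟩ := h1 (max e1 e2) (le_max_left _ _)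
    obtain ⟨y, rfl⟩ := h2 (max e1 e2) (le_max_right _ _)
    rw [← map_add, phiFun_of, phiFun_of, phiFun_of, ← map_add]
    congr 1
    funext i
    simp [vp, add_pow_char]
  map_smul' r z := by
    obtain ⟨e1, h1⟩ := exists_rep p T z
    obtain ⟨x, rfl⟩ := h1 e1 le_rfl
    rw [← map_smul, phiFun_of, phiFun_of, ← map_smul]
    congr 1
    funext i
    simp [vp, mul_pow, frobenius_def]

theorem phi_of (e : ℕ) (x : ι → R) : phi p T (of p T e x) = of p T (e + 1) (vp p x) :=
  phiFun_of p T e x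

theorem phi_iter_of (e k : ℕ) (x : ι → R) :
    (phi p T)^[k] (of p T e x) = of p T (e + k) ((vp p)^[k] x) := by
  induction k with
  | zero => rfl
  | succ k ih => rw [Function.iterate_succ_apply', ih, phi_of, Function.iterate_succ_apply']; rfl

theorem vp_single (k : ℕ) (i : ι) :
    (vp p)^[k] (Pi.single i (1 : R)) = Pi.single i (1 : R) := by
  induction k with
  | zero => rfl
  | succ k ih =>
    rw [Function.iterate_succ_apply', ih]
    funext j
    have hp : p ≠ 0 := (Fact.out : p.Prime).ne_zero
    by_cases h : j = i
    · subst h; simp [vp]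
    · simp [vp, h, hp]

theorem FM_phi (hrel : ∀ {ι : Type} [Fintype ι] (a x : ι → R),
      ∑ i, a i • frobenius R p (x i) = 0 → a ∈ brk p (relS R x : Set (ι → R))) :
    FM (phi p T) where
  rel := by
    intro α _ a x hx
    choose e0 he0 using fun i => exists_rep p T (x i)
    choose y hy using fun i => he0 i (Finset.univ.sup e0) (Finset.le_sup (Finset.mem_univ i))
    set e := Finset.univ.sup e0
    have h1 : of p T (e + 1) (∑ i, a i • vp p (y i)) = 0 := by
      rw [map_sum, ← hx]
      refine Finset.sum_congr rfl fun i _ => ?_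
      rw [map_smul, ← phi_of, hy]
    obtain ⟨k0, hk⟩ := of_eq_zero p T h1
    have h2 := hk k0 le_rfl
    have h3 : ∀ k, ∑ i, a i * ((U p T e k0).mulVec (y i)) k ^ p = 0 := by
      intro k
      have := congrFun h2 k
      rw [← Matrix.mulVecLin_apply, map_sum] at this
      simp only [map_smul, Matrix.mulVecLin_apply, U_vp] at this
      simpa [Finset.sum_apply, vp] using this
    refine brk_mono p ?_ (rel_rows hrel a _ h3)
    intro r hr
    have hr := (mem_relS _ _).1 hr
    refine (mem_relS _ _).2 ?_
    have : ∑ i, r i • x i = of p T (e + k0) (∑ i, r i • (U p T e k0).mulVec (y i)) := by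
      rw [map_sum]
      refine Finset.sum_congr rfl fun i _ => ?_
      rw [map_smul, of_U, hy]
    rw [this, hr, map_zero]
  root := by
    have hsp : ∀ e (x : ι → R), of p T e x ∈ Submodule.span R ((phi p T)^[e] ''
        (Submodule.span R (Set.range fun i : ι => of p T 0 (Pi.single i 1)))) := by
      intro e x
      have : x = ∑ i, x i • (Pi.single i (1 : R) : ι → R) := by
        funext j; simp [Finset.sum_apply, Pi.single_apply]
      rw [this, map_sum]
      refine Submodule.sum_mem _ fun i _ => ?_
      rw [map_smul]
      refine Submodule.smul_mem _ _ (Submodule.subset_span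
        ⟨of p T 0 (Pi.single i 1), Submodule.subset_span ⟨i, rfl⟩, ?_⟩)
      rw [phi_iter_of, vp_single, zero_add]
    refine ⟨Submodule.span R (Set.range fun i : ι => of p T 0 (Pi.single i 1)),
      Submodule.fg_span (Set.finite_range _), ?_, ?_⟩
    · refine Submodule.span_le.2 ?_
      rintro _ ⟨i, rfl⟩
      have := hsp 1 ((U p T 0 1).mulVec (Pi.single i 1))
      have h0 := of_U p T 0 1 (Pi.single i (1 : R))
      rw [zero_add] at h0
      rw [h0] at this
      simpa using this
    · intro m
      obtain ⟨e, he⟩ := exists_rep p T m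
      obtain ⟨x, rfl⟩ := he e le_rfl
      exact ⟨e, hsp e x⟩

/-- induced map on limits -/
noncomputable def mapG (D : Matrix κ ι R) (h : fr p 1 D * T = S * D) : G p T →ₗ[R] G p S :=
  Module.DirectLimit.lift R ℕ _ _ (fun e => (of p S e).comp (fr p e D).mulVecLin) (by
    intro i j hij x
    obtain ⟨k, rfl⟩ := Nat.exists_eq_add_of_le hij
    have := U_comm p T S D h i k
    simp only [LinearMap.comp_apply, trans, Matrix.mulVecLin_apply, Nat.add_sub_cancel_left,
      Matrix.mulVec_mulVec, this]
    rw [← Matrix.mulVec_mulVec, of_U])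

theorem mapG_of (D : Matrix κ ι R) (h : fr p 1 D * T = S * D) (e : ℕ) (x : ι → R) :
    mapG p T S D h (of p T e x) = of p S e ((fr p e D).mulVec x) := by
  simp [mapG, Module.DirectLimit.lift_of]

theorem mapG_phi (D : Matrix κ ι R) (h : fr p 1 D * T = S * D) (z : G p T) :
    mapG p T S D h (phi p T z) = phi p S (mapG p T S D h z) := by
  obtain ⟨e, he⟩ := exists_rep p T z
  obtain ⟨x, rfl⟩ := he e le_rfl
  rw [phi_of, mapG_of, mapG_of, phi_of, fr_vp]

theorem G_inj (f1 : R) (hf1 : ∀ x : R, f1 * x = 0 → x = 0) (z : G p T) (hz : f1 • z = 0) :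
    z = 0 := by
  obtain ⟨e, he⟩ := exists_rep p T z
  obtain ⟨x, rfl⟩ := he e le_rfl
  rw [← map_smul] at hz
  obtain ⟨k, hk⟩ := of_eq_zero p T hz
  have := hk k le_rfl
  rw [Matrix.mulVec_smul] at this
  have h2 : (U p T e k).mulVec x = 0 := by
    funext i
    exact hf1 _ (congrFun this i)
  rw [← of_U p T e k, h2, map_zero]

theorem G_ex (f1 f2 : R) (hf : ∀ a b : R, f1 * a + f2 * b = 0 → ∃ c, b = f1 * c ∧ a = -(f2 * c))
    (a b : G p T) (hz : f1 • a + f2 • b = 0) : ∃ c, b = f1 • c ∧ a = -(f2 • c) := by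
  obtain ⟨e1, h1⟩ := exists_rep p T a
  obtain ⟨e2, h2⟩ := exists_rep p T b
  obtain ⟨x, rfl⟩ := h1 (max e1 e2) (le_max_left _ _)
  obtain ⟨y, rfl⟩ := h2 (max e1 e2) (le_max_right _ _)
  rw [← map_smul, ← map_smul, ← map_add] at hz
  obtain ⟨k, hk⟩ := of_eq_zero p T hz
  have := hk k le_rfl
  rw [Matrix.mulVec_add, Matrix.mulVec_smul, Matrix.mulVec_smul] at this
  choose c hc1 hc2 using fun i => hf _ _ (congrFun this i)
  refine ⟨of p T (max e1 e2 + k) c, ?_, ?_⟩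
  · rw [← map_smul, ← of_U p T _ k]
    congr 1
    funext i; exact hc1 i
  · rw [← map_smul, ← map_neg, ← of_U p T _ k]
    congr 1
    funext i; exact hc2 i

end limit

section cx
variable {R : Type} [CommRing R] {p : ℕ} [Fact p.Prime] [CharP R p]
variable {κ0 κ1 κ2 κ3 : Type} [Fintype κ0] [DecidableEq κ0] [Fintype κ1] [DecidableEq κ1]
  [Fintype κ2] [DecidableEq κ2] [Fintype κ3] [DecidableEq κ3]

theorem matrix_open [IsNoetherianRing R] (hrel : ∀ {ι : Type} [Fintype ι] (a x : ι → R),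
      ∑ i, a i • frobenius R p (x i) = 0 → a ∈ brk p (relS R x : Set (ι → R)))
    (f1 f2 : R) (hf1 : ∀ x : R, f1 * x = 0 → x = 0)
    (hf : ∀ a b : R, f1 * a + f2 * b = 0 → ∃ c, b = f1 * c ∧ a = -(f2 * c))
    (T0 : Matrix κ0 κ0 R) (T1 : Matrix κ1 κ1 R) (T2 : Matrix κ2 κ2 R) (T3 : Matrix κ3 κ3 R)
    (D0 : Matrix κ1 κ0 R) (D1 : Matrix κ2 κ1 R) (D2 : Matrix κ3 κ2 R)
    (h0 : fr p 1 D0 * T0 = T1 * D0) (h1 : fr p 1 D1 * T1 = T2 * D1)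
    (h2 : fr p 1 D2 * T2 = T3 * D2) (h10 : D1 * D0 = 0) (h21 : D2 * D1 = 0)
    (htor : ∀ (e : ℕ) (z : κ2 → R), (fr p e D2).mulVec z = 0 → ∃ k : ℕ, ∃ t,
      f2 ^ k • z = (fr p e D1).mulVec t) :
    IsOpen {P : PrimeSpectrum R | ∀ (e : ℕ) (z : κ1 → R),
      (∃ u v, (fr p e D1).mulVec z = f1 • u + f2 • v) →
      ∃ s, s ∉ P.asIdeal ∧ ∃ k y u v,
        s • (U p T1 e k).mulVec z = (fr p (e + k) D0).mulVec y + f1 • u + f2 • v} := by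
  have hz : ∀ {α β γ : Type} [Fintype α] [Fintype β] [DecidableEq α] [DecidableEq β]
    [Fintype γ] [DecidableEq γ] (A : Matrix α β R) (B : Matrix β γ R), A * B = 0 →
      ∀ (e : ℕ) x, (fr p e A).mulVec ((fr p e B).mulVec x) = 0 := by
    intro α β γ _ _ _ _ _ _ A B hAB e x
    rw [Matrix.mulVec_mulVec, ← fr_mul, hAB]
    have : fr p e (0 : Matrix α γ R) = 0 := by ext i j; simp [fr]
    rw [this, Matrix.zero_mulVec]
  have key := FM.main hrel (FM_phi p T1 hrel) (FM_phi p T2 hrel) (FM_phi p T3 hrel)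
    (mapG p T0 T1 D0 h0) (mapG p T1 T2 D1 h1) (mapG p T2 T3 D2 h2)
    (mapG_phi p T0 T1 D0 h0) (mapG_phi p T1 T2 D1 h1) (mapG_phi p T2 T3 D2 h2)
    (by
      intro x
      obtain ⟨e, he⟩ := exists_rep p _ x
      obtain ⟨x, rfl⟩ := he e le_rfl
      rw [mapG_of, mapG_of, hz _ _ h10, map_zero])
    (by
      intro x
      obtain ⟨e, he⟩ := exists_rep p _ x
      obtain ⟨x, rfl⟩ := he e le_rfl
      rw [mapG_of, mapG_of, hz _ _ h21, map_zero]) f1 f2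
    (G_inj p T3 f1 hf1) (G_ex p T2 f1 f2 hf) (G_ex p T3 f1 f2 hf)
    (by
      intro z hz0
      obtain ⟨e, he⟩ := exists_rep p _ z
      obtain ⟨x, rfl⟩ := he e le_rfl
      rw [mapG_of] at hz0
      obtain ⟨k, hk⟩ := of_eq_zero p _ hz0
      have := hk k le_rfl
      rw [Matrix.mulVec_mulVec, ← U_comm p T2 T3 D2 h2, ← Matrix.mulVec_mulVec] at this
      obtain ⟨k', t, ht⟩ := htor _ _ this
      refine ⟨k', of p T1 (e + k) t, ?_⟩
      rw [mapG_of, ← ht, map_smul, of_U])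
  convert key using 1
  ext P
  simp only [Set.mem_ofPred_eq]
  constructor
  · rintro hP z ⟨u, v, huv⟩
    obtain ⟨e1, he1⟩ := exists_rep p _ z
    obtain ⟨e2, he2⟩ := exists_rep p _ u
    obtain ⟨e3, he3⟩ := exists_rep p _ v
    obtain ⟨z, rfl⟩ := he1 (max e1 (max e2 e3)) (by simp)
    obtain ⟨u, rfl⟩ := he2 (max e1 (max e2 e3)) (by simp)
    obtain ⟨v, rfl⟩ := he3 (max e1 (max e2 e3)) (by simp)
    set e := max e1 (max e2 e3)
    rw [mapG_of, ← map_smul, ← map_smul, ← map_add] at huv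
    obtain ⟨k, hk⟩ := of_eq_of p _ huv
    have := hk k le_rfl
    rw [Matrix.mulVec_mulVec, ← U_comm p T1 T2 D1 h1, ← Matrix.mulVec_mulVec,
      Matrix.mulVec_add, Matrix.mulVec_smul, Matrix.mulVec_smul] at this
    obtain ⟨s, hs, l, y, u', v', hh⟩ := hP (e + k) _ ⟨_, _, this⟩
    refine ⟨s, hs, of p T0 (e + k + l) y, of p T1 (e + k + l) u', of p T1 (e + k + l) v', ?_⟩
    rw [mapG_of, ← map_smul (of p T1 (e + k + l)), ← map_smul (of p T1 (e + k + l)), ← map_add,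
      ← map_add, ← hh, map_smul, of_U, of_U]
  · rintro hP e z ⟨u, v, huv⟩
    obtain ⟨s, hs, y, u', v', hh⟩ := hP (of p T1 e z) ⟨of p T2 e u, of p T2 e v, by
      rw [mapG_of, huv, map_add, map_smul, map_smul]⟩
    obtain ⟨e1, he1⟩ := exists_rep p _ y
    obtain ⟨e2, he2⟩ := exists_rep p _ u'
    obtain ⟨e3, he3⟩ := exists_rep p _ v'
    obtain ⟨y, rfl⟩ := he1 (e + (max e1 (max e2 e3))) (by
      have := le_max_left e1 (max e2 e3); omega)
    obtain ⟨u', rfl⟩ := he2 (e + (max e1 (max e2 e3))) (by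
      have := le_max_left e2 e3; have := le_max_right e1 (max e2 e3); omega)
    obtain ⟨v', rfl⟩ := he3 (e + (max e1 (max e2 e3))) (by
      have := le_max_right e2 e3; have := le_max_right e1 (max e2 e3); omega)
    set k := max e1 (max e2 e3)
    rw [mapG_of, ← of_U p T1 e k z, ← map_smul, ← map_smul, ← map_smul, ← map_add, ← map_add] at hh
    obtain ⟨l, hl⟩ := of_eq_of p _ hh
    have := hl l le_rfl
    rw [Matrix.mulVec_add, Matrix.mulVec_add, Matrix.mulVec_smul, Matrix.mulVec_smul,
      Matrix.mulVec_smul, Matrix.mulVec_mulVec, ← U_add, Matrix.mulVec_mulVec,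
      ← U_comm p T0 T1 D0 h0, ← Matrix.mulVec_mulVec, add_assoc] at this
    exact ⟨s, hs, k + l, _, _, _, by rw [this, ← add_assoc, ← add_assoc]⟩

end cx
end FMod

set_option linter.unusedSectionVars false
namespace FMod

section cone
variable {R : Type} [CommRing R] {p : ℕ} [Fact p.Prime] [CharP R p]

/-- differential of the cone -/
def coneD {a b c : Type} [DecidableEq b] (f : R) (D' : Matrix c b R) (D : Matrix b a R) :
    Matrix (c ⊕ b) (b ⊕ a) R :=
  Matrix.fromBlocks D' 0 (f • 1) (-D)

/-- Frobenius structure matrix of the cone -/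
def coneT {a b : Type} (g : R) (S : Matrix b b R) (T : Matrix a a R) : Matrix (b ⊕ a) (b ⊕ a) R :=
  Matrix.fromBlocks S 0 0 (g • T)

theorem fr_coneD {a b c : Type} [DecidableEq b] (f : R) (D' : Matrix c b R) (D : Matrix b a R)
    (e : ℕ) : fr p e (coneD f D' D) = coneD (f ^ p ^ e) (fr p e D') (fr p e D) := by
  unfold fr coneD
  rw [Matrix.fromBlocks_map]
  congr 1
  · ext i j; simp
  · ext i j
    simp only [Matrix.map_apply, Matrix.smul_apply, smul_eq_mul, map_mul, Matrix.one_apply]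
    have hp : p ≠ 0 := (Fact.out : p.Prime).ne_zero
    split_ifs <;> simp [iterateFrobenius_def, hp]
  · ext i j; simp

variable {a b c d : Type} [Fintype a] [DecidableEq a] [Fintype b] [DecidableEq b]
  [Fintype c] [DecidableEq c] [Fintype d] [DecidableEq d]

theorem coneD_mul (f : R) (A : Matrix d c R) (B : Matrix c b R) (C : Matrix b a R)
    (hAB : A * B = 0) (hBC : B * C = 0) : coneD f A B * coneD f B C = 0 := by
  simp [coneD, Matrix.fromBlocks_multiply, hAB, hBC]

theorem coneT_comm (f : R) (D' : Matrix c b R) (D : Matrix b a R) (T : Matrix a a R)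
    (S : Matrix b b R) (V : Matrix c c R) (h : fr p 1 D * T = S * D) (h' : fr p 1 D' * S = V * D') :
    fr p 1 (coneD f D' D) * coneT (f ^ (p - 1)) S T =
      coneT (f ^ (p - 1)) V S * coneD f D' D := by
  have hp : f ^ p = f ^ (p - 1) * f := by
    rw [← pow_succ, Nat.sub_add_cancel (Fact.out : p.Prime).one_le]
  rw [fr_coneD]
  simp [coneD, coneT, Matrix.fromBlocks_multiply, h, h', smul_smul, hp, mul_comm]

theorem U_coneT (f : R) (S : Matrix b b R) (T : Matrix a a R) (e k : ℕ) :
    ∃ x : R, U p (coneT (f ^ (p - 1)) S T) e k =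
      Matrix.fromBlocks (U p S e k) 0 0 (x • U p T e k) ∧ (1 ≤ k → f ∣ x) := by
  induction k with
  | zero => exact ⟨1, by simp [U], by simp⟩
  | succ k ih =>
    obtain ⟨x, hx, -⟩ := ih
    refine ⟨(f ^ (p - 1)) ^ p ^ (e + k) * x, ?_, fun _ => ?_⟩
    · rw [U, hx, U, U]
      have : fr p (e + k) (coneT (f ^ (p - 1)) S T) =
          Matrix.fromBlocks (fr p (e + k) S) 0 0 ((f ^ (p - 1)) ^ p ^ (e + k) • fr p (e + k) T) := by
        unfold fr coneT
        rw [Matrix.fromBlocks_map]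
        congr 1
        · ext i j; simp
        · ext i j; simp
        · ext i j; simp [iterateFrobenius_def, mul_pow]
      rw [this]
      simp [Matrix.fromBlocks_multiply, smul_smul, mul_comm]
    · refine Dvd.dvd.mul_right ?_ _
      rw [← pow_mul]
      refine dvd_pow_self f ?_
      have := (Fact.out : p.Prime).two_le
      exact Nat.mul_ne_zero (by omega) (pow_ne_zero _ (by omega))

variable {K0 K1 K2 K3 K4 : Type} [Fintype K0] [DecidableEq K0] [Fintype K1] [DecidableEq K1]
  [Fintype K2] [DecidableEq K2] [Fintype K3] [DecidableEq K3] [Fintype K4] [DecidableEq K4]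

theorem matrix_open' [IsNoetherianRing R] (hrel : ∀ {ι : Type} [Fintype ι] (a x : ι → R),
      ∑ i, a i • frobenius R p (x i) = 0 → a ∈ brk p (relS R x : Set (ι → R)))
    (f1 f2 : R) (hf1 : ∀ x : R, f1 * x = 0 → x = 0)
    (hf : ∀ a b : R, f1 * a + f2 * b = 0 → ∃ c, b = f1 * c ∧ a = -(f2 * c))
    (T0 : Matrix K0 K0 R) (T1 : Matrix K1 K1 R) (T2 : Matrix K2 K2 R) (T3 : Matrix K3 K3 R)
    (T4 : Matrix K4 K4 R)
    (D0 : Matrix K1 K0 R) (D1 : Matrix K2 K1 R) (D2 : Matrix K3 K2 R) (D3 : Matrix K4 K3 R)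
    (h0 : fr p 1 D0 * T0 = T1 * D0) (h1 : fr p 1 D1 * T1 = T2 * D1)
    (h2 : fr p 1 D2 * T2 = T3 * D2) (h3 : fr p 1 D3 * T3 = T4 * D3)
    (h10 : D1 * D0 = 0) (h21 : D2 * D1 = 0) (h32 : D3 * D2 = 0) :
    IsOpen {P : PrimeSpectrum R | ∀ (e : ℕ) (z : K2 → R),
      (∃ u v, (fr p e D2).mulVec z = f1 • u + f2 • v) →
      ∃ s, s ∉ P.asIdeal ∧ ∃ k y u v,
        s • (U p T2 e k).mulVec z = (fr p (e + k) D1).mulVec y + f1 • u + f2 • v} := by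
  have key := matrix_open hrel f1 f2 hf1 hf
    (coneT (f2 ^ (p - 1)) T1 T0) (coneT (f2 ^ (p - 1)) T2 T1) (coneT (f2 ^ (p - 1)) T3 T2)
    (coneT (f2 ^ (p - 1)) T4 T3) (coneD f2 D1 D0) (coneD f2 D2 D1) (coneD f2 D3 D2)
    (coneT_comm f2 D1 D0 T0 T1 T2 h0 h1) (coneT_comm f2 D2 D1 T1 T2 T3 h1 h2)
    (coneT_comm f2 D3 D2 T2 T3 T4 h2 h3) (coneD_mul f2 D2 D1 D0 h21 h10)
    (coneD_mul f2 D3 D2 D1 h32 h21) (by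
      intro e z hz
      rw [fr_coneD, coneD, Matrix.fromBlocks_mulVec] at hz
      have hz2 : f2 ^ p ^ e • (z ∘ Sum.inl) = (fr p e D2).mulVec (z ∘ Sum.inr) := by
        funext i
        have := congrFun hz (Sum.inr i)
        simp only [Sum.elim_inr, Matrix.smul_mulVec, Matrix.one_mulVec, Matrix.neg_mulVec,
          Pi.add_apply, Pi.neg_apply, Pi.zero_apply] at this
        exact add_neg_eq_zero.1 this
      refine ⟨p ^ e, Sum.elim (z ∘ Sum.inr) 0, ?_⟩
      rw [fr_coneD, coneD, Matrix.fromBlocks_mulVec]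
      simp only [Sum.elim_comp_inl, Sum.elim_comp_inr, Matrix.mulVec_zero, add_zero,
        Matrix.smul_mulVec, Matrix.one_mulVec, ← hz2]
      funext i
      rcases i with i | i <;> simp)
  have hq : ∀ e : ℕ, ∃ m, p ^ e = m + 1 := fun e =>
    ⟨p ^ e - 1, by have := pow_pos (Fact.out : p.Prime).pos e; omega⟩
  convert key using 1
  ext P
  simp only [Set.mem_ofPred_eq]
  constructor
  · rintro hP e z ⟨u, v, huv⟩
    rw [fr_coneD, coneD, Matrix.fromBlocks_mulVec] at huv
    have hz : (fr p e D2).mulVec (z ∘ Sum.inl) = f1 • (u ∘ Sum.inl) + f2 • (v ∘ Sum.inl) := by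
      funext i
      simpa using congrFun huv (Sum.inl i)
    obtain ⟨s, hs, k, y, u', v', h⟩ := hP e _ ⟨_, _, hz⟩
    obtain ⟨x, hx, hdvd⟩ := U_coneT (p := p) f2 T2 T1 e (k + 1)
    obtain ⟨x', rfl⟩ := hdvd (by omega)
    obtain ⟨m, hm⟩ := hq (e + k + 1)
    refine ⟨s, hs, k + 1, Sum.elim ((fr p (e + k) T1).mulVec y) 0,
      Sum.elim ((fr p (e + k) T2).mulVec u') 0, Sum.elim ((fr p (e + k) T2).mulVec v')
      (s • x' • (U p T1 e (k + 1)).mulVec (z ∘ Sum.inr) -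
        f2 ^ m • (fr p (e + k) T1).mulVec y), ?_⟩
    have hcomm : fr p (e + k) T2 * fr p (e + k) D1 = fr p (e + (k + 1)) D1 * fr p (e + k) T1 := by
      have := U_comm p T1 T2 D1 h1 (e + k) 1
      simpa [U, add_assoc] using this.symm
    have hz1 : s • (U p T2 e (k + 1)).mulVec (z ∘ Sum.inl) =
        (fr p (e + (k + 1)) D1).mulVec ((fr p (e + k) T1).mulVec y) +
        f1 • (fr p (e + k) T2).mulVec u' + f2 • (fr p (e + k) T2).mulVec v' := by
      rw [U, ← Matrix.mulVec_mulVec, ← Matrix.mulVec_smul, h, Matrix.mulVec_add, Matrix.mulVec_add,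
        Matrix.mulVec_smul, Matrix.mulVec_smul, Matrix.mulVec_mulVec, hcomm, Matrix.mulVec_mulVec]
    rw [fr_coneD, coneD, Matrix.fromBlocks_mulVec, hx, Matrix.fromBlocks_mulVec]
    funext i
    rcases i with i | i
    · have := congrFun hz1 i
      simpa using this
    · have : e + (k + 1) = e + k + 1 := rfl
      simp [Matrix.smul_mulVec, this, hm]
      ring
  · rintro hP e z ⟨u, v, huv⟩
    obtain ⟨m, hm⟩ := hq e
    obtain ⟨s, hs, k, y, u', v', h⟩ := hP e (Sum.elim z 0) ⟨Sum.elim u 0,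
      Sum.elim v (f2 ^ m • z), by
        rw [fr_coneD, coneD, Matrix.fromBlocks_mulVec]
        funext i
        rcases i with i | i
        · simp [huv]
        · simp [Matrix.smul_mulVec, hm, pow_succ', mul_assoc]⟩
    obtain ⟨x, hx, -⟩ := U_coneT (p := p) f2 T2 T1 e k
    rw [fr_coneD, coneD, Matrix.fromBlocks_mulVec, hx, Matrix.fromBlocks_mulVec] at h
    refine ⟨s, hs, k, y ∘ Sum.inl, u' ∘ Sum.inl, v' ∘ Sum.inl, ?_⟩
    funext i
    have := congrFun h (Sum.inl i)
    simpa using this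

end cone
end FMod

namespace FMod
set_option linter.unusedSectionVars false

/-- relation property: relations among p-th powers are generated by p-th powers of relations -/
def RP (A : Type) [CommRing A] (p : ℕ) : Prop :=
  ∀ (ι : Type) [Fintype ι] (v a : ι → A), ∑ i, v i * a i ^ p = 0 →
    v ∈ brk p (relS A a : Set (ι → A))

section
variable {A : Type} [CommRing A] {p : ℕ}

theorem mem_relS' {ι : Type} [Fintype ι] (x r : ι → A) :
    r ∈ relS A x ↔ ∑ i, r i * x i = 0 := by
  simp [mem_relS]

theorem brk_of {ι κ : Type} [Fintype κ] {V : Set (ι → A)} {v : ι → A} (c : κ → A) (r : κ → ι → A)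
    (hr : ∀ k, r k ∈ V) (h : ∀ i, v i = ∑ k, c k * r k i ^ p) : v ∈ brk p V := by
  have : v = ∑ k, c k • (fun i => r k i ^ p) := by
    funext i; simp [h]
  rw [this]
  exact Submodule.sum_mem _ fun k _ => Submodule.smul_mem _ _ (pow_mem_brk p (hr k))

theorem brk_exists {ι : Type} {V : Set (ι → A)} {v : ι → A} (h : v ∈ brk p V) :
    ∃ (n : ℕ) (c : Fin n → A) (r : Fin n → ι → A), (∀ k, r k ∈ V) ∧
      ∀ i, v i = ∑ k, c k * r k i ^ p := by
  obtain ⟨n, c, g, hg⟩ := (Submodule.mem_span_set' (s := (fun (r : ι → A) i => r i ^ p) '' V)).1 h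
  choose r hr hr' using fun k => (g k).2
  refine ⟨n, c, r, hr, fun i => ?_⟩
  rw [← hg]
  simp only [Finset.sum_apply, Pi.smul_apply, smul_eq_mul]
  exact Finset.sum_congr rfl fun k _ => by rw [← hr' k]

variable [Fact p.Prime] [CharP A p]

theorem brk_range {ι κ : Type} [Fintype κ] {v : ι → A} (r : κ → ι → A)
    (h : v ∈ brk p (Submodule.span A (Set.range r) : Set (ι → A))) :
    ∃ c : κ → A, ∀ i, v i = ∑ k, c k * r k i ^ p := by
  have h2 := brk_span p 1 (Set.range r)
  rw [pow_one] at h2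
  rw [h2, brk, ← Set.range_comp] at h
  obtain ⟨c, hc⟩ := (Submodule.mem_span_range_iff_exists_fun A).1 h
  exact ⟨c, fun i => by rw [← hc]; simp⟩

theorem exists_gens [IsNoetherianRing A] {ι : Type} [Fintype ι] (V : Submodule A (ι → A)) :
    ∃ (n : ℕ) (r : Fin n → ι → A), Submodule.span A (Set.range r) = V := by
  obtain ⟨n, r, hr⟩ := Submodule.fg_iff_exists_fin_generating_family.1 (IsNoetherian.noetherian V)
  exact ⟨n, r, hr⟩

theorem sum_pow_p {κ : Type} [Fintype κ] (f : κ → A) : (∑ k, f k) ^ p = ∑ k, f k ^ p :=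
  sum_pow_char p Finset.univ f

theorem swap_sum {ι κ : Type} [Fintype ι] [Fintype κ] (c : κ → A) (r : κ → ι → A) (a : ι → A) :
    ∑ i, (∑ k, c k * r k i ^ p) * a i ^ p = ∑ k, c k * (∑ i, r k i * a i) ^ p := by
  simp_rw [sum_pow_p, Finset.sum_mul, Finset.mul_sum]
  rw [Finset.sum_comm]
  refine Finset.sum_congr rfl fun k _ => Finset.sum_congr rfl fun i _ => ?_
  ring

theorem RP_unit {ι : Type} [Fintype ι] (v a : ι → A) (j : ι) (hj : IsUnit (a j))
    (h : ∑ i, v i * a i ^ p = 0) : v ∈ brk p (relS A a : Set (ι → A)) := by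
  classical
  obtain ⟨u, hu⟩ := hj
  have hu' : a j * (↑u⁻¹ : A) = 1 := by rw [← hu]; simp
  refine brk_of v (fun k i => (if i = k then 1 else 0) - a k * (↑u⁻¹ : A) * (if i = j then 1 else 0))
    (fun k => ?_) fun i => ?_
  · refine (mem_relS' _ _).2 ?_
    simp only [sub_mul, Finset.sum_sub_distrib, mul_assoc, ite_mul, one_mul, zero_mul, mul_ite, mul_zero]
    simp
    rw [mul_comm _ (a j), hu']; simp
  · have hp := (Fact.out : p.Prime).ne_zero
    have : ∀ k, v k * ((if i = k then 1 else 0) - a k * (↑u⁻¹ : A) * (if i = j then 1 else 0)) ^ p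
       = v k * (if i = k then 1 else 0) - (v k * a k ^ p) * ((↑u⁻¹ : A) * (if i = j then 1 else 0))^ p := by
      intro k
      rw [sub_pow_char]
      have : ((if i = k then 1 else 0 : A)) ^ p = if i = k then 1 else 0 := by
        split_ifs <;> simp [hp]
      rw [this]; ring
    simp_rw [this]
    rw [Finset.sum_sub_distrib, ← Finset.sum_mul, h]
    simp

theorem RP_zero {ι : Type} [Fintype ι] (v a : ι → A) (ha : ∀ i, a i = 0) :
    v ∈ brk p (relS A a : Set (ι → A)) := by
  classical
  have hp := (Fact.out : p.Prime).ne_zero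
  refine brk_of v (fun k i => if i = k then 1 else 0) (fun k => ?_) fun i => ?_
  · exact (mem_relS' _ _).2 (by simp [ha])
  · have : ∀ k, ((if i = k then 1 else 0 : A)) ^ p = if i = k then 1 else 0 := by
      intro k; split_ifs <;> simp [hp]
    simp [this]

theorem RP_base (x0 : A) (hq : RP (A ⧸ Ideal.span {x0}) p) {ι : Type} [Fintype ι]
    (v a : ι → A) (h : ∃ u, ∑ i, v i * a i ^ p = x0 * u) :
    ∃ v' ∈ brk p {r : ι → A | ∃ s, ∑ i, r i * a i = x0 * s}, ∃ w : ι → A,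
      ∀ i, v i = v' i + x0 * w i := by
  obtain ⟨u, hu⟩ := h
  set π := Ideal.Quotient.mk (Ideal.span {x0})
  have hz : ∀ y, π y = 0 ↔ ∃ s, y = x0 * s := fun y => by
    rw [Ideal.Quotient.eq_zero_iff_mem, Ideal.mem_span_singleton]; rfl
  have h1 := hq ι (fun i => π (v i)) (fun i => π (a i)) (by
    have := congrArg π hu
    rw [(hz _).2 ⟨u, rfl⟩] at this
    simpa using this)
  obtain ⟨n, c, r, hr, hv⟩ := brk_exists h1
  choose c' hc' using fun k => Ideal.Quotient.mk_surjective (c k)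
  choose r' hr' using fun k i => Ideal.Quotient.mk_surjective (r k i)
  refine ⟨fun i => ∑ k, c' k * r' k i ^ p, brk_of c' r' (fun k => ?_) fun i => rfl, ?_⟩
  · have := (mem_relS' _ _).1 (hr k)
    refine (hz _).1 ?_
    simp only [map_sum, map_mul]
    rw [← this]
    exact Finset.sum_congr rfl fun i _ => by rw [← hr']
  · have : ∀ i, ∃ s, v i - ∑ k, c' k * r' k i ^ p = x0 * s := by
      intro i
      refine (hz _).1 ?_
      simp only [map_sub, map_sum, map_mul, map_pow]
      rw [hv, sub_eq_zero]
      exact Finset.sum_congr rfl fun k _ => by rw [← hr', ← hc']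
    choose w hw using this
    exact ⟨w, fun i => by rw [← hw]; ring⟩

theorem RP_iter (x0 : A) (hx0 : ∀ y, x0 * y = 0 → y = 0)
    (hq : RP (A ⧸ Ideal.span {x0}) p) {ι : Type} [Fintype ι]
    (v a : ι → A) (t : ℕ) (ht : t ≤ p) (h : ∃ u, ∑ i, v i * a i ^ p = x0 ^ t * u) :
    ∃ v' ∈ brk p {r : ι → A | ∃ s, ∑ i, r i * a i = x0 * s}, ∃ w : ι → A,
      ∀ i, v i = v' i + x0 ^ t * w i := by
  have hx0' : ∀ t y, x0 ^ t * y = 0 → y = 0 := by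
    intro t
    induction t with
    | zero => simp
    | succ t ih => intro y hy; exact ih y (hx0 _ (by rw [← hy]; ring))
  induction t with
  | zero => exact ⟨0, zero_mem _, v, by simp⟩
  | succ t ih =>
    obtain ⟨u, hu⟩ := h
    obtain ⟨v', hv', w, hw⟩ := ih (by omega) ⟨x0 * u, by rw [hu]; ring⟩
    have h1 : ∃ u', ∑ i, w i * a i ^ p = x0 * u' := by
      obtain ⟨n, c, r, hr, hc⟩ := brk_exists hv'
      choose s hs using hr
      have e1 : ∑ i, v' i * a i ^ p = x0 ^ p * ∑ k, c k * s k ^ p := by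
        simp_rw [hc]
        rw [swap_sum, Finset.mul_sum]
        refine Finset.sum_congr rfl fun k _ => ?_
        rw [hs]; ring
      have e2 : x0 ^ (t+1) * u = x0 ^ p * (∑ k, c k * s k ^ p) + x0 ^ t * ∑ i, w i * a i ^ p := by
        rw [← hu, ← e1, Finset.mul_sum, ← Finset.sum_add_distrib]
        refine Finset.sum_congr rfl fun k _ => ?_
        rw [hw]; ring
      obtain ⟨m, rfl⟩ : ∃ m, p = t + 1 + m := ⟨p - (t + 1), by omega⟩
      refine ⟨u - x0 ^ m * ∑ k, c k * s k ^ (t + 1 + m), ?_⟩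
      rw [← sub_eq_zero]
      refine hx0' t _ ?_
      linear_combination -e2
    obtain ⟨v2, hv2, w2, hw2⟩ := RP_base x0 hq w a h1
    refine ⟨v' + x0 ^ t • v2, add_mem hv' (Submodule.smul_mem _ _ hv2), w2, fun i => ?_⟩
    rw [hw, hw2]; simp; ring

theorem RP_opt (x0 : A) (hx0 : ∀ y, x0 * y = 0 → y = 0)
    (hq : RP (A ⧸ Ideal.span {x0}) p) {ι : Type} [Fintype ι]
    (v : Option ι → A) (a : ι → A) (h : ∑ i, v i * (i.elim x0 a) ^ p = 0) :
    v ∈ brk p (relS A (fun i : Option ι => i.elim x0 a) : Set (Option ι → A)) := by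
  classical
  have hp := (Fact.out : p.Prime).ne_zero
  have hx0' : ∀ t y, x0 ^ t * y = 0 → y = 0 := by
    intro t
    induction t with
    | zero => simp
    | succ t ih => intro y hy; exact ih y (hx0 _ (by rw [← hy]; ring))
  rw [Fintype.sum_option] at h
  simp only [Option.elim] at h
  obtain ⟨v', hv', w, hw⟩ := RP_iter x0 hx0 hq (fun i => v (some i)) a p le_rfl
    ⟨- v none, by linear_combination h⟩
  obtain ⟨n, c, r, hr, hc⟩ := brk_exists hv'
  choose s hs using hr
  refine brk_of (κ := Fin n ⊕ ι) (Sum.elim c w)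
    (Sum.elim (fun k i => i.elim (- s k) (r k))
      (fun j i => i.elim (- a j) (fun i => if i = j then x0 else 0))) (fun k => ?_) fun i => ?_
  · refine (mem_relS' _ _).2 ?_
    rw [Fintype.sum_option]
    cases k with
    | inl k => simp [hs]; ring
    | inr j => simp; ring
  · have neg_p : ∀ x : A, (-x) ^ p = - x ^ p := fun x => by
      have := sub_pow_char (p := p) (0 : A) x
      simpa [hp] using this
    have key : ∀ i, v (some i) = ∑ k, c k * r k i ^ p + x0 ^ p * w i := fun i => by
      rw [hw, hc]
    rw [Fintype.sum_sum_type]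
    cases i with
    | some i =>
      have : ∀ k, ((if i = k then x0 else 0 : A)) ^ p = if i = k then x0 ^ p else 0 := by
        intro k; split_ifs <;> simp [hp]
      simp [this, key]; ring
    | none =>
      simp only [Sum.elim_inl, Sum.elim_inr, Option.elim, neg_p]
      rw [← sub_eq_zero]
      refine hx0' p _ ?_
      have e1 : ∑ i, (∑ k, c k * r k i ^ p) * a i ^ p = x0 ^ p * ∑ k, c k * s k ^ p := by
        rw [swap_sum, Finset.mul_sum]
        refine Finset.sum_congr rfl fun k _ => ?_
        rw [hs]; ring
      simp_rw [key, add_mul, Finset.sum_add_distrib] at h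
      rw [e1] at h
      simp only [mul_neg, Finset.sum_neg_distrib]
      have e2 : ∑ i, x0 ^ p * w i * a i ^ p = x0 ^ p * ∑ i, w i * a i ^ p := by
        rw [Finset.mul_sum]; exact Finset.sum_congr rfl fun i _ => by ring
      rw [e2] at h
      linear_combination h

theorem mem_span_range' {ι : Type} [Fintype ι] (a : ι → A) (y : A) :
    y ∈ Ideal.span (Set.range a) ↔ ∃ g : ι → A, ∑ i, g i * a i = y := by
  have := Submodule.mem_span_range_iff_exists_fun A (v := a) (x := y)
  simpa using this

theorem RP_lift [IsLocalRing A] [IsNoetherianRing A] (x0 : A)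
    (hm : x0 ∈ IsLocalRing.maximalIdeal A) (hx0 : ∀ y, x0 * y = 0 → y = 0)
    (hq : RP (A ⧸ Ideal.span {x0}) p) : RP A p := by
  classical
  have hp := (Fact.out : p.Prime).ne_zero
  suffices H : ∀ 𝔞 : Ideal A, ∀ (ι : Type) [Fintype ι] (a : ι → A), Ideal.span (Set.range a) = 𝔞 →
      ∀ v : ι → A, ∑ i, v i * a i ^ p = 0 → v ∈ brk p (relS A a : Set (ι → A)) by
    intro ι _ v a h
    exact H _ ι a rfl v h
  intro 𝔞
  refine IsNoetherian.induction (P := fun 𝔞 : Ideal A => ∀ (ι : Type) [Fintype ι] (a : ι → A),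
    Ideal.span (Set.range a) = 𝔞 → ∀ v : ι → A, ∑ i, v i * a i ^ p = 0 →
      v ∈ brk p (relS A a : Set (ι → A))) ?_ 𝔞
  clear 𝔞
  rintro 𝔞 IH ι _ a rfl v hv
  by_cases h1 : x0 ∈ Ideal.span (Set.range a)
  · obtain ⟨g, hg⟩ := (mem_span_range' _ _).1 h1
    have h2 := RP_opt x0 hx0 hq (fun i => i.elim 0 v) a (by
      rw [Fintype.sum_option]; simpa using hv)
    obtain ⟨n, c, r, hr, hc⟩ := brk_exists h2
    refine brk_of c (fun k i => r k (some i) + r k none * g i) (fun k => ?_) fun i => ?_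
    · have := (mem_relS' _ _).1 (hr k)
      rw [Fintype.sum_option] at this
      simp only [Option.elim] at this
      refine (mem_relS' _ _).2 ?_
      simp_rw [add_mul, Finset.sum_add_distrib, mul_assoc]
      rw [← Finset.mul_sum, hg, ← this]; ring
    · have c0 := hc none
      have ci := hc (some i)
      simp only [Option.elim] at c0 ci
      simp_rw [add_pow_char, mul_pow, mul_add, Finset.sum_add_distrib]
      rw [← ci]
      have : ∑ k, c k * (r k none ^ p * g i ^ p) = (∑ k, c k * r k none ^ p) * g i ^ p := by
        rw [Finset.sum_mul]; exact Finset.sum_congr rfl fun k _ => by ring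
      rw [this, ← c0]; ring
  by_cases h2 : Ideal.span (Set.range a) = ⊤
  · by_cases h3 : ∃ j, IsUnit (a j)
    · obtain ⟨j, hj⟩ := h3
      exact RP_unit v a j hj hv
    · push Not at h3
      exfalso
      have : Ideal.span (Set.range a) ≤ IsLocalRing.maximalIdeal A := by
        rw [Ideal.span_le]; rintro _ ⟨j, rfl⟩
        exact (IsLocalRing.mem_maximalIdeal _).2 (h3 j)
      rw [h2] at this
      exact (IsLocalRing.maximalIdeal.isMaximal A).ne_top (top_le_iff.1 this)
  -- extension by an element
  have ext : ∀ x, x ∉ Ideal.span (Set.range a) → ∃ (n : ℕ) (ρ : Fin n → Option ι → A),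
      Submodule.span A (Set.range ρ) = relS A (fun i : Option ι => i.elim x a) ∧
      ∀ w : ι → A, ∑ i, w i * a i ^ p = 0 → ∃ b : Fin n → A, (∀ i, w i = ∑ k, b k * ρ k (some i) ^ p) ∧
        ∑ k, b k * ρ k none ^ p = 0 := by
    intro x hx
    obtain ⟨n, ρ, hρ⟩ := exists_gens (relS A (fun i : Option ι => i.elim x a))
    refine ⟨n, ρ, hρ, fun w hw => ?_⟩
    have h4 := IH (Ideal.span (Set.range (fun i : Option ι => i.elim x a))) (by
      refine lt_of_le_of_ne (Ideal.span_mono ?_) ?_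
      · rintro _ ⟨i, rfl⟩; exact ⟨some i, rfl⟩
      · intro h; rw [h] at hx; exact hx (Ideal.subset_span ⟨none, rfl⟩)) (Option ι) _ rfl
      (fun i => i.elim 0 w) (by rw [Fintype.sum_option]; simpa using hw)
    rw [← hρ] at h4
    obtain ⟨b, hb⟩ := brk_range _ h4
    exact ⟨b, fun i => hb (some i), (hb none).symm⟩
  by_cases h3 : (Ideal.span (Set.range a)).IsPrime
  · obtain ⟨n, ρ, hρ, hext⟩ := ext x0 h1
    have hs : ∀ k, ∃ σ : ι → A, ∑ i, σ i * a i = ρ k none := by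
      intro k
      refine (mem_span_range' _ _).1 ((h3.mem_or_mem (x := x0) (y := ρ k none) ?_).resolve_left h1)
      have : ρ k ∈ relS A (fun i : Option ι => i.elim x0 a) := hρ ▸ Submodule.subset_span ⟨k, rfl⟩
      have := (mem_relS' _ _).1 this
      rw [Fintype.sum_option] at this
      refine (mem_span_range' _ _).2 ⟨fun i => - ρ k (some i), ?_⟩
      simp only [Option.elim] at this
      simp only [neg_mul, Finset.sum_neg_distrib]
      linear_combination -this
    choose σ hσ using hs
    let V : Submodule A (ι → A) := relS A (fun i => a i ^ p)
    suffices V ≤ brk p (relS A a : Set (ι → A)) from this ((mem_relS' _ _).2 hv)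
    refine Submodule.le_of_le_smul_of_le_jacobson_bot (I := IsLocalRing.maximalIdeal A)
      (IsNoetherian.noetherian V) (IsLocalRing.maximalIdeal_le_jacobson _) ?_
    intro w hw
    obtain ⟨b, hb, hb0⟩ := hext w ((mem_relS' _ _).1 hw)
    have : w = (fun i => ∑ k, b k * (ρ k (some i) + x0 * σ k i) ^ p) +
        (x0 * (- x0 ^ (p - 1))) • (fun i => ∑ k, b k * σ k i ^ p) := by
      funext i
      simp only [Pi.add_apply, Pi.smul_apply, smul_eq_mul]
      rw [hb, mul_neg, mul_pow_sub_one hp]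
      simp_rw [add_pow_char, mul_pow, mul_add, Finset.sum_add_distrib]
      have : ∑ k, b k * (x0 ^ p * σ k i ^ p) = x0 ^ p * ∑ k, b k * σ k i ^ p := by
        rw [Finset.mul_sum]; exact Finset.sum_congr rfl fun k _ => by ring
      rw [this]; ring
    rw [this]
    refine Submodule.add_mem_sup (brk_of b (fun k i => ρ k (some i) + x0 * σ k i) (fun k => ?_) fun i => rfl)
      (Submodule.smul_mem_smul (Ideal.mul_mem_right _ _ hm) ?_)
    · have : ρ k ∈ relS A (fun i : Option ι => i.elim x0 a) := hρ ▸ Submodule.subset_span ⟨k, rfl⟩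
      have := (mem_relS' _ _).1 this
      rw [Fintype.sum_option] at this
      simp only [Option.elim] at this
      refine (mem_relS' _ _).2 ?_
      simp_rw [add_mul, Finset.sum_add_distrib, mul_assoc]
      rw [← Finset.mul_sum, hσ]; linear_combination this
    · refine (mem_relS' _ _).2 ?_
      rw [swap_sum]
      simp_rw [hσ]; exact hb0
  · obtain ⟨x, hx, y, hy, hxy⟩ : ∃ x, x ∉ Ideal.span (Set.range a) ∧ ∃ y, y ∉ Ideal.span (Set.range a) ∧
        x * y ∈ Ideal.span (Set.range a) := by
      by_contra hcon
      push Not at hcon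
      refine h3 ⟨h2, fun {x y} hxy => ?_⟩
      by_contra hh
      push Not at hh
      exact hcon x hh.1 y hh.2 hxy
    obtain ⟨n, ρ, hρ, hext⟩ := ext x hx
    have hcol : ∀ z, x * z ∈ Ideal.span (Set.range a) → z ∈ Ideal.span (Set.range fun k => ρ k none) := by
      intro z hz
      obtain ⟨g, hg⟩ := (mem_span_range' _ _).1 hz
      have : (fun i : Option ι => i.elim z (fun i => - g i)) ∈ relS A (fun i : Option ι => i.elim x a) := by
        refine (mem_relS' _ _).2 ?_
        rw [Fintype.sum_option]
        simp [hg]; ring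
      rw [← hρ] at this
      obtain ⟨c, hc⟩ := (Submodule.mem_span_range_iff_exists_fun A).1 this
      refine (mem_span_range' _ _).2 ⟨c, ?_⟩
      have := congrFun hc none
      simpa using this
    obtain ⟨b, hb, hb0⟩ := hext v hv
    have h4 := IH (Ideal.span (Set.range fun k => ρ k none)) (by
      refine lt_of_le_of_ne (fun z hz => hcol z (Ideal.mul_mem_left _ _ hz)) ?_
      intro h
      rw [h] at hy
      exact hy (hcol y hxy)) (Fin n) _ rfl b hb0
    obtain ⟨m, c, τ, hτ, hc⟩ := brk_exists h4
    refine brk_of c (fun l i => ∑ k, τ l k * ρ k (some i)) (fun l => ?_) fun i => ?_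
    · have hmem : (∑ k, τ l k • ρ k) ∈ relS A (fun i : Option ι => i.elim x a) := by
        rw [← hρ]
        exact Submodule.sum_mem _ fun k _ => Submodule.smul_mem _ _ (Submodule.subset_span ⟨k, rfl⟩)
      have h5 := (mem_relS' _ _).1 hmem
      have h6 := (mem_relS' _ _).1 (hτ l)
      rw [Fintype.sum_option] at h5
      simp only [Finset.sum_apply, Pi.smul_apply, smul_eq_mul, Option.elim] at h5
      rw [h6, zero_mul, zero_add] at h5
      exact (mem_relS' _ _).2 h5
    · rw [hb]
      simp_rw [hc, sum_pow_p, Finset.sum_mul, Finset.mul_sum]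
      rw [Finset.sum_comm]
      refine Finset.sum_congr rfl fun k _ => Finset.sum_congr rfl fun i _ => ?_
      ring
end
end FMod

namespace FMod

theorem charP_of_hom {A B : Type} [CommRing A] [CommRing B] [Nontrivial B] {p : ℕ} [Fact p.Prime] [CharP A p]
    (f : A →+* B) : CharP B p := by
  refine (CharP.charP_iff_prime_eq_zero (Fact.out : p.Prime)).2 ?_
  rw [← map_natCast f, CharP.cast_eq_zero, map_zero]

open IsLocalRing in
theorem RP_local (p : ℕ) [Fact p.Prime] (d : ℕ) : ∀ (A : Type) [CommRing A] [IsLocalRing A] [IsNoetherianRing A]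
    [CharP A p], (d : WithBot ℕ∞) ≤ ringKrullDim A →
    (∃ y : Fin d → A, Ideal.span (Set.range y) = maximalIdeal A) → IsDomain A ∧ RP A p := by
  induction d with
  | zero =>
    rintro A _ _ _ _ - ⟨y, hy⟩
    have hm : maximalIdeal A = ⊥ := by rw [← hy]; simp
    have hu : ∀ x : A, x ≠ 0 → IsUnit x := fun x hx => by
      by_contra h
      have := (mem_maximalIdeal x).2 h
      rw [hm] at this
      exact hx (by simpa using this)
    refine ⟨?_, ?_⟩
    · have : (⊥ : Ideal A).IsPrime := hm ▸ (maximalIdeal.isMaximal A).isPrime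
      exact IsDomain.of_bot_isPrime A
    · intro ι _ v a h
      by_cases h1 : ∃ j, a j ≠ 0
      · obtain ⟨j, hj⟩ := h1
        exact RP_unit v a j (hu _ hj) h
      · push Not at h1
        exact RP_zero v a h1
  | succ d ih =>
    rintro A _ _ _ _ hd ⟨y, hy⟩
    have hmf : (maximalIdeal A).FG := IsNoetherian.noetherian _
    have hd0 : ringKrullDim A ≠ 0 := by
      intro h
      rw [h] at hd
      have : ((d + 1 : ℕ) : WithBot ℕ∞) ≤ ((0 : ℕ) : WithBot ℕ∞) := by simpa using hd
      have := Nat.cast_le.1 this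
      omega
    have hnotmin : ∀ P ∈ minimalPrimes A, ¬ maximalIdeal A ≤ P := by
      intro P hP hle
      have hPp : P.IsPrime := hP.1.1
      have : maximalIdeal A = P := le_antisymm hle (le_maximalIdeal hPp.ne_top)
      refine hd0 ?_
      rw [← maximalIdeal_height_eq_ringKrullDim, this, Ideal.height_eq_zero_iff.2 hP]
      rfl
    have hnotsq : ¬ maximalIdeal A ≤ maximalIdeal A ^ 2 := by
      intro hle
      have h0 : maximalIdeal A ≤ ⊥ := by
        refine Submodule.le_of_le_smul_of_le_jacobson_bot (I := maximalIdeal A) hmf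
          (maximalIdeal_le_jacobson _) ?_
        rw [bot_sup_eq, smul_eq_mul, ← pow_two]; exact hle
      obtain ⟨P, hP, -⟩ := Ideal.exists_minimalPrimes_le (I := ⊥) (J := maximalIdeal A) bot_le
      exact hnotmin P hP (h0.trans bot_le)
    obtain ⟨x0, hx0m, hx0sq, hx0min⟩ : ∃ x0 ∈ maximalIdeal A, x0 ∉ maximalIdeal A ^ 2 ∧
        ∀ P ∈ minimalPrimes A, x0 ∉ P := by
      by_contra hcon
      push Not at hcon
      have hfin : (minimalPrimes A).Finite := minimalPrimes.finite_of_isNoetherianRing A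
      classical
      have := (Ideal.subset_union_prime (R := A) (s := insert (maximalIdeal A ^ 2) hfin.toFinset) (f := id)
        (maximalIdeal A ^ 2) (maximalIdeal A ^ 2) (I := maximalIdeal A) ?_).1 ?_
      · obtain ⟨i, hi, hle⟩ := this
        rw [Finset.mem_insert] at hi
        rcases hi with rfl | hi
        · exact hnotsq hle
        · exact hnotmin i (by simpa using hi) hle
      · intro i hi h1 _
        rw [Finset.mem_insert] at hi
        have hi := hi.resolve_left h1
        exact ((by simpa using hi : i ∈ minimalPrimes A)).1.1
      · intro x hx
        simp only [Set.mem_iUnion]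
        by_cases h : x ∈ maximalIdeal A ^ 2
        · exact ⟨_, by simp, h⟩
        · obtain ⟨P, hP, hxP⟩ := hcon x hx h
          exact ⟨P, by simp [hP], hxP⟩
    have hspan : Ideal.span {x0} ≤ maximalIdeal A := by
      rw [Ideal.span_le]; simpa using hx0m
    have hne : Ideal.span {x0} ≠ ⊤ := fun h =>
      (maximalIdeal.isMaximal A).ne_top (top_le_iff.1 (h ▸ hspan))
    have : Nontrivial (A ⧸ Ideal.span {x0}) := Ideal.Quotient.nontrivial_iff.2 hne
    have hloc : IsLocalRing (A ⧸ Ideal.span {x0}) :=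
      IsLocalRing.of_surjective' (Ideal.Quotient.mk _) Ideal.Quotient.mk_surjective
    have hchar : CharP (A ⧸ Ideal.span {x0}) p := charP_of_hom (Ideal.Quotient.mk (Ideal.span {x0}))
    obtain ⟨c, hc⟩ := (mem_span_range' y x0).1 (hy ▸ hx0m)
    obtain ⟨j, hj⟩ : ∃ j, IsUnit (c j) := by
      by_contra hcon
      push Not at hcon
      refine hx0sq ?_
      rw [← hc, pow_two]
      refine Ideal.sum_mem _ fun i _ => Ideal.mul_mem_mul ((mem_maximalIdeal _).2 (hcon i)) ?_
      rw [← hy]; exact Ideal.subset_span ⟨i, rfl⟩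
    have hdim : (d : WithBot ℕ∞) ≤ ringKrullDim (A ⧸ Ideal.span {x0}) := by
      have h1 := Ideal.height_le_ringKrullDim_quotient_add_one hx0m
      rw [maximalIdeal_height_eq_ringKrullDim] at h1
      have h2 := hd.trans h1
      push_cast at h2
      exact ENat.WithBot.add_le_add_one_right_iff.1 h2
    have hgen : Ideal.span (Set.range fun i => Ideal.Quotient.mk (Ideal.span {x0}) (y (j.succAbove i))) =
        maximalIdeal (A ⧸ Ideal.span {x0}) := by
      set π := Ideal.Quotient.mk (Ideal.span {x0}) with hπ
      have hmap : maximalIdeal (A ⧸ Ideal.span {x0}) = (maximalIdeal A).map π := by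
        have h1 := IsLocalRing.map_maximalIdeal_of_surjective π Ideal.Quotient.mk_surjective
        exact h1.symm
      rw [hmap, ← hy, Ideal.map_span]
      apply le_antisymm
      · rw [Ideal.span_le]
        rintro _ ⟨i, rfl⟩
        exact Ideal.subset_span ⟨y (j.succAbove i), ⟨_, rfl⟩, rfl⟩
      · rw [Ideal.span_le]
        rintro _ ⟨_, ⟨i, rfl⟩, rfl⟩
        rcases Fin.eq_self_or_eq_succAbove j i with rfl | ⟨i, rfl⟩
        · rw [Fin.sum_univ_succAbove _ i] at hc
          have h0 : π x0 = 0 := Ideal.Quotient.eq_zero_iff_mem.2 (Ideal.mem_span_singleton_self x0)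
          have h0 := (congrArg π hc).trans h0
          rw [map_add, map_sum, map_mul] at h0
          have h2 : π (c i) * π (y i) ∈ Ideal.span (Set.range fun k => π (y (i.succAbove k))) := by
            rw [eq_neg_of_add_eq_zero_left h0]
            refine neg_mem (Ideal.sum_mem _ fun k _ => ?_)
            rw [map_mul]
            exact Ideal.mul_mem_left _ _ (Ideal.subset_span ⟨k, rfl⟩)
          exact (Ideal.unit_mul_mem_iff_mem _ (hj.map π)).1 h2
        · exact Ideal.subset_span ⟨i, rfl⟩
    obtain ⟨hdom, hRP⟩ := ih (A ⧸ Ideal.span {x0}) hdim ⟨_, hgen⟩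
    have hprime : (Ideal.span {x0}).IsPrime := (Ideal.Quotient.isDomain_iff_prime _).1 hdom
    obtain ⟨P, hP, hPle⟩ := Ideal.exists_minimalPrimes_le (I := ⊥) (J := Ideal.span {x0}) bot_le
    have hPp : P.IsPrime := hP.1.1
    have hP0 : P ≤ ⊥ := by
      refine Submodule.le_of_le_smul_of_le_jacobson_bot (I := maximalIdeal A) (IsNoetherian.noetherian P)
          (maximalIdeal_le_jacobson _) ?_
      intro z hz
      rw [bot_sup_eq]
      obtain ⟨w, rfl⟩ := Ideal.mem_span_singleton.1 (hPle hz)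
      exact Submodule.smul_mem_smul hx0m ((hPp.mem_or_mem hz).resolve_left (hx0min P hP))
    have hbot : (⊥ : Ideal A).IsPrime := by rwa [le_bot_iff.1 hP0] at hPp
    have hD : IsDomain A := IsDomain.of_bot_isPrime A
    refine ⟨hD, RP_lift x0 hx0m (fun z hz => (mul_eq_zero.1 hz).resolve_left ?_) hRP⟩
    rintro rfl
    exact hx0sq (zero_mem _)
end FMod

namespace FMod

theorem RP_of_regular (p : ℕ) [Fact p.Prime] (A : Type) [CommRing A] [IsLocalRing A] [IsNoetherianRing A]
    [CharP A p] (h : ringKrullDim A = (Module.finrank (ResidueField A) (CotangentSpace A) : WithBot ℕ∞)) :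
    RP A p := by
  have hfg : (maximalIdeal A).FG := IsNoetherian.noetherian _
  refine (RP_local p (maximalIdeal A).spanFinrank A ?_ ?_).2
  · rw [h, spanFinrank_maximalIdeal_eq_finrank_cotangentSpace]
  · have hfin := Submodule.FG.finite_generators hfg
    have hcard := Submodule.FG.generators_ncard hfg
    have := hfin.fintype
    have hc : Fintype.card (maximalIdeal A).generators = (maximalIdeal A).spanFinrank := by
      rw [← hcard, Set.ncard_eq_toFinset_card', Set.toFinset_card]
    let e := (Fintype.equivFinOfCardEq hc)
    refine ⟨fun i => (e.symm i : A), ?_⟩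
    have : Set.range (fun i => (e.symm i : A)) = (maximalIdeal A).generators := by
      ext x; constructor
      · rintro ⟨i, rfl⟩; exact (e.symm i).2
      · intro hx; exact ⟨e ⟨x, hx⟩, by simp⟩
    rw [this]
    exact Submodule.span_generators _

theorem RP_global (p : ℕ) [Fact p.Prime] (R : Type) [CommRing R] [CharP R p]
    (h : ∀ (P : Ideal R) [P.IsPrime], RP (Localization.AtPrime P) p) : RP R p := by
  intro ι _ v a hv
  have hp := (Fact.out : p.Prime).ne_zero
  let J : Ideal R := (brk p (relS R a : Set (ι → R))).colon {v}
  suffices J = ⊤ by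
    have h1 : (1 : R) ∈ J := by rw [this]; trivial
    simpa [J, Submodule.mem_colon_singleton] using h1
  by_contra hJ
  obtain ⟨P, hP, hle⟩ := Ideal.exists_le_maximal J hJ
  have := hP.isPrime
  let f := algebraMap R (Localization.AtPrime P)
  have clear : ∀ w ∈ brk p (relS (Localization.AtPrime P) (fun i => f (a i)) : Set (ι → Localization.AtPrime P)),
      ∃ s ∈ P.primeCompl, ∃ v' ∈ brk p (relS R a : Set (ι → R)), ∀ i, f s * w i = f (v' i) := by
    intro w hw
    induction hw using Submodule.span_induction with
    | mem x hx =>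
      obtain ⟨r, hr, rfl⟩ := hx
      obtain ⟨b, hb⟩ := IsLocalization.exist_integer_multiples_of_finite P.primeCompl r
      choose r' hr' using hb
      have h1 := (mem_relS' _ _).1 hr
      have h2 : f (∑ i, r' i * a i) = 0 := by
        rw [map_sum]
        have : ∀ i, f (r' i * a i) = f b * (r i * f (a i)) := fun i => by
          rw [map_mul, ← mul_assoc]; congr 1
          have := hr' i
          rw [Algebra.smul_def] at this
          exact this
        simp_rw [this]
        rw [← Finset.mul_sum, h1, mul_zero]
      obtain ⟨t, ht⟩ := (IsLocalization.map_eq_zero_iff P.primeCompl _ _).1 h2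
      refine ⟨((t : R) * b) ^ p, Submonoid.pow_mem _ (mul_mem t.2 b.2) _, fun i => ((t : R) * r' i) ^ p, ?_, fun i => ?_⟩
      · refine pow_mem_brk p ((mem_relS' _ _).2 ?_)
        rw [← ht, Finset.mul_sum]; exact Finset.sum_congr rfl fun i _ => by ring
      · have := hr' i
        rw [Algebra.smul_def] at this
        change f (r' i) = f b * r i at this
        rw [map_pow, map_pow, map_mul, map_mul, this]; ring
    | zero => exact ⟨1, one_mem _, 0, zero_mem _, by simp⟩
    | add x y _ _ hx hy =>
      obtain ⟨s, hs, x', hx', ex⟩ := hx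
      obtain ⟨t, ht, y', hy', ey⟩ := hy
      refine ⟨s * t, mul_mem hs ht, t • x' + s • y', add_mem (Submodule.smul_mem _ _ hx')
        (Submodule.smul_mem _ _ hy'), fun i => ?_⟩
      simp only [Pi.add_apply, Pi.smul_apply, smul_eq_mul, map_add, map_mul]
      rw [← ex, ← ey]; ring
    | smul c x _ hx =>
      obtain ⟨s, hs, x', hx', ex⟩ := hx
      obtain ⟨⟨c', t⟩, hc⟩ := IsLocalization.surj P.primeCompl c
      refine ⟨t * s, mul_mem t.2 hs, c' • x', Submodule.smul_mem _ _ hx', fun i => ?_⟩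
      change c * f t = f c' at hc
      simp only [Pi.smul_apply, smul_eq_mul, map_mul]
      rw [← ex, ← hc]; ring
  obtain ⟨s, hs, v', hv', e⟩ := clear (fun i => f (v i)) (h P ι _ _ (by
    have := congrArg f hv
    simpa using this))
  have h1 : ∀ i, ∃ t ∈ P.primeCompl, t * (s * v i) = t * v' i := fun i => by
    have := e i
    rw [← map_mul] at this
    obtain ⟨t, ht⟩ := (IsLocalization.eq_iff_exists P.primeCompl _).1 this
    exact ⟨t, t.2, ht⟩
  choose t ht ht' using h1
  have hprod : (∏ i, t i) ∈ P.primeCompl := Submonoid.prod_mem _ fun i _ => ht i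
  have hmem : (∏ i, t i) * s ∈ J := by
    rw [Submodule.mem_colon_singleton]
    have : ((∏ i, t i) * s) • v = (∏ i, t i) • v' := by
      funext i
      obtain ⟨u, hu⟩ := Finset.dvd_prod_of_mem t (Finset.mem_univ i)
      simp only [Pi.smul_apply, smul_eq_mul]
      rw [hu]
      linear_combination u * ht' i
    rw [this]
    exact Submodule.smul_mem _ _ hv'
  exact (mul_mem hprod hs : _ ∈ P.primeCompl) (hle hmem)

theorem hrel_of {R : Type} [CommRing R] {p : ℕ} [Fact p.Prime] [CharP R p] (h : RP R p) :
    ∀ {ι : Type} [Fintype ι] (a x : ι → R), ∑ i, a i • frobenius R p (x i) = 0 →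
      a ∈ brk p (relS R x : Set (ι → R)) := by
  intro ι _ a x hx
  exact h ι a x (by simpa [frobenius_def] using hx)

theorem RP_reg (p : ℕ) [Fact p.Prime] (R : Type) [CommRing R] [CharP R p] [IsNoetherianRing R]
    (h : ∀ (P : Ideal R) [P.IsPrime], IsRegularLocalRingStmt (Localization.AtPrime P)) : RP R p :=
  RP_global p R fun P _ => by
    have := charP_of_hom (p := p) (algebraMap R (Localization.AtPrime P))
    have : IsNoetherianRing (Localization.AtPrime P) := IsLocalization.isNoetherianRing P.primeCompl _ inferInstance
    exact RP_of_regular p _ (h P)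
end FMod

namespace FMod
open CategoryTheory

section
variable {R : Type} [CommRing R]

/-- homology class of a cycle -/
noncomputable def hcl (S : ShortComplex (ModuleCat.{0} R)) (x : S.X₂) (hx : S.g x = 0) : S.homology :=
  S.homologyπ (S.moduleCatCyclesIso.inv ⟨x, hx⟩)

theorem hcl_surj (S : ShortComplex (ModuleCat.{0} R)) (y : S.homology) : ∃ x hx, hcl S x hx = y := by
  obtain ⟨c, rfl⟩ := (ModuleCat.epi_iff_surjective S.homologyπ).1 inferInstance y
  obtain ⟨z, hz⟩ : ∃ z, S.moduleCatCyclesIso.inv z = c :=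
    (ModuleCat.epi_iff_surjective S.moduleCatCyclesIso.inv).1 inferInstance c
  exact ⟨z.1, z.2, by rw [← hz]; rfl⟩

theorem hcl_smul (S : ShortComplex (ModuleCat.{0} R)) (x : S.X₂) (hx : S.g x = 0) (s : R) (hs : S.g (s • x) = 0) :
    hcl S (s • x) hs = s • hcl S x hx := by
  exact (congrArg S.homologyπ.hom (map_smul S.moduleCatCyclesIso.inv.hom s ⟨x, hx⟩)).trans
    (map_smul S.homologyπ.hom s _)

theorem hcl_zero (S : ShortComplex (ModuleCat.{0} R)) (x : S.X₂) (hx : S.g x = 0) :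
    hcl S x hx = 0 ↔ ∃ w, S.f w = x := by
  unfold hcl
  have h1 := congrArg (fun f => f.hom ⟨x, hx⟩) S.moduleCatCyclesIso_inv_π
  have h2 : S.homologyπ (S.moduleCatCyclesIso.inv ⟨x, hx⟩) =
    S.moduleCatHomologyIso.inv (S.moduleCatLeftHomologyData.π ⟨x, hx⟩) := h1
  rw [h2]
  have inj : Function.Injective S.moduleCatHomologyIso.inv :=
    (ModuleCat.mono_iff_injective _).1 inferInstance
  rw [map_eq_zero_iff _ inj]
  change (Submodule.Quotient.mk _ = _) ↔ _
  refine (Submodule.Quotient.mk_eq_zero (LinearMap.range S.moduleCatToCycles)).trans ?_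
  constructor
  · rintro ⟨w, hw⟩; exact ⟨w, congrArg Subtype.val hw⟩
  · rintro ⟨w, hw⟩; exact ⟨w, Subtype.ext hw⟩

theorem hcl_map {S S' : ShortComplex (ModuleCat.{0} R)} (φ : S ⟶ S') (x : S.X₂) (hx : S.g x = 0) 
    (hx' : S'.g (φ.τ₂ x) = 0) :
    ShortComplex.homologyMap φ (hcl S x hx) = hcl S' (φ.τ₂ x) hx' := by
  unfold hcl
  set c := S.moduleCatCyclesIso.inv ⟨x, hx⟩ with hc
  have h1 := congrArg (fun f => f.hom c) (ShortComplex.homologyπ_naturality φ)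
  have h2 : ShortComplex.homologyMap φ (S.homologyπ c) = S'.homologyπ (ShortComplex.cyclesMap φ c) := h1
  rw [h2]
  congr 1
  have inj : Function.Injective S'.iCycles :=
    (ModuleCat.mono_iff_injective _).1 inferInstance
  apply inj
  have h3 := congrArg (fun f => f.hom c) (ShortComplex.cyclesMap_i φ)
  have h4 : S'.iCycles (ShortComplex.cyclesMap φ c) = φ.τ₂ (S.iCycles c) := h3
  rw [h4]
  have h5 := congrArg (fun f => f.hom ⟨x, hx⟩) S.moduleCatCyclesIso_inv_iCycles
  have h6 : S.iCycles c = x := h5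
  have h7 := congrArg (fun f => f.hom ⟨φ.τ₂ x, hx'⟩) S'.moduleCatCyclesIso_inv_iCycles
  have h8 : S'.iCycles (S'.moduleCatCyclesIso.inv ⟨φ.τ₂ x, hx'⟩) = φ.τ₂ x := h7
  rw [h6, h8]

/-- induced map on Hom complexes -/
noncomputable def lyMap {K L : ChainComplex (ModuleCat.{0} R) ℕ} (φ : K ⟶ L) (Y : ModuleCat.{0} R) :
    L.linearYonedaObj R Y ⟶ K.linearYonedaObj R Y :=
  (HomologicalComplex.unopFunctor _ _).map
    ((((linearYoneda R (ModuleCat.{0} R)).obj Y).rightOp.mapHomologicalComplex _).map φ).op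

theorem lyMap_f {K L : ChainComplex (ModuleCat.{0} R) ℕ} (φ : K ⟶ L) (Y : ModuleCat.{0} R) (n : ℕ)
    (ψ : L.X n ⟶ Y) : (lyMap φ Y).f n ψ = φ.f n ≫ ψ := rfl

theorem unop_gen {C : Type*} [Category* C] {X X' A A' : Cᵒᵖ} {B B' : C} (fd : X ⟶ X') (αP : X ≅ A)
    (αQ : X' ≅ A') (m : A ⟶ A') (oP : A ≅ Opposite.op B) (oQ : A' ≅ Opposite.op B') (H : B' ⟶ B)
    (h1 : αP.inv ≫ fd = m ≫ αQ.inv) (h2 : m ≫ oQ.hom = oP.hom ≫ H.op) :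
    fd.unop ≫ (αP.unop.symm ≪≫ oP.unop.symm).hom = (αQ.unop.symm ≪≫ oQ.unop.symm).hom ≫ H := by
  apply Quiver.Hom.op_inj
  have h3 : oP.inv ≫ m = H.op ≫ oQ.inv := by
    rw [Iso.inv_comp_eq, ← Category.assoc, ← h2, Category.assoc, Iso.hom_inv_id, Category.comp_id]
  change (oP.inv ≫ αP.inv) ≫ fd = H.op ≫ (oQ.inv ≫ αQ.inv)
  rw [Category.assoc, h1, ← Category.assoc, h3, Category.assoc]

theorem isoExt_nat {X X' : ModuleCat.{0} R} (f : X ⟶ X') (P : ProjectiveResolution X)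
    (Q : ProjectiveResolution X') (φ : P.complex ⟶ Q.complex) (comm : φ.f 0 ≫ Q.π.f 0 = P.π.f 0 ≫ f)
    (n : ℕ) (Y : ModuleCat.{0} R) :
    ((Ext R (ModuleCat.{0} R) n).map f.op).app Y ≫ (P.isoExt (R := R) n Y).hom =
      (Q.isoExt (R := R) n Y).hom ≫ HomologicalComplex.homologyMap (lyMap φ Y) n := by
  have h1 := ProjectiveResolution.isoLeftDerivedObj_inv_naturality f P Q φ comm
    (((linearYoneda R (ModuleCat.{0} R)).obj Y).rightOp) n
  have h2 := HomologicalComplex.homologyOp_hom_naturality (lyMap φ Y) n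
  have e1 : ((Ext R (ModuleCat.{0} R) n).map f.op).app Y =
    ((((linearYoneda R (ModuleCat.{0} R)).obj Y).rightOp.leftDerived n).map f).unop := rfl
  rw [e1]
  exact unop_gen _ _ _ _ _ _ _ h1 h2
end
end FMod

namespace FMod
open CategoryTheory

section
variable {R : Type} [CommRing R]

theorem ly_g (K : ChainComplex (ModuleCat.{0} R) ℕ) (Y : ModuleCat.{0} R) (n : ℕ) (ψ : K.X n ⟶ Y)
    (h : ∀ m, K.d m n ≫ ψ = 0) : ((K.linearYonedaObj R Y).sc n).g (ψ : _) = 0 := 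
  h _

theorem ly_f (K : ChainComplex (ModuleCat.{0} R) ℕ) (Y : ModuleCat.{0} R) (n : ℕ) (ψ : K.X n ⟶ Y) :
    (∃ w, ((K.linearYonedaObj R Y).sc n).f w = (ψ : _)) ↔ ∃ m, ∃ w : K.X m ⟶ Y, K.d n m ≫ w = ψ := by
  constructor
  · rintro ⟨w, hw⟩; exact ⟨_, w, hw⟩
  · rintro ⟨m, w, hw⟩
    by_cases hm : (ComplexShape.up ℕ).prev n = m
    · subst hm; exact ⟨w, hw⟩
    · have : K.d n m = 0 := by
        apply K.shape
        intro h
        apply hm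
        exact (ComplexShape.up ℕ).prev_eq' h
      refine ⟨0, ?_⟩
      rw [map_zero, ← hw, this, Limits.zero_comp]
      rfl

/-- class of a cocycle in the Hom complex -/
noncomputable def lcl (K : ChainComplex (ModuleCat.{0} R) ℕ) (Y : ModuleCat.{0} R) (n : ℕ)
    (ψ : K.X n ⟶ Y) (h : ∀ m, K.d m n ≫ ψ = 0) : (K.linearYonedaObj R Y).homology n :=
  hcl ((K.linearYonedaObj R Y).sc n) ψ (ly_g _ Y n ψ h)

theorem lcl_surj (K : ChainComplex (ModuleCat.{0} R) ℕ) (Y : ModuleCat.{0} R) (n : ℕ)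
    (z : (K.linearYonedaObj R Y).homology n) : ∃ ψ h, lcl K Y n ψ h = z := by
  obtain ⟨x, hx, h⟩ := hcl_surj _ z
  refine ⟨x, ?_, h⟩
  intro m
  by_cases hm : (ComplexShape.up ℕ).next n = m
  · subst hm; exact hx
  · have : K.d m n = 0 := by
      apply K.shape
      intro h
      apply hm
      exact (ComplexShape.up ℕ).next_eq' h
    rw [this]
    exact Limits.zero_comp

theorem lcl_smul (K : ChainComplex (ModuleCat.{0} R) ℕ) (Y : ModuleCat.{0} R) (n : ℕ)
    (ψ : K.X n ⟶ Y) (h : ∀ m, K.d m n ≫ ψ = 0) (s : R)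
    (h' : ∀ m, K.d m n ≫ (s • ψ) = 0) :
    lcl K Y n (s • ψ) h' = s • lcl K Y n ψ h :=
  hcl_smul ((K.linearYonedaObj R Y).sc n) ψ (ly_g _ Y n ψ h) s (ly_g _ Y n _ h')

theorem lcl_zero (K : ChainComplex (ModuleCat.{0} R) ℕ) (Y : ModuleCat.{0} R) (n : ℕ)
    (ψ : K.X n ⟶ Y) (h : ∀ m, K.d m n ≫ ψ = 0) :
    lcl K Y n ψ h = 0 ↔ ∃ m, ∃ w : K.X m ⟶ Y, K.d n m ≫ w = ψ :=
  (hcl_zero _ _ _).trans (ly_f K Y n ψ)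

theorem lcl_map {K L : ChainComplex (ModuleCat.{0} R) ℕ} (φ : K ⟶ L) (Y : ModuleCat.{0} R) (n : ℕ)
    (ψ : L.X n ⟶ Y) (h : ∀ m, L.d m n ≫ ψ = 0) (h' : ∀ m, K.d m n ≫ (φ.f n ≫ ψ) = 0) :
    HomologicalComplex.homologyMap (lyMap φ Y) n (lcl L Y n ψ h) = lcl K Y n (φ.f n ≫ ψ) h' :=
  hcl_map ((HomologicalComplex.shortComplexFunctor _ _ n).map (lyMap φ Y)) ψ _ (ly_g _ Y n _ h')

/-- class in Ext of a cocycle -/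
noncomputable def ecl {X : ModuleCat.{0} R} (P : ProjectiveResolution X) (Y : ModuleCat.{0} R) (n : ℕ)
    (ψ : P.complex.X n ⟶ Y) (h : ∀ m, P.complex.d m n ≫ ψ = 0) :
    ((Ext R (ModuleCat.{0} R) n).obj (Opposite.op X)).obj Y :=
  (P.isoExt (R := R) n Y).inv (lcl P.complex Y n ψ h)

theorem ecl_surj {X : ModuleCat.{0} R} (P : ProjectiveResolution X) (Y : ModuleCat.{0} R) (n : ℕ)
    (y : ((Ext R (ModuleCat.{0} R) n).obj (Opposite.op X)).obj Y) : ∃ ψ h, ecl P Y n ψ h = y := by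
  obtain ⟨z, hz⟩ : ∃ z, (P.isoExt (R := R) n Y).inv z = y :=
    (ModuleCat.epi_iff_surjective _).1 inferInstance y
  obtain ⟨x, hx, h⟩ := lcl_surj _ _ _ z
  exact ⟨x, hx, by rw [← hz, ← h]; rfl⟩

theorem ecl_smul {X : ModuleCat.{0} R} (P : ProjectiveResolution X) (Y : ModuleCat.{0} R) (n : ℕ)
    (ψ : P.complex.X n ⟶ Y) (h : ∀ m, P.complex.d m n ≫ ψ = 0) (s : R)
    (h' : ∀ m, P.complex.d m n ≫ (s • ψ) = 0) :
    ecl P Y n (s • ψ) h' = s • ecl P Y n ψ h := by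
  unfold ecl
  rw [lcl_smul _ _ _ _ h, map_smul]

theorem ecl_zero {X : ModuleCat.{0} R} (P : ProjectiveResolution X) (Y : ModuleCat.{0} R) (n : ℕ)
    (ψ : P.complex.X n ⟶ Y) (h : ∀ m, P.complex.d m n ≫ ψ = 0) :
    ecl P Y n ψ h = 0 ↔ ∃ m, ∃ w : P.complex.X m ⟶ Y, P.complex.d n m ≫ w = ψ := by
  rw [← lcl_zero _ _ _ _ h]
  have inj : Function.Injective (P.isoExt (R := R) n Y).inv :=
    (ModuleCat.mono_iff_injective _).1 inferInstance
  unfold ecl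
  rw [map_eq_zero_iff _ inj]

theorem ecl_map {X X' : ModuleCat.{0} R} (f : X ⟶ X') (P : ProjectiveResolution X)
    (Q : ProjectiveResolution X') (φ : P.complex ⟶ Q.complex) (comm : φ.f 0 ≫ Q.π.f 0 = P.π.f 0 ≫ f)
    (n : ℕ) (Y : ModuleCat.{0} R) (ψ : Q.complex.X n ⟶ Y) (h : ∀ m, Q.complex.d m n ≫ ψ = 0)
    (h' : ∀ m, P.complex.d m n ≫ (φ.f n ≫ ψ) = 0) :
    ((Ext R (ModuleCat.{0} R) n).map f.op).app Y (ecl Q Y n ψ h) = ecl P Y n (φ.f n ≫ ψ) h' := by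
  have inj : Function.Injective (P.isoExt (R := R) n Y).hom :=
    (ModuleCat.mono_iff_injective _).1 inferInstance
  apply inj
  have h1 := congrArg (fun g => g.hom (ecl Q Y n ψ h)) (isoExt_nat f P Q φ comm n Y)
  refine Eq.trans h1 ?_
  have e1 : (P.isoExt (R := R) n Y).hom (ecl P Y n (φ.f n ≫ ψ) h') = lcl _ Y n _ h' :=
    congrArg (fun g => g.hom (lcl _ Y n _ h')) (P.isoExt (R := R) n Y).inv_hom_id
  have e2 : (Q.isoExt (R := R) n Y).hom (ecl Q Y n ψ h) = lcl _ Y n _ h :=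
    congrArg (fun g => g.hom (lcl _ Y n _ h)) (Q.isoExt (R := R) n Y).inv_hom_id
  rw [e1]
  refine (congrArg (HomologicalComplex.homologyMap (lyMap φ Y) n).hom e2).trans ?_
  exact lcl_map φ Y n ψ h h'
end
end FMod

namespace FMod
open CategoryTheory Opposite Limits localCohomology

section
variable {R : Type} [CommRing R] (p : ℕ) [Fact p.Prime] [CharP R p]

/-- Frobenius power of an ideal -/
def Ifr (I : Ideal R) (e : ℕ) : Ideal R := I.map (iterateFrobenius R p e)

theorem Ifr_le_pow (I : Ideal R) (e : ℕ) : Ifr p I e ≤ I ^ (p ^ e) := by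
  rw [Ifr, Ideal.map_le_iff_le_comap]
  intro x hx
  rw [Ideal.mem_comap, iterateFrobenius_def]
  exact Ideal.pow_mem_pow hx _

theorem Ifr_anti (I : Ideal R) {a b : ℕ} (h : a ≤ b) : Ifr p I b ≤ Ifr p I a := by
  rw [Ifr, Ideal.map_le_iff_le_comap]
  intro x hx
  rw [Ideal.mem_comap, iterateFrobenius_def]
  have h1 : x ^ p ^ a ∈ Ifr p I a := by
    rw [← iterateFrobenius_def]; exact Ideal.mem_map_of_mem _ hx
  obtain ⟨k, rfl⟩ := Nat.exists_eq_add_of_le h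
  rw [pow_add, pow_mul]
  exact Ideal.pow_mem_of_mem _ h1 _ (pow_pos (Fact.out : p.Prime).pos _)

theorem le_rad_Ifr (I : Ideal R) (e : ℕ) : I ≤ (Ifr p I e).radical := by
  intro x hx
  refine ⟨p ^ e, ?_⟩
  rw [← iterateFrobenius_def]; exact Ideal.mem_map_of_mem _ hx

/-- diagram of Frobenius powers -/
def frD (I : Ideal R) : ℕᵒᵖ ⥤ Ideal R where
  obj t := Ifr p I (unop t)
  map w := ⟨⟨Ifr_anti p I w.unop.down.down⟩⟩

/-- lift to the full subcategory -/
def frDL (I : Ideal R) : ℕᵒᵖ ⥤ SelfLERadical I :=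
  ObjectProperty.lift _ (frD p I) fun k => le_rad_Ifr p I (unop k)

instance frDL_initial [hR : IsNoetherian R R] (I : Ideal R) : Functor.Initial (frDL p I) where
  out J' := by
    apply +allowSynthFailures zigzag_isConnected
    · obtain ⟨k, hk⟩ := Ideal.exists_pow_le_of_le_radical_of_fg J'.2 (isNoetherian_def.mp hR _)
      have hk' : Ifr p I k ≤ J'.1 := (Ifr_le_pow p I k).trans
        ((Ideal.pow_le_pow_right (Nat.lt_pow_self (Fact.out : p.Prime).one_lt).le).trans hk)
      exact ⟨CostructuredArrow.mk (⟨⟨⟨hk'⟩⟩⟩ : (frDL p I).obj (op k) ⟶ J')⟩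
    · intro j1 j2
      apply Relation.ReflTransGen.single
      rcases le_total (unop j1.left) (unop j2.left) with h | h
      · right; exact ⟨CostructuredArrow.homMk (homOfLE h).op rfl⟩
      · left; exact ⟨CostructuredArrow.homMk (homOfLE h).op rfl⟩

/-- local cohomology by Frobenius powers -/
noncomputable def lcIso [IsNoetherianRing R] (I : Ideal R) (i : ℕ) :
    localCohomology I i ≅ ofDiagram.{0,0} (frD p I) i :=
  (isoSelfLERadical I i).symm ≪≫ (isoOfFinal.{0, 0, 0} (frDL p I) (selfLERadicalDiagram I) i).symm ≪≫
      HasColimit.isoOfNatIso.{0, 0, 1, 1} (Iso.refl.{1, 1} _)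

/-- the transition map on Ext -/
noncomputable def tr (I : Ideal R) (i : ℕ) (Y : ModuleCat.{0} R) (e k : ℕ) :
    ((Ext R (ModuleCat.{0} R) i).obj (op (ModuleCat.of R (R ⧸ Ifr p I e)))).obj Y ⟶
    ((Ext R (ModuleCat.{0} R) i).obj (op (ModuleCat.of R (R ⧸ Ifr p I (e + k))))).obj Y :=
  ((Ext R (ModuleCat.{0} R) i).map (ModuleCat.ofHom (Submodule.mapQ _ _ LinearMap.id 
    (Ifr_anti p I (Nat.le_add_right e k)))).op).app Y

theorem supp_colim (F : (ℕᵒᵖ)ᵒᵖ ⥤ ModuleCat.{0} R) (D : Cocone F) (hD : IsColimit D)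
    (P : PrimeSpectrum R) : P ∉ Module.support R D.pt ↔
    ∀ (e : ℕ) (x : F.obj (op (op e))), ∃ s, s ∉ P.asIdeal ∧
      ∃ k, F.map (homOfLE (Nat.le_add_right e k)).op.op (s • x) = 0 := by
  rw [Module.notMem_support_iff']
  constructor
  · intro h e x
    obtain ⟨s, hs, h1⟩ := h (D.ι.app (op (op e)) x)
    refine ⟨s, hs, ?_⟩
    have h2 : D.ι.app (op (op e)) (s • x) = D.ι.app (op (op e)) (0 : F.obj (op (op e))) := by
      rw [map_zero, map_smul]; exact h1
    obtain ⟨⟨⟨k⟩⟩, f, g, hf⟩ := Concrete.isColimit_exists_of_rep_eq _ hD _ _ h2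
    have hek : e ≤ k := f.unop.unop.down.down
    obtain ⟨k, rfl⟩ := Nat.exists_eq_add_of_le hek
    refine ⟨k, ?_⟩
    rw [map_zero] at hf
    exact hf
  · intro h m
    obtain ⟨⟨⟨e⟩⟩, x, hx⟩ := Concrete.isColimit_exists_rep _ hD m
    obtain ⟨s, hs, k, hk⟩ := h e x
    refine ⟨s, hs, ?_⟩
    have h1 := congrArg (fun g => g.hom (s • x)) (D.w (homOfLE (Nat.le_add_right e k)).op.op)
    have h2 : D.ι.app _ (F.map (homOfLE (Nat.le_add_right e k)).op.op (s • x)) = D.ι.app (op (op e)) (s • x) := h1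
    rw [hk, map_zero, map_smul, hx] at h2
    exact h2.symm

theorem notMem_supp [IsNoetherianRing R] (I : Ideal R) (i : ℕ) (Y : ModuleCat.{0} R)
    (P : PrimeSpectrum R) :
    P ∉ Module.support R ((localCohomology I i).obj Y) ↔
    ∀ (e : ℕ) (x : ((Ext R (ModuleCat.{0} R) i).obj (op (ModuleCat.of R (R ⧸ Ifr p I e)))).obj Y),
      ∃ s, s ∉ P.asIdeal ∧ ∃ k, tr p I i Y e k (s • x) = 0 := by
  have e1 : ((localCohomology I i).obj Y) ≅ (ofDiagram.{0,0} (frD p I) i).obj Y := (lcIso p I i).app Y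
  have := hasColimitDiagram.{0, 0} (frD p I) i
  have hc : IsColimit (((evaluation _ _).obj Y).mapCocone (colimit.cocone (diagram (frD p I) i))) :=
    isColimitOfPreserves _ (colimit.isColimit _)
  rw [LinearEquiv.support_eq e1.toLinearEquiv]
  exact supp_colim _ _ hc P
end
end FMod

namespace FMod
open CategoryTheory Opposite Limits

section
variable {R : Type} [CommRing R]

/-- matrices forming a free resolution of `R ⧸ I` -/
structure MR (n : ℕ → ℕ) (D : ∀ k, Matrix (Fin (n (k + 1))) (Fin (n k)) R) (I : Ideal R) : Prop where
  n0 : n 0 = 1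
  ex0 : ∀ r : Fin (n 0) → R, (∑ i, r i) ∈ I ↔ ∃ s, Matrix.vecMul s (D 0) = r
  ex : ∀ k r, Matrix.vecMul r (D k) = 0 ↔ ∃ s, Matrix.vecMul s (D (k + 1)) = r

variable {n : ℕ → ℕ} {D : ∀ k, Matrix (Fin (n (k + 1))) (Fin (n k)) R} {I : Ideal R}

theorem MR.sq (h : MR n D I) (k : ℕ) : D (k + 1) * D k = 0 := by
  apply Matrix.ext
  intro i j
  have := (h.ex k (D (k + 1) i)).2 ⟨Pi.single i 1, by rw [Matrix.single_one_vecMul]; rfl⟩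
  exact congrFun this j

/-- chain complex of a matrix resolution -/
noncomputable def MR.cplx (h : MR n D I) : ChainComplex (ModuleCat.{0} R) ℕ :=
  ChainComplex.of (fun k => ModuleCat.of R (Fin (n k) → R))
    (fun k => ModuleCat.ofHom (Matrix.vecMulLinear (D k))) (fun k => by
      rw [← ModuleCat.ofHom_comp]
      have : (D k).vecMulLinear ∘ₗ (D (k + 1)).vecMulLinear = 0 := by
        apply LinearMap.ext
        intro r
        change Matrix.vecMul (Matrix.vecMul r (D (k + 1))) (D k) = 0
        rw [Matrix.vecMul_vecMul, h.sq, Matrix.vecMul_zero]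
      rw [this]
      rfl)

theorem MR.cplx_d (h : MR n D I) (k : ℕ) :
    h.cplx.d (k + 1) k = ModuleCat.ofHom (Matrix.vecMulLinear (D k)) :=
  ChainComplex.of_d (fun k => ModuleCat.of R (Fin (n k) → R))
    (fun k => ModuleCat.ofHom (Matrix.vecMulLinear (D k))) k

theorem MR.cplx_d_apply (h : MR n D I) (k : ℕ) (r : Fin (n (k + 1)) → R) :
    (h.cplx.d (k + 1) k).hom r = Matrix.vecMul r (D k) :=
  congrArg (fun f => f.hom r) (h.cplx_d k)

/-- augmentation -/
noncomputable def aug (m : ℕ) (I : Ideal R) : ModuleCat.of R (Fin m → R) ⟶ ModuleCat.of R (R ⧸ I) :=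
  ModuleCat.ofHom ((Submodule.mkQ I).comp (∑ i, LinearMap.proj i))

theorem aug_apply (m : ℕ) (r : Fin m → R) : (aug m I).hom r = Submodule.Quotient.mk (∑ i, r i) := by
  simp [aug]

theorem aug_surj {m : ℕ} (hm : m = 1) : Function.Surjective (aug m I).hom := by
  subst hm
  intro y
  obtain ⟨x, rfl⟩ := Submodule.Quotient.mk_surjective _ y
  exact ⟨fun _ => x, by rw [aug_apply]; simp⟩

theorem MR.d_aug (h : MR n D I) : h.cplx.d 1 0 ≫ aug (n 0) I = 0 := by
  rw [h.cplx_d 0]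
  ext r
  have : (∑ i, (Matrix.vecMul r (D 0)) i) ∈ I := (h.ex0 _).2 ⟨_, rfl⟩
  exact (aug_apply _ _).trans ((Submodule.Quotient.mk_eq_zero _).2 this)

/-- augmentation from the complex -/
noncomputable def MR.aug0 (h : MR n D I) : h.cplx.X 0 ⟶ ModuleCat.of R (R ⧸ I) := aug (n 0) I

theorem MR.d_aug0 (h : MR n D I) : h.cplx.d 1 0 ≫ h.aug0 = 0 := h.d_aug

/-- augmentation as a chain map -/
noncomputable def MR.pi (h : MR n D I) :
    h.cplx ⟶ (ChainComplex.single₀ (ModuleCat.{0} R)).obj (ModuleCat.of R (R ⧸ I)) :=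
  (ChainComplex.toSingle₀Equiv _ _).symm ⟨h.aug0, h.d_aug0⟩

theorem MR.pi_f0 (h : MR n D I) : h.pi.f 0 = h.aug0 :=
  ChainComplex.toSingle₀Equiv_symm_apply_f_zero h.aug0 h.d_aug0

/-- projective resolution -/
noncomputable def MR.res (h : MR n D I) : ProjectiveResolution (ModuleCat.of R (R ⧸ I)) where
  complex := h.cplx
  projective k := by
    change Projective (ModuleCat.of R (Fin (n k) → R))
    infer_instance
  π := h.pi
  quasiIso := ⟨fun k => by
    cases k
    · rw [ChainComplex.quasiIsoAt₀_iff, ShortComplex.quasiIso_iff_of_zeros']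
      · refine ⟨?_, ?_⟩
        · rw [ShortComplex.moduleCat_exact_iff]
          intro (x : Fin (n 0) → R) hx
          have hx' : (aug (n 0) I).hom x = 0 :=
            (congrArg (fun f => f.hom x) h.pi_f0).symm.trans hx
          rw [aug_apply] at hx'
          obtain ⟨s, hs⟩ := (h.ex0 x).1 ((Submodule.Quotient.mk_eq_zero _).1 hx')
          exact ⟨s, (h.cplx_d_apply 0 s).trans hs⟩
        · change Epi (h.pi.f 0)
          rw [h.pi_f0]
          exact (ModuleCat.epi_iff_surjective _).2 (aug_surj h.n0)
      all_goals rfl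
    · rw [quasiIsoAt_iff_exactAt']
      · rename_i k
        rw [HomologicalComplex.exactAt_iff' _ (k + 1 + 1) (k + 1) k (by simp) (by simp)]
        rw [ShortComplex.moduleCat_exact_iff]
        intro (x : Fin (n (k + 1)) → R) hx
        have hx' : Matrix.vecMul x (D k) = 0 := (h.cplx_d_apply k x).symm.trans hx
        obtain ⟨s, hs⟩ := (h.ex k x).1 hx'
        exact ⟨s, (h.cplx_d_apply (k + 1) s).trans hs⟩
      · apply ChainComplex.exactAt_succ_single_obj⟩
end
end FMod

namespace FMod
open CategoryTheory Opposite Limits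

section
variable {R : Type} [CommRing R]

/-- shifted sizes -/
def nn (n : ℕ → ℕ) : ℕ → ℕ
  | 0 => 0
  | 1 => 0
  | k + 2 => n k

/-- shifted matrices -/
def DD (n : ℕ → ℕ) (D : ∀ k, Matrix (Fin (n (k + 1))) (Fin (n k)) R) :
    ∀ k, Matrix (Fin (nn n (k + 1))) (Fin (nn n k)) R
  | 0 => 0
  | 1 => 0
  | k + 2 => D k

/-- shifted square matrices -/
def TT (n : ℕ → ℕ) (T : ∀ k, Matrix (Fin (n k)) (Fin (n k)) R) :
    ∀ k, Matrix (Fin (nn n k)) (Fin (nn n k)) R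
  | 0 => 0
  | 1 => 0
  | k + 2 => T k

/-- functional attached to a vector -/
noncomputable def vf {m : ℕ} (J : Ideal R) (z : Fin m → R) :
    ModuleCat.of R (Fin m → R) ⟶ ModuleCat.of R (R ⧸ J) :=
  ModuleCat.ofHom ((Submodule.mkQ J).comp (∑ i, z i • LinearMap.proj i))

theorem vf_apply {m : ℕ} (J : Ideal R) (z : Fin m → R) (r : Fin m → R) :
    (vf J z).hom r = Submodule.Quotient.mk (r ⬝ᵥ z) := by
  simp [vf, dotProduct, mul_comm]

theorem vf_surj {m : ℕ} (J : Ideal R) (f : ModuleCat.of R (Fin m → R) ⟶ ModuleCat.of R (R ⧸ J)) :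
    ∃ z, vf J z = f := by
  choose z hz using fun i : Fin m => Submodule.Quotient.mk_surjective J (f.hom (Pi.single i 1))
  refine ⟨z, ?_⟩
  apply ModuleCat.hom_ext
  refine LinearMap.pi_ext' fun i => LinearMap.ext_ring ?_
  have h1 := vf_apply J z (Pi.single i 1)
  rw [single_one_dotProduct] at h1
  exact h1.trans (hz i)

theorem vf_smul {m : ℕ} (J : Ideal R) (z : Fin m → R) (s : R) : vf J (s • z) = s • vf J z := by
  apply ModuleCat.hom_ext
  apply LinearMap.ext
  intro r
  refine (vf_apply J _ r).trans ?_
  refine Eq.trans ?_ (congrArg (s • ·) (vf_apply J z r)).symm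
  rw [dotProduct_smul]
  rfl

theorem vf_eq {m : ℕ} (J : Ideal R) (z w : Fin m → R) : vf J z = vf J w ↔ ∀ i, z i - w i ∈ J := by
  constructor
  · intro h i
    have h1 := congrArg (fun f => f.hom (Pi.single i 1)) h
    have h2 := (vf_apply J z (Pi.single i 1)).symm.trans (h1.trans (vf_apply J w (Pi.single i 1)))
    rw [single_one_dotProduct, single_one_dotProduct] at h2
    exact (Submodule.Quotient.eq J).1 h2
  · intro h
    apply ModuleCat.hom_ext
    apply LinearMap.ext
    intro r
    refine (vf_apply J _ r).trans (Eq.trans ?_ (vf_apply J _ r).symm)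
    refine (Submodule.Quotient.eq J).2 ?_
    rw [← dotProduct_sub]
    exact sum_mem fun i _ => J.mul_mem_left _ (h i)

theorem vf_zero {m : ℕ} (J : Ideal R) (z : Fin m → R) : vf J z = 0 ↔ ∀ i, z i ∈ J := by
  have : vf J (0 : Fin m → R) = 0 := by
    have := vf_smul J (0 : Fin m → R) 0
    rwa [smul_zero, zero_smul] at this
  rw [← this, vf_eq]
  simp

theorem vf_comp {m m' : ℕ} (J : Ideal R) (z : Fin m → R) (A : Matrix (Fin m') (Fin m) R) :
    ModuleCat.ofHom (Matrix.vecMulLinear A) ≫ vf J z = vf J (A.mulVec z) := by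
  apply ModuleCat.hom_ext
  apply LinearMap.ext
  intro r
  refine (vf_apply J z _).trans (Eq.trans ?_ (vf_apply J _ r).symm)
  rw [Matrix.dotProduct_mulVec]
  rfl

theorem sub_mem_iff_of_zero (J : Ideal R) (a b : R) (hb : b = 0) : a - b ∈ J ↔ a ∈ J := by
  rw [hb, sub_zero]

variable {n : ℕ → ℕ} {D D' : ∀ k, Matrix (Fin (n (k + 1))) (Fin (n k)) R} {I I' : Ideal R}

theorem MR.cocyc (h : MR n D I) (J : Ideal R) (j : ℕ) (z : Fin (n j) → R) : 
    (∀ m, h.res.complex.d m j ≫ (vf J z : h.res.complex.X j ⟶ _) = 0) ↔ 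
    ∀ i, (D j).mulVec z i ∈ J := by
  rw [← vf_zero, ← vf_comp]
  constructor
  · intro hm
    exact (congrArg (· ≫ vf J z) (h.cplx_d j).symm).trans (hm (j + 1))
  · intro hm m
    by_cases hj : m = j + 1
    · subst hj
      exact (congrArg (· ≫ vf J z) (h.cplx_d j)).trans hm
    · rw [h.res.complex.shape]
      · exact zero_comp
      · exact fun hh => hj hh.symm

/-- class of a vector -/
noncomputable def MR.vcl (h : MR n D I) (J : Ideal R) (j : ℕ) (z : Fin (n j) → R)
    (hz : ∀ i, (D j).mulVec z i ∈ J) :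
    ((Ext R (ModuleCat.{0} R) j).obj (op (ModuleCat.of R (R ⧸ I)))).obj (ModuleCat.of R (R ⧸ J)) :=
  ecl h.res (ModuleCat.of R (R ⧸ J)) j (vf J z) ((h.cocyc J j z).2 hz)

theorem MR.vcl_surj (h : MR n D I) (J : Ideal R) (j : ℕ)
    (x : ((Ext R (ModuleCat.{0} R) j).obj (op (ModuleCat.of R (R ⧸ I)))).obj (ModuleCat.of R (R ⧸ J))) :
    ∃ z hz, h.vcl J j z hz = x := by
  obtain ⟨ψ, hψ, hx⟩ := ecl_surj h.res _ j x
  obtain ⟨z, hz⟩ := vf_surj J ψ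
  subst hz
  exact ⟨z, (h.cocyc J j z).1 hψ, hx⟩

theorem MR.vcl_smul (h : MR n D I) (J : Ideal R) (j : ℕ) (z : Fin (n j) → R)
    (hz : ∀ i, (D j).mulVec z i ∈ J) (s : R) (hz' : ∀ i, (D j).mulVec (s • z) i ∈ J) :
    h.vcl J j (s • z) hz' = s • h.vcl J j z hz := by
  refine Eq.trans ?_ (ecl_smul h.res _ j (vf J z) ((h.cocyc J j z).2 hz) s ?_)
  · unfold MR.vcl
    congr 1
    exact vf_smul J z s
  · have := (h.cocyc J j _).2 hz'
    rwa [vf_smul] at this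

theorem MR.vcl_zero (h : MR n D I) (J : Ideal R) (j : ℕ) (z : Fin (n j) → R)
    (hz : ∀ i, (D j).mulVec z i ∈ J) :
    h.vcl J j z hz = 0 ↔ ∃ y : Fin (nn n (j + 1)) → R, ∀ i, z i - (DD n D (j + 1)).mulVec y i ∈ J := by
  refine (ecl_zero h.res _ j (vf J z) ((h.cocyc J j z).2 hz)).trans ?_
  constructor
  · rintro ⟨m, w, hw⟩
    by_cases hm : m + 1 = j
    · subst hm
      obtain ⟨y, rfl⟩ := vf_surj J w
      refine ⟨y, (vf_eq J _ _).1 ?_⟩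
      refine hw.symm.trans ?_
      refine Eq.trans ?_ (vf_comp J y (D m))
      exact congrArg (· ≫ vf J y) (h.cplx_d m)
    · rw [h.res.complex.shape _ _ hm] at hw
      have h0 : vf J z = 0 := hw.symm.trans zero_comp
      rw [vf_zero] at h0
      exact ⟨0, fun i => (sub_mem_iff_of_zero J _ _ (congrFun (Matrix.mulVec_zero _) i)).2 (h0 i)⟩
  · rintro ⟨y, hy⟩
    cases j with
    | zero =>
      refine ⟨0, 0, ?_⟩
      have h0 : vf J z = 0 := by
        rw [vf_zero]
        intro i
        have e : (DD n D (0 + 1)).mulVec y = 0 := Matrix.zero_mulVec _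
        exact (sub_mem_iff_of_zero J _ _ (congrFun e i)).1 (hy i)
      exact comp_zero.trans h0.symm
    | succ m =>
      refine ⟨m, vf J y, ?_⟩
      refine Eq.trans (congrArg (· ≫ vf J y) (h.cplx_d m)) ?_
      exact (vf_comp J y (D m)).trans ((vf_eq J _ _).2 hy).symm

/-- chain map from matrices -/
noncomputable def MR.cmap (h : MR n D I) (h' : MR n D' I') (V : ∀ k, Matrix (Fin (n k)) (Fin (n k)) R)
    (hV : ∀ k, D k * V k = V (k + 1) * D' k) : h.res.complex ⟶ h'.res.complex where
  f k := (ModuleCat.ofHom (Matrix.vecMulLinear (V k)) :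
    ModuleCat.of R (Fin (n k) → R) ⟶ ModuleCat.of R (Fin (n k) → R))
  comm' i k := by
    intro (hik : k + 1 = i)
    subst hik
    refine (congrArg (_ ≫ ·) (h'.cplx_d k)).trans (Eq.trans ?_ (congrArg (· ≫ _) (h.cplx_d k)).symm)
    apply ModuleCat.hom_ext
    apply LinearMap.ext
    intro (r : Fin (n (k + 1)) → R)
    change Matrix.vecMul (Matrix.vecMul r (V (k + 1))) (D' k) = Matrix.vecMul (Matrix.vecMul r (D k)) (V k)
    rw [Matrix.vecMul_vecMul, Matrix.vecMul_vecMul, hV]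

theorem MR.vcl_map (h : MR n D I) (h' : MR n D' I') (V : ∀ k, Matrix (Fin (n k)) (Fin (n k)) R)
    (hV : ∀ k, D k * V k = V (k + 1) * D' k) (V0 : V 0 = 1) (hI : I ≤ I') (J : Ideal R) (j : ℕ)
    (z : Fin (n j) → R) (hz : ∀ i, (D' j).mulVec z i ∈ J) 
    (hz' : ∀ i, (D j).mulVec ((V j).mulVec z) i ∈ J) :
    ((Ext R (ModuleCat.{0} R) j).map (ModuleCat.ofHom (Submodule.mapQ I I' LinearMap.id hI)).op).app
      (ModuleCat.of R (R ⧸ J)) (h'.vcl J j z hz) = h.vcl J j ((V j).mulVec z) hz' := by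
  have key : (h.cmap h' V hV).f j ≫ vf J z = vf J ((V j).mulVec z) := vf_comp J z (V j)
  have h1 := (h.cocyc J j _).2 hz'
  refine (ecl_map _ h.res h'.res (h.cmap h' V hV) ?_ j _ (vf J z) _ ?_).trans ?_
  · refine (congrArg ((h.cmap h' V hV).f 0 ≫ ·) h'.pi_f0).trans
      (Eq.trans ?_ (congrArg (· ≫ _) h.pi_f0).symm)
    apply ModuleCat.hom_ext
    apply LinearMap.ext
    intro (r : Fin (n 0) → R)
    refine (aug_apply (I := I') _ (Matrix.vecMul r (V 0))).trans ?_
    rw [V0, Matrix.vecMul_one]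
    exact (congrArg (Submodule.mapQ I I' LinearMap.id hI) (aug_apply (I := I) _ r)).symm
  · intro m
    exact (congrArg (h.res.complex.d m j ≫ ·) key).trans (h1 m)
  · unfold MR.vcl
    congr 1
end
end FMod

namespace FMod

section
variable {R : Type} [CommRing R]

theorem exists_MR [IsNoetherianRing R] (I : Ideal R) : ∃ n D, MR (R := R) n D I := by
  classical
  choose m g hg using fun (a : Σ n : ℕ, Submodule R (Fin n → R)) => exists_gens a.2
  let step : (Σ n : ℕ, Submodule R (Fin n → R)) → (Σ n : ℕ, Submodule R (Fin n → R)) := fun a =>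
    ⟨m a, LinearMap.ker (Matrix.vecMulLinear (Matrix.of (g a)))⟩
  let st : ℕ → (Σ n : ℕ, Submodule R (Fin n → R)) := fun k =>
    Nat.rec ⟨1, Submodule.comap (∑ i, LinearMap.proj i : (Fin 1 → R) →ₗ[R] R) I⟩ (fun _ a => step a) k
  have hr : ∀ a (r : Fin a.1 → R), r ∈ a.2 ↔ ∃ s, Matrix.vecMul s (Matrix.of (g a)) = r := by
    intro a r
    have h1 : LinearMap.range (Matrix.vecMulLinear (Matrix.of (g a))) = a.2 := by
      rw [range_vecMulLinear]; exact hg a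
    rw [← h1]; rfl
  refine ⟨fun k => (st k).1, fun k => Matrix.of (g (st k)), rfl, ?_, ?_⟩
  · intro r
    rw [← hr (st 0)]
    change _ ↔ (∑ i, LinearMap.proj i : (Fin 1 → R) →ₗ[R] R) r ∈ I
    rw [LinearMap.sum_apply]
    rfl
  · intro k r
    rw [← hr (st (k + 1))]
    rfl

variable (p : ℕ) [Fact p.Prime] [CharP R p]

theorem fr_fr {α β : Type} (a b : ℕ) (A : Matrix α β R) : fr p a (fr p b A) = fr p (a + b) A := by
  ext i j
  simp only [fr, Matrix.map_apply, iterateFrobenius_def, ← pow_mul, pow_add]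
  rw [mul_comm]

theorem fr_zero' {α β : Type} (a : ℕ) : fr p a (0 : Matrix α β R) = 0 := by
  ext i j
  simp [fr]

theorem fr_zeroth {α β : Type} (A : Matrix α β R) : fr p 0 A = A := by
  ext i j
  simp [fr]

theorem fr_one' {α : Type} [DecidableEq α] (a : ℕ) : fr p a (1 : Matrix α α R) = 1 := by
  simp [fr, Matrix.map_one]

theorem U_one' {α : Type} [Fintype α] [DecidableEq α] (e k : ℕ) : U p (1 : Matrix α α R) e k = 1 := by
  induction k with
  | zero => rfl
  | succ k ih => rw [U, ih, fr_one', mul_one]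

theorem ex_fr1 (hrel : ∀ {ι : Type} [Fintype ι] (a x : ι → R),
      ∑ i, a i • frobenius R p (x i) = 0 → a ∈ brk p (relS R x : Set (ι → R)))
    {α β γ : Type} [Fintype α] [Fintype β] [Fintype γ] (A : Matrix β α R) (B : Matrix γ β R)
    (h : ∀ r, Matrix.vecMul r A = 0 ↔ ∃ s, Matrix.vecMul s B = r) (r : β → R) :
    Matrix.vecMul r (fr p 1 A) = 0 ↔ ∃ s, Matrix.vecMul s (fr p 1 B) = r := by
  classical
  have hBA : B * A = 0 := by
    apply Matrix.ext
    intro i j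
    have := (h (B i)).2 ⟨Pi.single i 1, by rw [Matrix.single_one_vecMul]; rfl⟩
    exact congrFun this j
  constructor
  · intro hr
    have h1 : r ∈ brk p (relS R (fun i => A i) : Set (β → R)) := by
      apply rel_rows hrel
      intro k
      have := congrFun hr k
      simpa [Matrix.vecMul, dotProduct, fr, iterateFrobenius_def, frobenius_def] using this
    obtain ⟨m, c, ρ, hρ, hv⟩ := brk_exists h1
    have h2 : ∀ k, ∃ s, Matrix.vecMul s B = ρ k := by
      intro k
      rw [← h]
      have := (mem_relS _ _).1 (hρ k)
      funext l
      have := congrFun this l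
      simpa [Matrix.vecMul, dotProduct] using this
    choose s hs using h2
    refine ⟨fun l => ∑ k, c k * s k l ^ p, ?_⟩
    funext i
    rw [hv i]
    simp only [Matrix.vecMul, dotProduct, fr, Matrix.map_apply, iterateFrobenius_def, pow_one,
      Finset.sum_mul]
    rw [Finset.sum_comm]
    refine Finset.sum_congr rfl fun k _ => ?_
    rw [← hs k, Matrix.vecMul, dotProduct, ← frobenius_def, map_sum, Finset.mul_sum]
    refine Finset.sum_congr rfl fun l _ => ?_
    rw [map_mul, frobenius_def, frobenius_def, mul_assoc]
  · rintro ⟨s, rfl⟩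
    rw [Matrix.vecMul_vecMul, ← fr_mul, hBA, fr_zero', Matrix.vecMul_zero]

theorem ex_fr (hrel : ∀ {ι : Type} [Fintype ι] (a x : ι → R),
      ∑ i, a i • frobenius R p (x i) = 0 → a ∈ brk p (relS R x : Set (ι → R)))
    {α β γ : Type} [Fintype α] [Fintype β] [Fintype γ] (A : Matrix β α R) (B : Matrix γ β R)
    (h : ∀ r, Matrix.vecMul r A = 0 ↔ ∃ s, Matrix.vecMul s B = r) (e : ℕ) (r : β → R) :
    Matrix.vecMul r (fr p e A) = 0 ↔ ∃ s, Matrix.vecMul s (fr p e B) = r := by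
  induction e generalizing r with
  | zero => rw [fr_zeroth, fr_zeroth]; exact h r
  | succ e ih =>
    have := ex_fr1 p hrel (fr p e A) (fr p e B) ih r
    rwa [fr_fr, fr_fr, add_comm] at this

theorem MR.frob (hrel : ∀ {ι : Type} [Fintype ι] (a x : ι → R),
      ∑ i, a i • frobenius R p (x i) = 0 → a ∈ brk p (relS R x : Set (ι → R)))
    {n : ℕ → ℕ} {D : ∀ k, Matrix (Fin (n (k + 1))) (Fin (n k)) R} {I : Ideal R} (h : MR n D I)
    (e : ℕ) : MR n (fun k => fr p e (D k)) (Ifr p I e) := by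
  refine ⟨h.n0, ?_, fun k r => ex_fr p hrel _ _ (h.ex k) e r⟩
  have : Unique (Fin (n 0)) := by rw [h.n0]; infer_instance
  intro r
  constructor
  · intro hr
    have hr : r default ∈ Ifr p I e := by simpa using hr
    have key : Ifr p I e ≤ Submodule.comap (LinearMap.pi (fun _ : Fin (n 0) => LinearMap.id) : R →ₗ[R] _)
        (LinearMap.range (Matrix.vecMulLinear (fr p e (D 0)))) := by
      refine Ideal.span_le.2 ?_
      rintro _ ⟨x, hx, rfl⟩
      obtain ⟨s, hs⟩ := (h.ex0 (fun _ => x)).1 (by simpa using hx)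
      refine ⟨fun i => iterateFrobenius R p e (s i), ?_⟩
      funext i
      have := congrArg (iterateFrobenius R p e) (congrFun hs i)
      rw [Matrix.vecMul, dotProduct, map_sum] at this
      simpa [Matrix.vecMul, dotProduct, fr] using this
    obtain ⟨s, hs⟩ := key hr
    refine ⟨s, ?_⟩
    rw [Matrix.vecMulLinear_apply] at hs
    rw [hs]
    funext i
    rw [Unique.eq_default i]
    rfl
  · rintro ⟨s, rfl⟩
    refine sum_mem fun i _ => ?_
    rw [Matrix.vecMul, dotProduct]
    refine sum_mem fun l _ => Ideal.mul_mem_left _ _ ?_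
    refine Ideal.mem_map_of_mem _ ?_
    have h1 := (h.ex0 (D 0 l)).2 ⟨Pi.single l 1, by rw [Matrix.single_one_vecMul]; rfl⟩
    rw [Fintype.sum_unique] at h1
    rw [Unique.eq_default i]
    exact h1

theorem MR.exists_T {n : ℕ → ℕ} {D : ∀ k, Matrix (Fin (n (k + 1))) (Fin (n k)) R} {I : Ideal R}
    (h : MR n D I) : ∃ T : ∀ k, Matrix (Fin (n k)) (Fin (n k)) R, T 0 = 1 ∧
      ∀ k, fr p 1 (D k) * T k = T (k + 1) * D k := by
  have : Unique (Fin (n 0)) := by rw [h.n0]; infer_instance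
  have row : ∀ k (A : Matrix (Fin (n (k + 1))) (Fin (n k)) R),
      (∀ i, ∃ s, Matrix.vecMul s (D k) = A i) → ∃ X : Matrix (Fin (n (k + 1))) (Fin (n (k + 1))) R, A = X * D k := by
    intro k A hA
    choose s hs using hA
    exact ⟨Matrix.of s, by ext i j; rw [← hs i]; rfl⟩
  let P : ∀ k, Matrix (Fin (n k)) (Fin (n k)) R → Prop := fun k X => ∃ Y : Matrix (Fin (n (k + 1))) (Fin (n (k + 1))) R, fr p 1 (D k) * X = Y * D k
  have h0 : P 0 1 := by
    apply row
    intro i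
    rw [← h.ex0, Fintype.sum_unique, Matrix.mul_one]
    have h1 := (h.ex0 (D 0 i)).2 ⟨Pi.single i 1, by rw [Matrix.single_one_vecMul]; rfl⟩
    rw [Fintype.sum_unique] at h1
    simp only [fr, Matrix.map_apply, iterateFrobenius_def, pow_one]
    exact Ideal.pow_mem_of_mem _ h1 _ (Fact.out : p.Prime).pos
  have hs : ∀ k X, P k X → ∃ Y : Matrix (Fin (n (k + 1))) (Fin (n (k + 1))) R, fr p 1 (D k) * X = Y * D k ∧ P (k + 1) Y := by
    rintro k X ⟨Y, hY⟩
    refine ⟨Y, hY, ?_⟩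
    apply row
    intro i
    rw [← h.ex]
    have : (fr p 1 (D (k + 1)) * Y) * D k = 0 := by
      rw [Matrix.mul_assoc, ← hY, ← Matrix.mul_assoc, ← fr_mul, h.sq, fr_zero', Matrix.zero_mul]
    exact congrFun this i
  choose! nx hnx using hs
  let T : ∀ k, {X : Matrix (Fin (n k)) (Fin (n k)) R // P k X} := fun k =>
    Nat.rec ⟨1, h0⟩ (fun k X => ⟨nx k X.1, (hnx k X.1 X.2).2⟩) k
  exact ⟨fun k => (T k).1, rfl, fun k => (hnx k (T k).1 (T k).2).1⟩

end
end FMod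

namespace FMod
open CategoryTheory Opposite Limits

section
variable {R : Type} [CommRing R]

theorem vec_mem_iff {α : Type} (f1 f2 : R) (w : α → R) :
    (∀ i, w i ∈ Ideal.span {f1, f2}) ↔ ∃ u v : α → R, w = f1 • u + f2 • v := by
  constructor
  · intro h
    choose u v huv using fun i => Ideal.mem_span_pair.1 (h i)
    refine ⟨u, v, ?_⟩
    funext i
    rw [← huv i]
    simp [mul_comm]
  · rintro ⟨u, v, rfl⟩ i
    exact Ideal.mem_span_pair.2 ⟨u i, v i, by simp [mul_comm]⟩

theorem DD_sq {n : ℕ → ℕ} {D : ∀ k, Matrix (Fin (n (k + 1))) (Fin (n k)) R} {I : Ideal R}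
    (h : MR n D I) : ∀ k, DD n D (k + 1) * DD n D k = 0
  | 0 => Matrix.mul_zero _
  | 1 => Matrix.mul_zero _
  | k + 2 => h.sq k

variable (p : ℕ) [Fact p.Prime] [CharP R p]

theorem DD_T {n : ℕ → ℕ} {D : ∀ k, Matrix (Fin (n (k + 1))) (Fin (n k)) R}
    {T : ∀ k, Matrix (Fin (n k)) (Fin (n k)) R} (hT : ∀ k, fr p 1 (D k) * T k = T (k + 1) * D k) :
    ∀ k, fr p 1 (DD n D k) * TT n T k = TT n T (k + 1) * DD n D k
  | 0 => (Matrix.mul_zero _).trans (Matrix.mul_zero _).symm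
  | 1 => (Matrix.mul_zero _).trans (Matrix.mul_zero _).symm
  | k + 2 => hT k

theorem DD_fr {n : ℕ → ℕ} (D : ∀ k, Matrix (Fin (n (k + 1))) (Fin (n k)) R) (e : ℕ) :
    ∀ k, DD n (fun k => fr p e (D k)) k = fr p e (DD n D k)
  | 0 => (fr_zero' p e).symm
  | 1 => (fr_zero' p e).symm
  | k + 2 => rfl

theorem fr_add_hV {n : ℕ → ℕ} {D : ∀ k, Matrix (Fin (n (k + 1))) (Fin (n k)) R}
    {T : ∀ k, Matrix (Fin (n k)) (Fin (n k)) R} (hT : ∀ k, fr p 1 (D k) * T k = T (k + 1) * D k)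
    (e m : ℕ) (k : ℕ) :
    fr p (e + m) (D k) * U p (T k) e m = U p (T (k + 1)) e m * fr p e (D k) :=
  U_comm p (T k) (T (k + 1)) (D k) (hT k) e m

/-- incoming differential -/
def DE (n : ℕ → ℕ) (D : ∀ k, Matrix (Fin (n (k + 1))) (Fin (n k)) R) (j : ℕ) :
    Matrix (Fin (n j)) (Fin (nn n (j + 1))) R := DD n D (j + 1)

theorem DE_fr {n : ℕ → ℕ} (D : ∀ k, Matrix (Fin (n (k + 1))) (Fin (n k)) R) (e j : ℕ) :
    DE n (fun k => fr p e (D k)) j = fr p e (DE n D j) := DD_fr p D e (j + 1)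

theorem notMem_iff [IsNoetherianRing R]
    (hrel : ∀ {ι : Type} [Fintype ι] (a x : ι → R),
      ∑ i, a i • frobenius R p (x i) = 0 → a ∈ brk p (relS R x : Set (ι → R)))
    (f1 f2 : R) {n : ℕ → ℕ} {D : ∀ k, Matrix (Fin (n (k + 1))) (Fin (n k)) R} {I : Ideal R}
    (h : MR n D I)
    {T : ∀ k, Matrix (Fin (n k)) (Fin (n k)) R} (T0 : T 0 = 1)
    (hT : ∀ k, fr p 1 (D k) * T k = T (k + 1) * D k) (j : ℕ) (P : PrimeSpectrum R) :
    P ∉ Module.support R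
      ((localCohomology I j).obj (ModuleCat.of R (R ⧸ Ideal.span {f1, f2}))) ↔
    ∀ e (z : Fin (n j) → R), (∃ u v, (fr p e (D j)).mulVec z = f1 • u + f2 • v) →
      ∃ s, s ∉ P.asIdeal ∧ ∃ k, ∃ (y : Fin (nn n (j + 1)) → R), ∃ u v : Fin (n j) → R,
        s • (U p (T j) e k).mulVec z = (fr p (e + k) (DE n D j)).mulVec y + f1 • u + f2 • v := by
  rw [notMem_supp p I j]
  have hz' : ∀ e k (z : Fin (n j) → R),
      (∀ i, (fr p e (D j)).mulVec z i ∈ Ideal.span {f1, f2}) →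
      ∀ i, (fr p (e + k) (D j)).mulVec ((U p (T j) e k).mulVec z) i ∈ Ideal.span {f1, f2} := by
    intro e k z hz i
    rw [Matrix.mulVec_mulVec, fr_add_hV p hT, ← Matrix.mulVec_mulVec, Matrix.mulVec, dotProduct]
    exact sum_mem fun l _ => Ideal.mul_mem_left _ _ (hz l)
  have hs : ∀ e (z : Fin (n j) → R) (s : R),
      (∀ i, (fr p e (D j)).mulVec z i ∈ Ideal.span {f1, f2}) →
      ∀ i, (fr p e (D j)).mulVec (s • z) i ∈ Ideal.span {f1, f2} := by
    intro e z s hz i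
    rw [Matrix.mulVec_smul]
    exact Ideal.mul_mem_left _ _ (hz i)
  have key : ∀ e k (z : Fin (n j) → R)
      (hz : ∀ i, (fr p e (D j)).mulVec z i ∈ Ideal.span {f1, f2}) (s : R),
      tr p I j (ModuleCat.of R (R ⧸ Ideal.span {f1, f2})) e k
        (s • (h.frob p hrel e).vcl (Ideal.span {f1, f2}) j z hz) = 0 ↔
      ∃ (y : Fin (nn n (j + 1)) → R), ∃ u v : Fin (n j) → R,
        s • (U p (T j) e k).mulVec z = (fr p (e + k) (DE n D j)).mulVec y + f1 • u + f2 • v := by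
    intro e k z hz s
    have h1 := (h.frob p hrel e).vcl_smul (Ideal.span {f1, f2}) j z hz s (hs e z s hz)
    have h2 := (h.frob p hrel (e + k)).vcl_map (h.frob p hrel e) (fun i => U p (T i) e k)
      (fr_add_hV p hT e k) (by rw [T0, U_one']) (Ifr_anti p I (Nat.le_add_right e k))
      (Ideal.span {f1, f2}) j (s • z) (hs e z s hz) (hz' e k _ (hs e z s hz))
    have h3 := (h.frob p hrel (e + k)).vcl_zero (Ideal.span {f1, f2}) j
      ((U p (T j) e k).mulVec (s • z)) (hz' e k _ (hs e z s hz))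
    rw [← h1]
    refine Iff.trans (Eq.congr_left h2) (h3.trans ?_)
    refine exists_congr fun y => ?_
    refine (vec_mem_iff f1 f2 ((U p (T j) e k).mulVec (s • z) - 
      (DE n (fun k' => fr p (e + k) (D k')) j).mulVec y)).trans ?_
    refine exists_congr fun u => exists_congr fun v => ?_
    rw [DE_fr, Matrix.mulVec_smul, add_assoc]
    exact sub_eq_iff_eq_add'
  constructor
  · intro H e z hz
    have hz := (vec_mem_iff f1 f2 _).2 hz
    obtain ⟨s, hsP, k, hk⟩ := H e ((h.frob p hrel e).vcl (Ideal.span {f1, f2}) j z hz)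
    exact ⟨s, hsP, k, (key e k z hz s).1 hk⟩
  · intro H e x
    obtain ⟨z, hz, rfl⟩ := (h.frob p hrel e).vcl_surj (Ideal.span {f1, f2}) j x
    obtain ⟨s, hsP, k, hk⟩ := H e z ((vec_mem_iff f1 f2 _).1 hz)
    exact ⟨s, hsP, k, (key e k z hz s).2 hk⟩

theorem main_closed [IsNoetherianRing R]
    (hrel : ∀ {ι : Type} [Fintype ι] (a x : ι → R),
      ∑ i, a i • frobenius R p (x i) = 0 → a ∈ brk p (relS R x : Set (ι → R)))
    (f1 f2 : R) (hf1 : ∀ x, f1 * x = 0 → x = 0)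
    (hf : ∀ a b, f1 * a + f2 * b = 0 → ∃ c, b = f1 * c ∧ a = -(f2 * c)) (I : Ideal R) (j : ℕ) :
    IsClosed (Module.support R
      ((localCohomology I j).obj (ModuleCat.of R (R ⧸ Ideal.span {f1, f2})))) := by
  obtain ⟨n, D, h⟩ := exists_MR I
  obtain ⟨T, T0, hT⟩ := h.exists_T p
  have := matrix_open' hrel f1 f2 hf1 hf (TT n T j) (TT n T (j + 1)) (TT n T (j + 2))
    (TT n T (j + 3)) (TT n T (j + 4)) (DD n D j) (DD n D (j + 1)) (DD n D (j + 2)) (DD n D (j + 3))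
    (DD_T p hT j) (DD_T p hT (j + 1)) (DD_T p hT (j + 2)) (DD_T p hT (j + 3))
    (DD_sq h j) (DD_sq h (j + 1)) (DD_sq h (j + 2))
  rw [← isOpen_compl_iff]
  refine Eq.mp (congrArg IsOpen ?_) this
  refine Set.ext fun P => ?_
  exact (notMem_iff p hrel f1 f2 h T0 hT j P).symm

theorem reg_hf (f1 f2 : R) (hseq : RingTheory.Sequence.IsRegular R [f1, f2]) :
    (∀ x, f1 * x = 0 → x = 0) ∧
    (∀ a b, f1 * a + f2 * b = 0 → ∃ c, b = f1 * c ∧ a = -(f2 * c)) := by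
  have h := hseq.toIsWeaklyRegular
  rw [RingTheory.Sequence.isWeaklyRegular_cons_iff, RingTheory.Sequence.isWeaklyRegular_cons_iff] at h
  obtain ⟨h1, h2, -⟩ := h
  have h1' : ∀ x, f1 * x = 0 → x = 0 := by
    intro x hx
    exact h1 (by simpa using hx)
  refine ⟨h1', fun a b hab => ?_⟩
  have hb : (Submodule.Quotient.mk b : QuotSMulTop f1 R) = 0 := by
    apply h2
    change f2 • (Submodule.Quotient.mk b : QuotSMulTop f1 R) = f2 • 0
    rw [smul_zero, ← Submodule.Quotient.mk_smul, Submodule.Quotient.mk_eq_zero]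
    rw [Submodule.mem_smul_pointwise_iff_exists]
    exact ⟨-a, trivial, by simp only [smul_eq_mul]; linear_combination -hab⟩
  rw [Submodule.Quotient.mk_eq_zero, Submodule.mem_smul_pointwise_iff_exists] at hb
  obtain ⟨c, -, hc⟩ := hb
  refine ⟨c, hc.symm, ?_⟩
  have : a + f2 * c = 0 := by
    apply h1'
    rw [← hc, smul_eq_mul] at hab
    linear_combination hab
  linear_combination this

end
end FMod

/-- **Main theorem.** Let `R` be a noetherian regular ring of prime characteristic `p` and
`f1, f2` a regular sequence in `R`. Then `Supp (H^j_I (R/(f1,f2)))` is Zariski-closed for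
every ideal `I` and every integer `j`. -/
theorem stmt_18 {R : Type} [CommRing R] (p : ℕ) [Fact p.Prime] [CharP R p]
    (hreg : IsRegularRingStmt R) (f1 f2 : R)
    (hseq : RingTheory.Sequence.IsRegular R [f1, f2]) (I : Ideal R) (j : ℕ) :
    IsClosed (Module.support R
      ((localCohomology I j).obj (ModuleCat.of R (R ⧸ Ideal.span {f1, f2})))) := by
  have hN : IsNoetherianRing R := hreg.1
  obtain ⟨hf1, hf⟩ := FMod.reg_hf f1 f2 hseq
  exact FMod.main_closed p (FMod.hrel_of (FMod.RP_reg p R (fun P _ => hreg.2 P))) f1 f2 hf1 hf I j
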